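/- arXiv:2412.02762 — 3 statements merged into one kernel-verified Lean document; each statement's English description precedes it below -/
import Mathlib

section
/- Let 0<s<1, 0<β<1, and L>0 with 2s ≤ 1-β. Then there exists a 2L-periodic function u ∈ C^{2s/(1-β)}(ℝ) and a function f ∈ C^β(ℝ) such that (-Δ)^s u(x) = f(u(x)) for every x ∈ ℝ, and such that for every ε>0 and every ρ>0, u restricted to [-ρ,ρ] does not belong to C^{2s/(1-β)+ε}([-ρ,ρ]). -/
open MeasureTheory Filter Set

/-- The normalizing constant `c_s` of the fractional Laplacian. -/
noncomputable def fracLapCoef (s : ℝ) : ℝ :=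
  s * (4 : ℝ) ^ s * Real.Gamma (1 / 2 + s) / (Real.sqrt Real.pi * Real.Gamma (1 - s))

/-- `HasFracLapAt s u x L` means the principal value defining `(-Δ)^s u (x)`
exists and equals `L`. -/
def HasFracLapAt (s : ℝ) (u : ℝ → ℝ) (x L : ℝ) : Prop :=
  (∀ ε : ℝ, 0 < ε →
    MeasureTheory.IntegrableOn (fun y : ℝ => (u x - u y) / |x - y| ^ (1 + 2 * s))
      {y : ℝ | ε < |y - x|}) ∧
  Filter.Tendsto (fun ε : ℝ =>
      fracLapCoef s * ∫ y in {y : ℝ | ε < |y - x|}, (u x - u y) / |x - y| ^ (1 + 2 * s))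
    (nhdsWithin 0 (Set.Ioi 0)) (nhds L)

/-- `MemCalpha α Ω f` : `f ∈ C^α(Ω)`, i.e. `f` is continuously differentiable with bounded
derivatives up to order `⌊α⌋` on `Ω`, and its `⌊α⌋`-th derivative is Hölder continuous of
exponent `α - ⌊α⌋` on `Ω`. -/
def MemCalpha (α : ℝ) (Ω : Set ℝ) (f : ℝ → ℝ) : Prop :=
  ContDiffOn ℝ (⌊α⌋₊ : ℕ) f Ω ∧
  (∀ k : ℕ, k ≤ ⌊α⌋₊ → ∃ C : ℝ, ∀ x ∈ Ω, |iteratedDerivWithin k f Ω x| ≤ C) ∧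
  ∃ C : NNReal, HolderOnWith C (α - (⌊α⌋₊ : ℝ)).toNNReal (iteratedDerivWithin ⌊α⌋₊ f Ω) Ω

/-!
Write `α = 2s / (1 - β)`. If around `x` and `y` the function `u` oscillates at scale `λ|x - y|` by
at most `Λ(λ^α + λ^b)` with `2s < α`, `1 ≤ b < 1 + 2s`, then splitting the defining integral gives
`|(-Δ)^s u x - (-Δ)^s u y| ≲ Λ|x - y|^(-2s)`. If moreover `Λ ≲ |x - y|^α` and `Λ ≲ |u x - u y|`,
interpolating the two bounds with exponents `1 - β` and `β` cancels the power of `|x - y|` and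
leaves `≲ |u x - u y|^β`: the fractional Laplacian of `u` is a `β`-Hölder function of `u`.

For an even `2L`-periodic `u` it suffices to check this for `0 ≤ x < y ≤ L`. When `α < 1`, the
periodization of `|x|^α` satisfies it with `Λ` comparable to `y^(α - 1) * (y - x)`. When `α = 1`
this function is not `C^1`, and `u` is instead a primitive of a sine wave whose zeros are sharpened
by the modulus `1 / (1 - s * log t)`, with `Λ` comparable to `y - x` times the value of `u'` at the
midpoint: `u` is `C^1`, but `u'` is not Hölder continuous of any positive exponent at `0`.
-/

section FracLapIntegral

/-- The integrand `(u x - u y) / |x - y| ^ (1 + 2s)` of the fractional Laplacian, as a function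
of `y`. -/
noncomputable def fracLapIntegrand (s : ℝ) (u : ℝ → ℝ) (x y : ℝ) : ℝ :=
  (u x - u y) / |x - y| ^ (1 + 2 * s)

/-- The fractional Laplacian without its normalizing constant, as a Lebesgue integral instead of a
principal value; the two agree when the integrand is integrable. -/
noncomputable def fracLapIntegral (s : ℝ) (u : ℝ → ℝ) (x : ℝ) : ℝ :=
  ∫ y, fracLapIntegrand s u x y

/-- The function on `[0, ∞)` equal to `r ^ p` for `r ≤ 1` and to `r ^ p'` for `r > 1`: the model
majorant for kernels with different behaviour at `0` and at infinity. -/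
noncomputable def splitPow (p p' r : ℝ) : ℝ :=
  if r ≤ 1 then r ^ p else r ^ p'

variable {s : ℝ} {u : ℝ → ℝ} {x : ℝ}

lemma splitPow_nonneg {p p' r : ℝ} (hr : 0 ≤ r) : 0 ≤ splitPow p p' r := by
  unfold splitPow
  split_ifs <;> positivity

lemma integrable_splitPow_abs {p p' : ℝ} (hp : -1 < p) (hp' : p' < -1) :
    Integrable (fun t : ℝ ↦ splitPow p p' |t|) := by
  have near : IntegrableOn (splitPow p p') (Ioc 0 1) :=
    ((intervalIntegrable_iff_integrableOn_Ioc_of_le zero_le_one).1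
      (intervalIntegral.intervalIntegrable_rpow' hp)).congr_fun
      (fun r hr ↦ (if_pos hr.2).symm) measurableSet_Ioc
  have far : IntegrableOn (splitPow p p') (Ioi 1) :=
    (integrableOn_Ioi_rpow_of_lt hp' one_pos).congr_fun
      (fun r hr ↦ (if_neg (not_le.2 hr)).symm) measurableSet_Ioi
  have onIoi : IntegrableOn (splitPow p p') (Ioi 0) := by
    rw [← Ioc_union_Ioi_eq_Ioi (zero_le_one' ℝ)]
    exact near.union far
  simpa using (integrable_fun_norm_addHaar (volume : Measure ℝ) (f := splitPow p p')).2
    (by simpa using onIoi)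

lemma rpow_div_rpow_le {r : ℝ} (hr : 0 ≤ r) {q : ℝ} (hq : q ≠ 0) (a : ℝ) :
    r ^ a / r ^ q ≤ r ^ (a - q) := by
  rcases hr.eq_or_lt with rfl | hr
  · rw [Real.zero_rpow hq, div_zero]
    positivity
  · rw [Real.rpow_sub hr]

lemma abs_fracLapIntegrand (s : ℝ) (u : ℝ → ℝ) (x w : ℝ) :
    |fracLapIntegrand s u x w| = |u x - u w| / |x - w| ^ (1 + 2 * s) := by
  rw [fracLapIntegrand, abs_div, abs_of_nonneg (by positivity : 0 ≤ |x - w| ^ (1 + 2 * s))]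

lemma integrable_fracLapIntegrand {a A B : ℝ} (hs : 0 < s) (ha : 2 * s < a) (hu : Measurable u)
    (hB : ∀ w, |u w| ≤ B) (hA : ∀ w, |u x - u w| ≤ A * |x - w| ^ a) :
    Integrable (fracLapIntegrand s u x) := by
  have hB₀ : 0 ≤ B := (abs_nonneg _).trans (hB 0)
  have hA₀ : 0 ≤ A := by simpa using (abs_nonneg _).trans (hA (x - 1))
  have majorant := ((integrable_splitPow_abs (p := a - (1 + 2 * s)) (p' := -(1 + 2 * s))
    (by linarith) (by linarith)).comp_sub_left x).const_mul (A + 2 * B)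
  refine majorant.mono' ?_ (Eventually.of_forall fun w ↦ ?_)
  · unfold fracLapIntegrand
    exact Measurable.aestronglyMeasurable (by fun_prop)
  rw [Real.norm_eq_abs, abs_fracLapIntegrand]
  set r := |x - w|
  have hr : 0 ≤ r := abs_nonneg _
  unfold splitPow
  split_ifs with h
  · calc |u x - u w| / r ^ (1 + 2 * s) ≤ A * r ^ a / r ^ (1 + 2 * s) := by gcongr; exact hA w
      _ = A * (r ^ a / r ^ (1 + 2 * s)) := by ring
      _ ≤ A * r ^ (a - (1 + 2 * s)) := by gcongr; exact rpow_div_rpow_le hr (by linarith) a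
      _ ≤ (A + 2 * B) * r ^ (a - (1 + 2 * s)) := by gcongr; linarith
  · have hosc : |u x - u w| ≤ A + 2 * B := by linarith [abs_sub (u x) (u w), hB x, hB w]
    rw [Real.rpow_neg hr, ← div_eq_mul_inv]
    gcongr

lemma hasFracLapAt_of_integrable (hI : Integrable (fracLapIntegrand s u x)) :
    HasFracLapAt s u x (fracLapCoef s * fracLapIntegral s u x) := by
  refine ⟨fun ε _ ↦ hI.integrableOn, Tendsto.const_mul _ ?_⟩
  change Tendsto (fun ε : ℝ ↦ ∫ y in {y : ℝ | ε < |y - x|}, fracLapIntegrand s u x y) _ _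
  have hmeas (ε : ℝ) : MeasurableSet {y : ℝ | ε < |y - x|} :=
    measurableSet_lt measurable_const (by fun_prop)
  simp_rw [← integral_indicator (hmeas _)]
  refine tendsto_integral_filter_of_dominated_convergence _
    (Eventually.of_forall fun ε ↦ hI.aestronglyMeasurable.indicator (hmeas ε))
    (Eventually.of_forall fun ε ↦ Eventually.of_forall fun y ↦ norm_indicator_le_norm_self _ y)
    hI.norm (Eventually.of_forall fun y ↦ tendsto_const_nhds.congr' ?_)
  rcases eq_or_ne y x with rfl | hy
  · exact Eventually.of_forall fun ε ↦ by simp [indicator, fracLapIntegrand]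
  · have hyx : 0 < |y - x| := abs_pos.2 (sub_ne_zero.2 hy)
    filter_upwards [mem_nhdsWithin_of_mem_nhds (Iio_mem_nhds hyx)] with ε hε
    exact (indicator_of_mem (s := {y : ℝ | ε < |y - x|}) hε _).symm

lemma periodic_fracLapIntegral {T : ℝ} (hu : Function.Periodic u T) :
    Function.Periodic (fracLapIntegral s u) T := fun x ↦ by
  unfold fracLapIntegral fracLapIntegrand
  rw [← integral_add_right_eq_self _ T]
  simp only [hu _, add_sub_add_right_eq_sub]

lemma even_fracLapIntegral (hu : Function.Even u) :
    Function.Even (fracLapIntegral s u) := fun x ↦ by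
  unfold fracLapIntegral fracLapIntegrand
  rw [← integral_neg_eq_self]
  simp only [hu _, neg_sub_neg, abs_sub_comm]

lemma fracLapIntegrand_comp_mul_left {c : ℝ} (hc : 0 < c) (x y : ℝ) :
    fracLapIntegrand s (fun t ↦ u (c * t)) x y =
      c ^ (1 + 2 * s) * fracLapIntegrand s u (c * x) (c * y) := by
  have : 0 < c ^ (1 + 2 * s) := by positivity
  rw [fracLapIntegrand, fracLapIntegrand, ← mul_sub, abs_mul, abs_of_pos hc,
    Real.mul_rpow hc.le (abs_nonneg _)]
  field_simp

lemma fracLapIntegral_comp_mul_left {c : ℝ} (hc : 0 < c) (x : ℝ) :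
    fracLapIntegral s (fun t ↦ u (c * t)) x = c ^ (2 * s) * fracLapIntegral s u (c * x) := by
  simp only [fracLapIntegral, fracLapIntegrand_comp_mul_left hc, integral_const_mul,
    Measure.integral_comp_mul_left, abs_of_pos (inv_pos.2 hc), smul_eq_mul, Real.rpow_add hc,
    Real.rpow_one]
  field_simp

lemma integrable_fracLapIntegrand_comp_mul_left {c : ℝ} (hc : 0 < c)
    (hI : Integrable (fracLapIntegrand s u (c * x))) :
    Integrable (fracLapIntegrand s (fun t ↦ u (c * t)) x) := by
  simp only [funext (fracLapIntegrand_comp_mul_left hc x)]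
  exact (hI.comp_mul_left' hc.ne').const_mul _

end FracLapIntegral

section Increments

variable {s a b Λ : ℝ} {u : ℝ → ℝ} {x y : ℝ}

lemma abs_rpow_neg_sub_rpow_neg_le {q m : ℝ} (hq : 0 ≤ q) (hm : 0 < m) {t r : ℝ} (ht : m ≤ t)
    (hr : m ≤ r) : |t ^ (-q) - r ^ (-q)| ≤ q * m ^ (-q - 1) * |t - r| := by
  refine (convex_Ici m).norm_image_sub_le_of_norm_hasDerivWithin_le
    (f := fun t : ℝ ↦ t ^ (-q)) (f' := fun t ↦ -q * t ^ (-q - 1))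
    (fun t ht ↦ (Real.hasDerivAt_rpow_const (.inl (hm.trans_le ht).ne')).hasDerivWithinAt)
    (fun t ht ↦ ?_) hr ht
  have ht₀ : 0 < t := hm.trans_le ht
  rw [norm_mul, norm_neg, Real.norm_of_nonneg hq, Real.norm_of_nonneg (by positivity)]
  exact mul_le_mul_of_nonneg_left (Real.rpow_le_rpow_of_nonpos hm ht (by linarith)) hq

lemma half_rpow_neg {t : ℝ} (ht : 0 ≤ t) (p : ℝ) : (t / 2) ^ (-p) = 2 ^ p * t ^ (-p) := by
  rw [Real.div_rpow ht zero_le_two, Real.rpow_neg zero_le_two, div_inv_eq_mul, mul_comm]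

lemma abs_rpow_neg_sub_rpow_neg_le_of_half_le {q t r : ℝ} (hq : 0 ≤ q) (ht : 0 < t)
    (htr : t / 2 ≤ r) :
    |t ^ (-q) - r ^ (-q)| ≤ q * 2 ^ (q + 1) * t ^ (-(q + 1)) * |t - r| := by
  have := abs_rpow_neg_sub_rpow_neg_le hq (half_pos ht) (half_le_self ht.le) htr
  rwa [← neg_add', half_rpow_neg ht.le, ← mul_assoc] at this

lemma abs_fracLapIntegrand_le_splitPow (hs : 0 < s) (hab : a ≤ b) (hΛ : 0 ≤ Λ) {w : ℝ}
    (hx : |u x - u w| ≤ Λ * (|x - w| ^ a + |x - w| ^ b)) (hr : |x - w| ≤ 3) :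
    |fracLapIntegrand s u x w| ≤
      6 * Λ * splitPow (a - (1 + 2 * s)) (b - (1 + 2 * s) - 1) |x - w| := by
  set q := 1 + 2 * s with hq
  have hq₀ : q ≠ 0 := by positivity
  rw [abs_fracLapIntegrand, ← hq]
  rcases (abs_nonneg (x - w)).eq_or_lt with hr₀ | hr₀
  · rw [← hr₀, Real.zero_rpow hq₀, div_zero]
    exact mul_nonneg (by positivity) (splitPow_nonneg le_rfl)
  set r := |x - w|
  suffices r ^ a + r ^ b ≤ 6 * splitPow (a - q) (b - q - 1) r * r ^ q by
    rw [div_le_iff₀ (by positivity)]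
    calc |u x - u w| ≤ Λ * (r ^ a + r ^ b) := hx
      _ ≤ Λ * (6 * splitPow (a - q) (b - q - 1) r * r ^ q) := by gcongr
      _ = _ := by ring
  unfold splitPow
  split_ifs with h
  · have hba : r ^ b ≤ r ^ a := Real.rpow_le_rpow_of_exponent_ge hr₀ h hab
    rw [mul_assoc, ← Real.rpow_add hr₀, sub_add_cancel]
    linarith [Real.rpow_nonneg hr₀.le a]
  · have hab' : r ^ a ≤ r ^ b := Real.rpow_le_rpow_of_exponent_le (not_le.1 h).le hab
    have hb : r ^ b = r ^ (b - q - 1) * r ^ q * r := by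
      rw [← Real.rpow_add hr₀, ← Real.rpow_add_one hr₀.ne']
      ring_nf
    have : r ^ (b - q - 1) * r ^ q * r ≤ r ^ (b - q - 1) * r ^ q * 3 := by gcongr
    linarith

lemma abs_fracLapIntegrand_sub_le_of_two_lt (hs : 0 < s) (hab : a ≤ b) (hb : 1 ≤ b) (hΛ : 0 ≤ Λ)
    (hxy : |x - y| = 1) (hx : ∀ w, |u x - u w| ≤ Λ * (|x - w| ^ a + |x - w| ^ b)) {w : ℝ}
    (hw : 2 < |x - w|) :
    |fracLapIntegrand s u x w - fracLapIntegrand s u y w| ≤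
      2 ^ (1 + 2 * s + 1) * (2 * (1 + 2 * s) + 1) * Λ * |x - w| ^ (b - (1 + 2 * s) - 1) := by
  set q := 1 + 2 * s with hq
  have hXY : |(|x - w| - |y - w|)| ≤ 1 := by
    simpa [hxy] using abs_abs_sub_abs_le_abs_sub (x - w) (y - w)
  have hq₀ : 0 < q := by positivity
  have huxy : |u x - u y| ≤ 2 * Λ := by simpa [hxy, mul_comm, one_add_one_eq_two] using hx y
  have huxw := hx w
  rw [fracLapIntegrand, fracLapIntegrand, ← hq]
  set X := |x - w|
  set Y := |y - w|
  have hX : 0 < X := by linarith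
  have hY : X / 2 ≤ Y := by linarith [(abs_le.1 hXY).2]
  have hXb : X ^ a + X ^ b ≤ 2 * X ^ b := by
    linarith [Real.rpow_le_rpow_of_exponent_le (by linarith : 1 ≤ X) hab]
  have kernel_diff : |X ^ (-q) - Y ^ (-q)| ≤ q * 2 ^ (q + 1) * X ^ (-(q + 1)) :=
    (abs_rpow_neg_sub_rpow_neg_le_of_half_le hq₀.le hX hY).trans
      (mul_le_of_le_one_right (by positivity) hXY)
  have kernel : Y ^ (-q) ≤ 2 ^ q * X ^ (b - q - 1) := by
    calc Y ^ (-q) ≤ (X / 2) ^ (-q) :=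
          Real.rpow_le_rpow_of_nonpos (half_pos hX) hY (by linarith)
      _ = 2 ^ q * X ^ (-q) := half_rpow_neg hX.le q
      _ ≤ 2 ^ q * X ^ (b - q - 1) := by gcongr <;> linarith
  calc |(u x - u w) / X ^ q - (u y - u w) / Y ^ q|
      = |(u x - u w) * (X ^ (-q) - Y ^ (-q)) + (u x - u y) * Y ^ (-q)| := by
        rw [Real.rpow_neg hX.le, Real.rpow_neg (abs_nonneg _)]
        congr 1
        ring
    _ ≤ |u x - u w| * |X ^ (-q) - Y ^ (-q)| + |u x - u y| * Y ^ (-q) := by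
        refine (abs_add_le _ _).trans_eq ?_
        rw [abs_mul, abs_mul, abs_of_nonneg (by positivity : 0 ≤ Y ^ (-q))]
    _ ≤ Λ * (2 * X ^ b) * (q * 2 ^ (q + 1) * X ^ (-(q + 1))) +
          2 * Λ * (2 ^ q * X ^ (b - q - 1)) := by
        gcongr
        exact huxw.trans (by gcongr)
    _ = 2 ^ (q + 1) * (2 * q + 1) * Λ * X ^ (b - q - 1) := by
        rw [sub_sub, sub_eq_add_neg b, Real.rpow_add hX, Real.rpow_add_one two_ne_zero]
        ring

lemma abs_fracLapIntegrand_sub_le (hs : 0 < s) (hab : a ≤ b) (hb : 1 ≤ b) (hΛ : 0 ≤ Λ)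
    (hxy : |x - y| = 1) (hx : ∀ w, |u x - u w| ≤ Λ * (|x - w| ^ a + |x - w| ^ b))
    (hy : ∀ w, |u y - u w| ≤ Λ * (|y - w| ^ a + |y - w| ^ b)) (w : ℝ) :
    |fracLapIntegrand s u x w - fracLapIntegrand s u y w| ≤
      (6 + 2 ^ (1 + 2 * s + 1) * (2 * (1 + 2 * s) + 1)) * Λ *
        (splitPow (a - (1 + 2 * s)) (b - (1 + 2 * s) - 1) |x - w| +
          splitPow (a - (1 + 2 * s)) (b - (1 + 2 * s) - 1) |y - w|) := by
  set φ := splitPow (a - (1 + 2 * s)) (b - (1 + 2 * s) - 1) with hφ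
  have hφX : 0 ≤ φ |x - w| := splitPow_nonneg (abs_nonneg _)
  have hφY : 0 ≤ φ |y - w| := splitPow_nonneg (abs_nonneg _)
  have hC : (0 : ℝ) ≤ 2 ^ (1 + 2 * s + 1) * (2 * (1 + 2 * s) + 1) := by positivity
  set C : ℝ := 2 ^ (1 + 2 * s + 1) * (2 * (1 + 2 * s) + 1)
  rcases le_or_gt |x - w| 2 with near | far
  · have hYw : |y - w| ≤ 3 := by
      linarith [abs_sub_le y x w, abs_sub_comm x y]
    calc _ ≤ |fracLapIntegrand s u x w| + |fracLapIntegrand s u y w| := abs_sub _ _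
      _ ≤ 6 * Λ * φ |x - w| + 6 * Λ * φ |y - w| :=
          add_le_add (abs_fracLapIntegrand_le_splitPow hs hab hΛ (hx w) (by linarith))
            (abs_fracLapIntegrand_le_splitPow hs hab hΛ (hy w) hYw)
      _ = 6 * Λ * (φ |x - w| + φ |y - w|) := by ring
      _ ≤ (6 + C) * Λ * (φ |x - w| + φ |y - w|) := by gcongr; linarith
  · calc _ ≤ C * Λ * φ |x - w| := by
          rw [hφ, splitPow, if_neg (by linarith)]
          exact abs_fracLapIntegrand_sub_le_of_two_lt hs hab hb hΛ hxy hx far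
      _ ≤ (6 + C) * Λ * (φ |x - w| + φ |y - w|) := by gcongr <;> linarith

lemma exists_abs_fracLapIntegral_sub_le_of_dist_eq_one (hs : 0 < s) (ha : 2 * s < a) (hab : a ≤ b)
    (hb : 1 ≤ b) (hb' : b < 1 + 2 * s) :
    ∃ C, 0 ≤ C ∧ ∀ (u : ℝ → ℝ) (x y Λ : ℝ), |x - y| = 1 → 0 ≤ Λ →
      Integrable (fracLapIntegrand s u x) → Integrable (fracLapIntegrand s u y) →
      (∀ w, |u x - u w| ≤ Λ * (|x - w| ^ a + |x - w| ^ b)) →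
      (∀ w, |u y - u w| ≤ Λ * (|y - w| ^ a + |y - w| ^ b)) →
      |fracLapIntegral s u x - fracLapIntegral s u y| ≤ C * Λ := by
  set φ : ℝ → ℝ := fun t ↦ splitPow (a - (1 + 2 * s)) (b - (1 + 2 * s) - 1) |t|
  have hφI : Integrable φ := integrable_splitPow_abs (by linarith) (by linarith)
  have hφ₀ : 0 ≤ ∫ t, φ t := integral_nonneg fun t ↦ splitPow_nonneg (abs_nonneg t)
  set C₀ : ℝ := 6 + 2 ^ (1 + 2 * s + 1) * (2 * (1 + 2 * s) + 1)
  have hC₀ : 0 ≤ C₀ := by positivity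
  refine ⟨C₀ * (2 * ∫ t, φ t), mul_nonneg hC₀ (mul_nonneg zero_le_two hφ₀),
    fun u x y Λ hxy hΛ hIx hIy hx hy ↦ ?_⟩
  have hmaj (z : ℝ) : Integrable (fun w ↦ φ (z - w)) := hφI.comp_sub_left z
  calc |fracLapIntegral s u x - fracLapIntegral s u y|
      = ‖∫ w, (fracLapIntegrand s u x w - fracLapIntegrand s u y w)‖ := by
        rw [integral_sub hIx hIy, Real.norm_eq_abs, fracLapIntegral, fracLapIntegral]
    _ ≤ ∫ w, C₀ * Λ * (φ (x - w) + φ (y - w)) :=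
        norm_integral_le_of_norm_le (((hmaj x).add (hmaj y)).const_mul _)
          (Eventually.of_forall (abs_fracLapIntegrand_sub_le hs hab hb hΛ hxy hx hy))
    _ = C₀ * (2 * ∫ t, φ t) * Λ := by
        rw [integral_const_mul, integral_add (hmaj x) (hmaj y),
          integral_sub_left_eq_self φ volume, integral_sub_left_eq_self φ volume]
        ring

lemma exists_abs_fracLapIntegral_sub_le (hs : 0 < s) (ha : 2 * s < a) (hab : a ≤ b) (hb : 1 ≤ b)
    (hb' : b < 1 + 2 * s) :
    ∃ C, 0 ≤ C ∧ ∀ (u : ℝ → ℝ) (x y Λ : ℝ), x ≠ y → 0 ≤ Λ →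
      Integrable (fracLapIntegrand s u x) → Integrable (fracLapIntegrand s u y) →
      (∀ w, |u x - u w| ≤ Λ * ((|x - w| / |x - y|) ^ a + (|x - w| / |x - y|) ^ b)) →
      (∀ w, |u y - u w| ≤ Λ * ((|y - w| / |x - y|) ^ a + (|y - w| / |x - y|) ^ b)) →
      |fracLapIntegral s u x - fracLapIntegral s u y| ≤ C * Λ * |x - y| ^ (-(2 * s)) := by
  obtain ⟨C, hC, hunit⟩ := exists_abs_fracLapIntegral_sub_le_of_dist_eq_one hs ha hab hb hb'
  refine ⟨C, hC, fun u x y Λ hxy hΛ hIx hIy hx hy ↦ ?_⟩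
  have hd : 0 < |x - y| := abs_pos.2 (sub_ne_zero.2 hxy)
  set d := |x - y| with hd_def
  have hscale (z : ℝ) : d * (z / d) = z := by field_simp
  have hdist (z w : ℝ) : |z - d * w| / d = |z / d - w| := by
    rw [← abs_of_pos hd, ← abs_div, abs_of_pos hd, sub_div, mul_div_cancel_left₀ _ hd.ne']
  have := hunit (fun t ↦ u (d * t)) (x / d) (y / d) Λ
    (by rw [← sub_div, abs_div, abs_of_pos hd, ← hd_def, div_self hd.ne']) hΛ
    (integrable_fracLapIntegrand_comp_mul_left hd (by rwa [hscale]))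
    (integrable_fracLapIntegrand_comp_mul_left hd (by rwa [hscale]))
    (fun w ↦ by simpa only [hscale, hdist] using hx (d * w))
    (fun w ↦ by simpa only [hscale, hdist] using hy (d * w))
  rw [fracLapIntegral_comp_mul_left hd, fracLapIntegral_comp_mul_left hd, hscale, hscale,
    ← mul_sub, abs_mul, abs_of_pos (by positivity)] at this
  rwa [Real.rpow_neg hd.le, ← div_eq_mul_inv, le_div_iff₀' (by positivity)]

end Increments

section MemCalpha

open Asymptotics Topology

variable {γ : ℝ} {Ω : Set ℝ} {u v : ℝ → ℝ}

lemma holderWith_of_abs_sub_le {C : ℝ} (hγ : 0 ≤ γ)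
    (hC : ∀ x y, |u x - u y| ≤ C * |x - y| ^ γ) : HolderWith C.toNNReal γ.toNNReal u := fun x y ↦ by
  have hC₀ : 0 ≤ C := by simpa using (abs_nonneg _).trans (hC 1 0)
  rw [edist_dist, edist_dist, Real.dist_eq, Real.dist_eq, Real.coe_toNNReal _ hγ,
    ENNReal.ofReal_rpow_of_nonneg (abs_nonneg _) hγ, ← ENNReal.ofReal.eq_1,
    ← ENNReal.ofReal_mul hC₀]
  exact ENNReal.ofReal_le_ofReal (hC x y)

lemma memCalpha_univ_of_abs_sub_le {B C : ℝ} (hγ : 0 < γ) (hγ' : γ < 1) (hB : ∀ x, |u x| ≤ B)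
    (hC : ∀ x y, |u x - u y| ≤ C * |x - y| ^ γ) : MemCalpha γ univ u := by
  have hH := holderWith_of_abs_sub_le hγ.le hC
  rw [MemCalpha, Nat.floor_eq_zero.2 hγ']
  refine ⟨?_, fun k hk ↦ ⟨B, fun x _ ↦ ?_⟩, C.toNNReal, ?_⟩
  · simpa using hH.continuous (by simpa using hγ)
  · simpa [Nat.le_zero.1 hk] using hB x
  · simpa using hH.holderOnWith univ

lemma memCalpha_one_univ_of_hasDerivAt {B B' : ℝ} (huv : ∀ x, HasDerivAt u (v x) x)
    (hv : Continuous v) (hB : ∀ x, |u x| ≤ B) (hB' : ∀ x, |v x| ≤ B') : MemCalpha 1 univ u := by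
  have hderiv : deriv u = v := funext fun x ↦ (huv x).deriv
  rw [MemCalpha, Nat.floor_one]
  refine ⟨?_, fun k hk ↦ ?_, (2 * B').toNNReal, ?_⟩
  · rw [contDiffOn_univ, Nat.cast_one, contDiff_one_iff_deriv, hderiv]
    exact ⟨fun x ↦ (huv x).differentiableAt, hv⟩
  · rcases Nat.le_one_iff_eq_zero_or_eq_one.1 hk with rfl | rfl
    · exact ⟨B, fun x _ ↦ by simpa using hB x⟩
    · exact ⟨B', fun x _ ↦ by simpa [iteratedDerivWithin_one, hderiv] using hB' x⟩
  · intro x _ y _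
    have hosc : |v x - v y| ≤ 2 * B' := by linarith [abs_sub (v x) (v y), hB' x, hB' y]
    rw [Nat.cast_one, sub_self, Real.toNNReal_zero, NNReal.coe_zero, ENNReal.rpow_zero, mul_one,
      iteratedDerivWithin_one, derivWithin_univ, hderiv, edist_dist, Real.dist_eq]
    exact ENNReal.ofReal_le_ofReal hosc

lemma MemCalpha.isBigO_sub (hγ : 0 ≤ γ) (hu : MemCalpha γ Ω u) {x₀ : ℝ} (hx₀ : x₀ ∈ Ω) :
    (fun x ↦ u x - u x₀) =O[𝓝[Ω] x₀] fun x ↦ |x - x₀| ^ min γ 1 := by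
  obtain ⟨hdiff, -, C, hC⟩ := hu
  rcases lt_or_ge γ 1 with h | h
  · rw [Nat.floor_eq_zero.2 h, iteratedDerivWithin_zero, Nat.cast_zero, sub_zero] at hC
    rw [min_eq_left h.le]
    refine .of_bound C (eventually_mem_nhdsWithin.mono fun x hx ↦ ?_)
    simpa [Real.dist_eq, Real.coe_toNNReal _ hγ, abs_of_nonneg (Real.rpow_nonneg (abs_nonneg _) γ)]
      using hC.dist_le hx hx₀
  · have hne : ((⌊γ⌋₊ : ℕ) : WithTop ℕ∞) ≠ 0 := by
      exact_mod_cast (Nat.floor_pos.2 h).ne'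
    simpa [min_eq_right h] using ((hdiff.differentiableOn hne) x₀ hx₀).isBigO_sub.norm_right

lemma MemCalpha.derivWithin (hΩ : UniqueDiffOn ℝ Ω) (hγ : 0 ≤ γ) (hu : MemCalpha (1 + γ) Ω u) :
    MemCalpha γ Ω (derivWithin u Ω) := by
  have hfloor : ⌊1 + γ⌋₊ = ⌊γ⌋₊ + 1 := by rw [add_comm, Nat.floor_add_one hγ]
  obtain ⟨hdiff, hbdd, C, hC⟩ := hu
  rw [hfloor] at hdiff hbdd hC
  refine ⟨hdiff.derivWithin hΩ (by norm_cast), fun k hk ↦ ?_, C, ?_⟩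
  · simpa only [iteratedDerivWithin_succ'] using hbdd (k + 1) (by omega)
  · rw [← iteratedDerivWithin_succ']
    convert hC using 2
    push_cast
    ring

lemma not_memCalpha_of_isLittleO {ρ : ℝ} (hρ : 0 < ρ) (hγ : 0 ≤ γ)
    (h : (fun x ↦ x ^ min γ 1) =o[𝓝[>] 0] fun x ↦ u x - u 0) :
    ¬ MemCalpha γ (Icc (-ρ) ρ) u := fun hu ↦ by
  have h₀ : (0 : ℝ) ∈ Icc (-ρ) ρ := ⟨by linarith, hρ.le⟩
  have hle : 𝓝[>] (0 : ℝ) ≤ 𝓝[Icc (-ρ) ρ] 0 :=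
    nhdsWithin_le_iff.2 (mem_of_superset (Ioc_mem_nhdsGT hρ) fun x hx ↦ ⟨by linarith [hx.1], hx.2⟩)
  have hpos : ∀ᶠ x : ℝ in 𝓝[>] 0, 0 < x := eventually_mem_nhdsWithin
  have hO : (fun x ↦ u x - u 0) =O[𝓝[>] 0] fun x ↦ x ^ min γ 1 :=
    ((hu.isBigO_sub hγ h₀).mono hle).congr' .rfl
      (hpos.mono fun x hx ↦ by simp only [sub_zero, abs_of_pos hx])
  exact isLittleO_irrefl (hpos.mono fun x hx ↦ (Real.rpow_pos_of_pos hx _).ne').frequently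
    (h.trans_isBigO hO)

lemma exists_memCalpha_comp_eq {ι : Type*} {u g : ι → ℝ} {β m M C : ℝ} (hβ : 0 < β) (hβ' : β < 1)
    (hmM : m ≤ M) (hu : range u = Icc m M) (hC : 0 ≤ C)
    (hg : ∀ x y, |g x - g y| ≤ C * |u x - u y| ^ β) :
    ∃ f : ℝ → ℝ, MemCalpha β univ f ∧ ∀ x, f (u x) = g x := by
  have hsurj (t : ℝ) : ∃ x, u x = projIcc m M hmM t :=
    mem_range.1 (hu.symm ▸ (projIcc m M hmM t).2 : _ ∈ range u)
  choose σ hσ using hsurj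
  have hfactor {x y : ι} (h : u x = u y) : g x = g y := by
    simpa [h, Real.zero_rpow hβ.ne', sub_eq_zero] using hg x y
  have hmem (x : ι) : u x ∈ Icc m M := hu ▸ mem_range_self x
  refine ⟨fun t ↦ g (σ t), memCalpha_univ_of_abs_sub_le (B := |g (σ 0)| + C * (M - m) ^ β) (C := C)
    hβ hβ' (fun t ↦ ?_) (fun t t' ↦ ?_), fun x ↦ hfactor ?_⟩
  · have hosc : |u (σ t) - u (σ 0)| ≤ M - m :=
      abs_sub_le_of_le_of_le (hmem _).1 (hmem _).2 (hmem _).1 (hmem _).2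
    have : C * |u (σ t) - u (σ 0)| ^ β ≤ C * (M - m) ^ β := by gcongr
    linarith [abs_sub_abs_le_abs_sub (g (σ t)) (g (σ 0)), hg (σ t) (σ 0)]
  · refine (hg _ _).trans ?_
    rw [hσ, hσ]
    gcongr C * ?_ ^ β
    exact abs_projIcc_sub_projIcc hmM
  · rw [hσ, projIcc_of_mem hmM (hmem x)]

end MemCalpha

section Criterion

variable {s α β b : ℝ}

/-- `u` oscillates around `x` and `y` by no more than it varies from `x` to `y`: at both points and
at every scale `λ |x - y|` the oscillation is at most `Λ (λ ^ α + λ ^ b)` for one amplitude `Λ`,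
which is `O(|x - y| ^ α)` and `O(|u x - u y|)` with constant `K`. This is the property that turns
`(-Δ)^s u` into a Hölder function of `u`. -/
def BalancedOscillation (α b K : ℝ) (u : ℝ → ℝ) (x y : ℝ) : Prop :=
  ∃ Λ, 0 ≤ Λ ∧ Λ ≤ K * |x - y| ^ α ∧ Λ ≤ K * |u x - u y| ∧
    (∀ w, |u x - u w| ≤ Λ * ((|x - w| / |x - y|) ^ α + (|x - w| / |x - y|) ^ b)) ∧
    ∀ w, |u y - u w| ≤ Λ * ((|y - w| / |x - y|) ^ α + (|y - w| / |x - y|) ^ b)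

lemma BalancedOscillation.const_nonneg {K x y : ℝ} {u : ℝ → ℝ}
    (h : BalancedOscillation α b K u x y) (hxy : x ≠ y) : 0 ≤ K := by
  obtain ⟨Λ, hΛ, hΛd, -⟩ := h
  exact nonneg_of_mul_nonneg_left (hΛ.trans hΛd)
    (Real.rpow_pos_of_pos (abs_pos.2 (sub_ne_zero.2 hxy)) _)

lemma exists_abs_fracLapIntegral_sub_le_of_balancedOscillation (hs : 0 < s) (hβ : 0 ≤ β)
    (hβ' : β ≤ 1) (hαs : α * (1 - β) = 2 * s) (hα : 2 * s < α) (hαb : α ≤ b) (hb : 1 ≤ b)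
    (hb' : b < 1 + 2 * s) :
    ∃ C, 0 ≤ C ∧ ∀ (u : ℝ → ℝ) (x y K : ℝ), x ≠ y → BalancedOscillation α b K u x y →
      Integrable (fracLapIntegrand s u x) → Integrable (fracLapIntegrand s u y) →
      |fracLapIntegral s u x - fracLapIntegral s u y| ≤ C * K * |u x - u y| ^ β := by
  obtain ⟨C, hC, hincr⟩ := exists_abs_fracLapIntegral_sub_le hs hα hαb hb hb'
  refine ⟨C, hC, fun u x y K hxy hbal hIx hIy ↦ ?_⟩
  have hK : 0 ≤ K := hbal.const_nonneg hxy
  obtain ⟨Λ, hΛ, hΛd, hΛu, hx, hy⟩ := hbal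
  have hd : 0 < |x - y| := abs_pos.2 (sub_ne_zero.2 hxy)
  have interpolation : Λ ≤ (K * |u x - u y|) ^ β * (K * |x - y| ^ α) ^ (1 - β) := by
    calc Λ = Λ ^ β * Λ ^ (1 - β) := by
          rw [← Real.rpow_add_of_nonneg hΛ hβ (by linarith), add_sub_cancel, Real.rpow_one]
      _ ≤ _ := by gcongr
  calc |fracLapIntegral s u x - fracLapIntegral s u y|
      ≤ C * Λ * |x - y| ^ (-(2 * s)) := hincr u x y Λ hxy hΛ hIx hIy hx hy
    _ ≤ C * ((K * |u x - u y|) ^ β * (K * |x - y| ^ α) ^ (1 - β)) * |x - y| ^ (-(2 * s)) := by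
        gcongr
    _ = C * (K ^ β * K ^ (1 - β)) * |u x - u y| ^ β *
          (|x - y| ^ (α * (1 - β)) * |x - y| ^ (-(2 * s))) := by
        rw [Real.mul_rpow hK (abs_nonneg _), Real.mul_rpow hK (by positivity),
          ← Real.rpow_mul hd.le]
        ring
    _ = C * K * |u x - u y| ^ β := by
        rw [← Real.rpow_add_of_nonneg hK hβ (by linarith), add_sub_cancel, Real.rpow_one,
          ← Real.rpow_add hd, hαs, add_neg_cancel, Real.rpow_zero, mul_one]

lemma apply_norm_coe_addCircle {E : Type*} {f : ℝ → E} {p : ℝ} (he : Function.Even f)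
    (hp : Function.Periodic f p) (x : ℝ) : f ‖(x : AddCircle p)‖ = f x := by
  rw [AddCircle.norm_eq]
  rcases abs_choice (x - round (p⁻¹ * x) * p) with h | h <;> rw [h]
  · exact hp.sub_int_mul_eq _
  · rw [he, hp.sub_int_mul_eq]

lemma norm_coe_addCircle_two_mul_mem_Icc {L : ℝ} (hL : 0 < L) (x : ℝ) :
    ‖(x : AddCircle (2 * L))‖ ∈ Icc 0 L := by
  have := AddCircle.norm_le_half_period (2 * L) (by positivity) (x := (x : AddCircle (2 * L)))
  rw [abs_of_pos (by positivity), mul_div_cancel_left₀ _ two_ne_zero] at this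
  exact ⟨norm_nonneg _, this⟩

lemma abs_sub_le_rpow_of_even_of_periodic {C L : ℝ} {u g : ℝ → ℝ} (hβ : β ≠ 0) (hL : 0 < L)
    (hu : Function.Even u) (hu' : Function.Periodic u (2 * L))
    (hg : Function.Even g) (hg' : Function.Periodic g (2 * L))
    (h : ∀ x y, 0 ≤ x → x < y → y ≤ L → |g x - g y| ≤ C * |u x - u y| ^ β) (x y : ℝ) :
    |g x - g y| ≤ C * |u x - u y| ^ β := by
  rw [← apply_norm_coe_addCircle hu hu' x, ← apply_norm_coe_addCircle hu hu' y,
    ← apply_norm_coe_addCircle hg hg' x, ← apply_norm_coe_addCircle hg hg' y]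
  have hx := norm_coe_addCircle_two_mul_mem_Icc hL x
  have hy := norm_coe_addCircle_two_mul_mem_Icc hL y
  rcases lt_trichotomy ‖(x : AddCircle (2 * L))‖ ‖(y : AddCircle (2 * L))‖ with hlt | heq | hlt
  · exact h _ _ hx.1 hlt hy.2
  · simp [heq, Real.zero_rpow hβ]
  · simpa only [abs_sub_comm] using h _ _ hy.1 hlt hx.2

lemma exists_range_eq_Icc {u : ℝ → ℝ} {T : ℝ} (hT : T ≠ 0) (hper : Function.Periodic u T)
    (hu : Continuous u) : ∃ m M, m ≤ M ∧ range u = Icc m M := by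
  have hrange := eq_Icc_of_connected_compact (isConnected_range hu)
    (hper.compact_of_continuous hT hu)
  exact ⟨_, _, nonempty_Icc.1 (hrange ▸ range_nonempty u), hrange⟩

theorem exists_memCalpha_hasFracLapAt {A K L : ℝ} {u : ℝ → ℝ} (hs : 0 < s) (hβ : 0 < β)
    (hβ' : β < 1) (hαs : α * (1 - β) = 2 * s) (hαb : α ≤ b) (hb : 1 ≤ b) (hb' : b < 1 + 2 * s)
    (hL : 0 < L) (heven : Function.Even u) (hper : Function.Periodic u (2 * L))
    (hA : ∀ x y, |u x - u y| ≤ A * |x - y| ^ α)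
    (hbal : ∀ x y, 0 ≤ x → x < y → y ≤ L → BalancedOscillation α b K u x y) :
    ∃ f : ℝ → ℝ, MemCalpha β univ f ∧ ∀ x, HasFracLapAt s u x (f (u x)) := by
  have hα : 0 < α := pos_of_mul_pos_left (by rw [hαs]; positivity) (by linarith)
  have h2s : 2 * s < α := by nlinarith
  have hu : Continuous u := (holderWith_of_abs_sub_le hα.le hA).continuous (by simpa using hα)
  obtain ⟨m, M, hmM, hrange⟩ := exists_range_eq_Icc (by positivity : 2 * L ≠ 0) hper hu
  have hmem (x : ℝ) : u x ∈ Icc m M := hrange ▸ mem_range_self x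
  have hI (x : ℝ) : Integrable (fracLapIntegrand s u x) :=
    integrable_fracLapIntegrand hs h2s hu.measurable
      (fun w ↦ abs_le_max_abs_abs (hmem w).1 (hmem w).2) (hA x)
  obtain ⟨C, hC, hbound⟩ := exists_abs_fracLapIntegral_sub_le_of_balancedOscillation hs hβ.le
    hβ'.le hαs h2s hαb hb hb'
  have hK : 0 ≤ K := (hbal 0 L le_rfl hL le_rfl).const_nonneg hL.ne
  have hG := abs_sub_le_rpow_of_even_of_periodic hβ.ne' hL heven hper (even_fracLapIntegral heven)
    (periodic_fracLapIntegral hper)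
    fun x y hx hxy hy ↦ hbound u x y K hxy.ne (hbal x y hx hxy hy) (hI x) (hI y)
  obtain ⟨f, hf, hfu⟩ := exists_memCalpha_comp_eq
    (g := fun x ↦ fracLapCoef s * fracLapIntegral s u x) (C := |fracLapCoef s| * (C * K))
    hβ hβ' hmM hrange (by positivity) (fun x y ↦ by
      rw [← mul_sub, abs_mul, mul_assoc]
      gcongr
      exact hG x y)
  exact ⟨f, hf, fun x ↦ hfu x ▸ hasFracLapAt_of_integrable (hI x)⟩

end Criterion

section CircleNormRpow

open Asymptotics Topology

variable {α L : ℝ}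

lemma rpow_sub_rpow_eq_mul {t r : ℝ} (ht : 0 < t) (hr : 0 ≤ r) (α : ℝ) :
    t ^ α - r ^ α = t ^ α * (1 - (r / t) ^ α) := by
  rw [Real.div_rpow hr ht.le, mul_sub, mul_one, mul_div_cancel₀ _ (by positivity)]

lemma abs_rpow_sub_rpow_le_mul (hα : 0 ≤ α) (hα' : α ≤ 1) {t r : ℝ} (ht : 0 < t) (hr : 0 ≤ r) :
    |t ^ α - r ^ α| ≤ t ^ (α - 1) * |t - r| := by
  have hratio : |1 - (r / t) ^ α| ≤ |1 - r / t| := by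
    have hρ : 0 ≤ r / t := by positivity
    rcases le_total (r / t) 1 with h | h
    · rw [abs_of_nonneg (sub_nonneg.2 h), abs_of_nonneg (sub_nonneg.2 (Real.rpow_le_one hρ h hα))]
      linarith [Real.self_le_rpow_of_le_one hρ h hα']
    · rw [abs_of_nonpos (sub_nonpos.2 h), abs_of_nonpos (sub_nonpos.2 (Real.one_le_rpow h hα))]
      linarith [Real.rpow_le_self_of_one_le h hα']
  calc |t ^ α - r ^ α| = t ^ α * |1 - (r / t) ^ α| := by
        rw [rpow_sub_rpow_eq_mul ht hr, abs_mul, abs_of_pos (by positivity)]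
    _ ≤ t ^ α * |1 - r / t| := by gcongr
    _ = t ^ (α - 1) * |t - r| := by
        rw [one_sub_div ht.ne', abs_div, abs_of_pos ht, Real.rpow_sub_one ht.ne']
        ring

lemma mul_rpow_sub_one_mul_sub_le (hα : 0 ≤ α) (hα' : α ≤ 1) {t r : ℝ} (ht : 0 < t) (hr : 0 ≤ r) :
    α * t ^ (α - 1) * (t - r) ≤ t ^ α - r ^ α := by
  have bernoulli := rpow_one_add_le_one_add_mul_self
    (by linarith [div_nonneg hr ht.le] : -1 ≤ r / t - 1) hα hα'
  rw [add_sub_cancel] at bernoulli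
  calc α * t ^ (α - 1) * (t - r) = t ^ α * (1 - (1 + α * (r / t - 1))) := by
        rw [Real.rpow_sub_one ht.ne']
        field_simp
        ring
    _ ≤ t ^ α * (1 - (r / t) ^ α) := by gcongr
    _ = t ^ α - r ^ α := (rpow_sub_rpow_eq_mul ht hr α).symm

lemma abs_rpow_sub_rpow_le_abs_sub_rpow (hα : 0 ≤ α) (hα' : α ≤ 1) {t r : ℝ} (ht : 0 ≤ t)
    (hr : 0 ≤ r) : |t ^ α - r ^ α| ≤ |t - r| ^ α := by
  wlog h : r ≤ t generalizing t r
  · rw [abs_sub_comm, abs_sub_comm t]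
    exact this hr ht (le_of_not_ge h)
  have := Real.rpow_add_le_add_rpow (sub_nonneg.2 h) hr hα hα'
  rw [sub_add_cancel] at this
  rw [abs_of_nonneg (sub_nonneg.2 h), abs_of_nonneg (sub_nonneg.2 (by gcongr))]
  linarith

lemma rpow_sub_one_le_two_mul (hα : 0 ≤ α) (hα' : α ≤ 1) {t r : ℝ} (hr : 0 < r)
    (hrt : r ≤ 2 * t) : t ^ (α - 1) ≤ 2 * r ^ (α - 1) := by
  calc t ^ (α - 1) ≤ (r / 2) ^ (α - 1) :=
        Real.rpow_le_rpow_of_nonpos (by positivity) (by linarith) (by linarith)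
    _ = 2 ^ (1 - α) * r ^ (α - 1) := by
        rw [← neg_sub 1 α, half_rpow_neg hr.le]
    _ ≤ 2 ^ (1 : ℝ) * r ^ (α - 1) := by
        gcongr
        · exact one_le_two
        · linarith
    _ = 2 * r ^ (α - 1) := by rw [Real.rpow_one]

/-- The even `2L`-periodic function equal to `|x| ^ α` on `[-L, L]`: the solution `u` of the
fractional equation when `2s < 1 - β`, with `α = 2s / (1 - β)`. -/
noncomputable def circleNormRpow (α L x : ℝ) : ℝ := ‖(x : AddCircle (2 * L))‖ ^ α

lemma even_circleNormRpow : Function.Even (circleNormRpow α L) := fun x ↦ by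
  simp [circleNormRpow]

lemma periodic_circleNormRpow : Function.Periodic (circleNormRpow α L) (2 * L) := fun x ↦ by
  simp [circleNormRpow]

lemma norm_coe_addCircle_two_mul_of_mem_Icc (hL : 0 < L) {x : ℝ} (hx : x ∈ Icc 0 L) :
    ‖(x : AddCircle (2 * L))‖ = x := by
  rw [(AddCircle.norm_coe_eq_abs_iff (2 * L) (by positivity)).2, abs_of_nonneg hx.1]
  rw [abs_of_nonneg hx.1, abs_of_pos (by positivity)]
  linarith [hx.2]

lemma circleNormRpow_of_mem_Icc (hL : 0 < L) {x : ℝ} (hx : x ∈ Icc 0 L) :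
    circleNormRpow α L x = x ^ α := by
  rw [circleNormRpow, norm_coe_addCircle_two_mul_of_mem_Icc hL hx]

lemma abs_norm_coe_addCircle_sub_le (p x y : ℝ) :
    |‖(x : AddCircle p)‖ - ‖(y : AddCircle p)‖| ≤ |x - y| :=
  (abs_norm_sub_norm_le _ _).trans (QuotientAddGroup.norm_mk_le_norm (m := x - y))

lemma abs_circleNormRpow_sub_le_rpow (hα : 0 ≤ α) (hα' : α ≤ 1) (L x y : ℝ) :
    |circleNormRpow α L x - circleNormRpow α L y| ≤ |x - y| ^ α :=
  (abs_rpow_sub_rpow_le_abs_sub_rpow hα hα' (norm_nonneg _) (norm_nonneg _)).trans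
    (Real.rpow_le_rpow (abs_nonneg _) (abs_norm_coe_addCircle_sub_le _ x y) hα)

lemma abs_circleNormRpow_le (hα : 0 ≤ α) (hL : 0 < L) (x : ℝ) : |circleNormRpow α L x| ≤ L ^ α := by
  have hx := norm_coe_addCircle_two_mul_mem_Icc hL x
  rw [circleNormRpow, abs_of_nonneg (Real.rpow_nonneg hx.1 α)]
  exact Real.rpow_le_rpow hx.1 hx.2 hα

lemma abs_circleNormRpow_sub_le_mul (hα : 0 ≤ α) (hα' : α ≤ 1) (hL : 0 < L) {x : ℝ} (hx : 0 < x)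
    (hxL : x ≤ L) (w : ℝ) :
    |circleNormRpow α L x - circleNormRpow α L w| ≤ x ^ (α - 1) * |x - w| := by
  have hnorm := norm_coe_addCircle_two_mul_of_mem_Icc hL ⟨hx.le, hxL⟩
  rw [circleNormRpow_of_mem_Icc hL ⟨hx.le, hxL⟩]
  calc _ ≤ x ^ (α - 1) * |x - ‖(w : AddCircle (2 * L))‖| :=
        abs_rpow_sub_rpow_le_mul hα hα' hx (norm_nonneg _)
    _ ≤ x ^ (α - 1) * |x - w| := by
        gcongr x ^ (α - 1) * ?_
        simpa only [hnorm] using abs_norm_coe_addCircle_sub_le (2 * L) x w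

lemma abs_circleNormRpow_sub_le_left (hα : 0 ≤ α) (hα' : α ≤ 1) {x y : ℝ} (hx : 0 ≤ x)
    (hxy : x < y) (hy : y ≤ L) (w : ℝ) :
    |circleNormRpow α L x - circleNormRpow α L w| ≤
      2 * y ^ (α - 1) * (y - x) * ((|x - w| / (y - x)) ^ α + |x - w| / (y - x)) := by
  have hy₀ : 0 < y := hx.trans_lt hxy
  obtain ⟨d, hd⟩ : ∃ d, d = y - x := ⟨_, rfl⟩
  have hd₀ : 0 < d := by linarith
  rw [← hd]
  rcases le_or_gt d x with hdx | hdx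
  · calc _ ≤ x ^ (α - 1) * |x - w| :=
          abs_circleNormRpow_sub_le_mul hα hα' (hy₀.trans_le hy) (hd₀.trans_le hdx) (by linarith) w
      _ ≤ 2 * y ^ (α - 1) * |x - w| := by
          gcongr
          exact rpow_sub_one_le_two_mul hα hα' hy₀ (by linarith)
      _ = 2 * y ^ (α - 1) * d * (|x - w| / d) := by field_simp
      _ ≤ _ := by gcongr; exact le_add_of_nonneg_left (by positivity)
  · calc _ ≤ |x - w| ^ α := abs_circleNormRpow_sub_le_rpow hα hα' L x w
      _ = d ^ (α - 1) * d * (|x - w| / d) ^ α := by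
          rw [Real.rpow_sub_one hd₀.ne', Real.div_rpow (abs_nonneg _) hd₀.le]
          field_simp
      _ ≤ 2 * y ^ (α - 1) * d * (|x - w| / d) ^ α := by
          gcongr
          exact rpow_sub_one_le_two_mul hα hα' hy₀ (by linarith)
      _ ≤ _ := by gcongr; exact le_add_of_nonneg_right (by positivity)

lemma balancedOscillation_circleNormRpow (hα : 0 < α) (hα' : α ≤ 1) {x y : ℝ} (hx : 0 ≤ x)
    (hxy : x < y) (hy : y ≤ L) :
    BalancedOscillation α 1 (2 / α) (circleNormRpow α L) x y := by
  have hy₀ : 0 < y := hx.trans_lt hxy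
  have hL : 0 < L := hy₀.trans_le hy
  have hd : 0 < y - x := by linarith
  rw [BalancedOscillation, abs_sub_comm x y, abs_of_pos hd]
  simp only [Real.rpow_one]
  refine ⟨2 * y ^ (α - 1) * (y - x), by positivity, ?_, ?_,
    abs_circleNormRpow_sub_le_left hα.le hα' hx hxy hy, fun w ↦ ?_⟩
  · calc 2 * y ^ (α - 1) * (y - x) ≤ 2 * (y - x) ^ (α - 1) * (y - x) := by
          gcongr 2 * ?_ * (y - x)
          exact Real.rpow_le_rpow_of_nonpos hd (by linarith) (by linarith)
      _ = 2 * (y - x) ^ α := by rw [Real.rpow_sub_one hd.ne']; field_simp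
      _ ≤ 2 / α * (y - x) ^ α := by gcongr; exact le_div_self zero_le_two hα hα'
  · rw [circleNormRpow_of_mem_Icc hL ⟨hx, hxy.le.trans hy⟩,
      circleNormRpow_of_mem_Icc hL ⟨hy₀.le, hy⟩, abs_sub_comm]
    calc 2 * y ^ (α - 1) * (y - x) = 2 / α * (α * y ^ (α - 1) * (y - x)) := by field_simp
      _ ≤ 2 / α * |y ^ α - x ^ α| := by
          gcongr
          exact (mul_rpow_sub_one_mul_sub_le hα.le hα' hy₀ hx).trans (le_abs_self _)
  · calc _ ≤ y ^ (α - 1) * |y - w| := abs_circleNormRpow_sub_le_mul hα.le hα' hL hy₀ hy w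
      _ = 1 * y ^ (α - 1) * (y - x) * (|y - w| / (y - x)) := by field_simp
      _ ≤ _ := by
          gcongr
          · exact one_le_two
          · exact le_add_of_nonneg_left (by positivity)

theorem exists_memCalpha_hasFracLapAt_circleNormRpow {s β : ℝ} (hs : 0 < s) (hβ : 0 < β)
    (hβ' : β < 1) (hαs : α * (1 - β) = 2 * s) (hα : α ≤ 1) (hL : 0 < L) :
    ∃ f : ℝ → ℝ, MemCalpha β univ f ∧
      ∀ x, HasFracLapAt s (circleNormRpow α L) x (f (circleNormRpow α L x)) := by
  have hα₀ : 0 < α := pos_of_mul_pos_left (by rw [hαs]; positivity) (by linarith)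
  exact exists_memCalpha_hasFracLapAt hs hβ hβ' hαs hα le_rfl (by linarith) hL
    even_circleNormRpow periodic_circleNormRpow (A := 1)
    (by simpa only [one_mul] using abs_circleNormRpow_sub_le_rpow hα₀.le hα L)
    fun _ _ ↦ balancedOscillation_circleNormRpow hα₀ hα

lemma memCalpha_circleNormRpow (hα : 0 < α) (hα' : α < 1) (hL : 0 < L) :
    MemCalpha α univ (circleNormRpow α L) :=
  memCalpha_univ_of_abs_sub_le (C := 1) hα hα' (abs_circleNormRpow_le hα.le hL)
    (by simpa only [one_mul] using abs_circleNormRpow_sub_le_rpow hα.le hα'.le L)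

lemma isLittleO_rpow_rpow_nhdsGT_zero {p q : ℝ} (hpq : p < q) :
    (fun x : ℝ ↦ x ^ q) =o[𝓝[>] 0] fun x ↦ x ^ p := by
  have hpos : ∀ᶠ x : ℝ in 𝓝[>] 0, 0 < x := eventually_mem_nhdsWithin
  rw [isLittleO_iff_tendsto' (hpos.mono fun x hx h ↦ absurd h (Real.rpow_pos_of_pos hx p).ne')]
  have hlim : Tendsto (fun x : ℝ ↦ x ^ (q - p)) (𝓝[>] 0) (𝓝 0) := by
    simpa [Real.zero_rpow (sub_pos.2 hpq).ne'] using
      (Real.continuousAt_rpow_const 0 (q - p) (.inr (sub_pos.2 hpq).le)).mono_left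
        nhdsWithin_le_nhds
  exact hlim.congr' (hpos.mono fun x hx ↦ Real.rpow_sub hx q p)

lemma not_memCalpha_circleNormRpow {ε ρ : ℝ} (hα : 0 < α) (hα' : α < 1) (hL : 0 < L) (hε : 0 < ε)
    (hρ : 0 < ρ) : ¬ MemCalpha (α + ε) (Icc (-ρ) ρ) (circleNormRpow α L) := by
  refine not_memCalpha_of_isLittleO hρ (by positivity) <| (isLittleO_rpow_rpow_nhdsGT_zero
    (lt_min (lt_add_of_pos_right α hε) hα')).congr' .rfl ?_
  filter_upwards [Ioc_mem_nhdsGT hL] with x hx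
  rw [circleNormRpow_of_mem_Icc hL ⟨hx.1.le, hx.2⟩, circleNormRpow_of_mem_Icc hL ⟨le_rfl, hL.le⟩,
    Real.zero_rpow hα.ne', sub_zero]

end CircleNormRpow

section SignedLogModulus

open Asymptotics Topology

variable {s t : ℝ}

/-- The odd function `sign t / (1 - s * log |t|)` on `[-1, 1]`, a modulus of continuity at `0`
weaker than every power of `t`. At `t = 0` it takes the junk value `0 / 0 = 0`, which is the
intended one. -/
noncomputable def signedLogModulus (s t : ℝ) : ℝ := t / (|t| * (1 - s * Real.log t))

lemma signedLogModulus_neg (s t : ℝ) : signedLogModulus s (-t) = -signedLogModulus s t := by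
  simp [signedLogModulus, neg_div]

lemma signedLogModulus_of_pos (s : ℝ) (ht : 0 < t) :
    signedLogModulus s t = (1 - s * Real.log t)⁻¹ := by
  rw [signedLogModulus, abs_of_pos ht, div_mul_eq_div_div, div_self ht.ne', one_div]

lemma one_le_one_sub_mul_log (hs : 0 ≤ s) (ht : |t| ≤ 1) : 1 ≤ 1 - s * Real.log t := by
  have := mul_nonpos_of_nonneg_of_nonpos hs (Real.log_nonpos (abs_nonneg t) ht)
  rw [Real.log_abs] at this
  linarith

lemma abs_signedLogModulus (hs : 0 ≤ s) (ht : |t| ≤ 1) (ht₀ : t ≠ 0) :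
    |signedLogModulus s t| = (1 - s * Real.log t)⁻¹ := by
  rw [signedLogModulus, abs_div, abs_mul, abs_abs, div_mul_eq_div_div,
    div_self (abs_ne_zero.2 ht₀), one_div,
    abs_of_pos (zero_lt_one.trans_le (one_le_one_sub_mul_log hs ht))]

lemma abs_signedLogModulus_le_one (hs : 0 ≤ s) (ht : |t| ≤ 1) : |signedLogModulus s t| ≤ 1 := by
  rcases eq_or_ne t 0 with rfl | ht₀
  · simp [signedLogModulus]
  · rw [abs_signedLogModulus hs ht ht₀]
    exact inv_le_one_of_one_le₀ (one_le_one_sub_mul_log hs ht)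

lemma signedLogModulus_nonneg (hs : 0 ≤ s) (ht : t ∈ Icc 0 1) : 0 ≤ signedLogModulus s t :=
  div_nonneg ht.1 (mul_nonneg (abs_nonneg t)
    (zero_le_one.trans (one_le_one_sub_mul_log hs (abs_le.2 ⟨by linarith [ht.1], ht.2⟩))))

lemma abs_signedLogModulus_le_rpow_mul {a b lam : ℝ} (hs : 0 ≤ s) (ha : |a| ≤ 1)
    (hb : b ∈ Icc 0 1) (hlam : 1 ≤ lam) (hab : |a| ≤ lam * b) :
    |signedLogModulus s a| ≤ lam ^ s * signedLogModulus s b := by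
  have hlam₀ : 0 < lam := by linarith
  rcases eq_or_ne a 0 with rfl | ha₀
  · rw [signedLogModulus, zero_div, abs_zero]
    exact mul_nonneg (by positivity) (signedLogModulus_nonneg hs hb)
  have hb₀ : 0 < b := pos_of_mul_pos_right ((abs_pos.2 ha₀).trans_le hab) hlam₀.le
  have hA := one_le_one_sub_mul_log hs ha
  have hB := one_le_one_sub_mul_log hs (abs_le.2 ⟨by linarith, hb.2⟩)
  have hlog : Real.log a ≤ Real.log lam + Real.log b := by
    rw [← Real.log_abs a, ← Real.log_mul hlam₀.ne' hb₀.ne']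
    exact Real.log_le_log (abs_pos.2 ha₀) hab
  have hpow : 1 + s * Real.log lam ≤ lam ^ s := by
    rw [Real.rpow_def_of_pos hlam₀, mul_comm (Real.log lam), add_comm]
    exact Real.add_one_le_exp _
  have hdenom : 1 - s * Real.log b ≤ lam ^ s * (1 - s * Real.log a) := by
    have := mul_nonneg hs (Real.log_nonneg hlam)
    nlinarith
  rw [abs_signedLogModulus hs ha ha₀, signedLogModulus_of_pos s hb₀, ← div_eq_mul_inv,
    le_div_iff₀ (by linarith), inv_mul_le_iff₀ (by linarith), mul_comm (1 - s * Real.log a)]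
  exact hdenom

lemma continuousAt_signedLogModulus_zero (hs : 0 < s) : ContinuousAt (signedLogModulus s) 0 := by
  have hnhds : ∀ᶠ t : ℝ in 𝓝[≠] 0, |t| ≤ 1 :=
    nhdsWithin_le_nhds ((continuous_abs.tendsto' 0 0 abs_zero).eventually_le_const one_pos)
  have hdenom : Tendsto (fun t ↦ 1 - s * Real.log t) (𝓝[≠] 0) atTop :=
    tendsto_atTop_add_const_left _ 1
      (tendsto_neg_atBot_atTop.comp (Real.tendsto_log_nhdsNE_zero.const_mul_atBot hs))
  have hzero : signedLogModulus s 0 = 0 := by simp [signedLogModulus]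
  rw [continuousAt_iff_punctured_nhds, hzero, tendsto_zero_iff_abs_tendsto_zero]
  refine hdenom.inv_tendsto_atTop.congr' ?_
  filter_upwards [hnhds, self_mem_nhdsWithin] with t ht ht₀
  exact (abs_signedLogModulus hs.le ht ht₀).symm

lemma continuousOn_signedLogModulus (hs : 0 < s) :
    ContinuousOn (signedLogModulus s) (Icc (-1) 1) := by
  intro t ht
  refine ContinuousAt.continuousWithinAt ?_
  rcases eq_or_ne t 0 with rfl | ht₀
  · exact continuousAt_signedLogModulus_zero hs
  · have hdenom : |t| * (1 - s * Real.log t) ≠ 0 :=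
      mul_ne_zero (abs_ne_zero.2 ht₀)
        (zero_lt_one.trans_le (one_le_one_sub_mul_log hs.le (abs_le.2 ht))).ne'
    unfold signedLogModulus
    fun_prop (disch := assumption)

lemma isLittleO_rpow_signedLogModulus {θ : ℝ} (hs : 0 ≤ s) (hθ : 0 < θ) :
    (fun t ↦ t ^ θ) =o[𝓝[>] 0] signedLogModulus s := by
  have hIoc : ∀ᶠ t : ℝ in 𝓝[>] 0, t ∈ Ioc 0 1 := Ioc_mem_nhdsGT one_pos
  have hdenom : (fun t ↦ 1 - s * Real.log t) =o[𝓝[>] 0] fun t ↦ t ^ (-θ) := by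
    have hone : (fun _ ↦ (1 : ℝ)) =o[𝓝[>] (0 : ℝ)] fun t ↦ t ^ (-θ) := by
      simpa only [Real.rpow_zero] using isLittleO_rpow_rpow_nhdsGT_zero (neg_lt_zero.2 hθ)
    exact hone.sub (isLittleO_log_rpow_nhdsGT_zero (neg_lt_zero.2 hθ) |>.const_mul_left s)
  refine (hdenom.inv_rev (hIoc.mono fun t ht h ↦ absurd h ?_)).congr' ?_ ?_
  · exact (zero_lt_one.trans_le
      (one_le_one_sub_mul_log hs (abs_le.2 ⟨by linarith [ht.1], ht.2⟩))).ne'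
  · exact hIoc.mono fun t ht ↦ by simp only [Real.rpow_neg ht.1.le, inv_inv]
  · exact hIoc.mono fun t ht ↦ (signedLogModulus_of_pos s ht.1).symm

end SignedLogModulus

section SinePrimitive

open Asymptotics Topology
open scoped Real
open Real (sin cos)

variable {s L : ℝ}

lemma sub_le_pi_mul_sin_midpoint {a b : ℝ} (ha : 0 ≤ a) (hab : a ≤ b) (hb : b ≤ π) :
    b - a ≤ π * sin ((a + b) / 2) := by
  have hjordan : 2 / π * ((b - a) / 2) ≤ sin ((b - a) / 2) :=
    Real.mul_le_sin (by linarith) (by linarith)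
  have hsin : sin ((b - a) / 2) ≤ sin ((a + b) / 2) := by
    have hdiff := Real.sin_sub_sin ((a + b) / 2) ((b - a) / 2)
    have ha' : 0 ≤ sin (a / 2) := Real.sin_nonneg_of_nonneg_of_le_pi (by linarith) (by linarith)
    have hb' : 0 ≤ cos (b / 2) := Real.cos_nonneg_of_mem_Icc ⟨by linarith, by linarith⟩
    rw [show ((a + b) / 2 - (b - a) / 2) / 2 = a / 2 by ring,
      show ((a + b) / 2 + (b - a) / 2) / 2 = b / 2 by ring] at hdiff
    linarith [mul_nonneg ha' hb']
  calc b - a = π * (2 / π * ((b - a) / 2)) := by field_simp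
    _ ≤ π * sin ((a + b) / 2) := by gcongr; exact hjordan.trans hsin

lemma sin_le_two_mul_sin_midpoint {a b : ℝ} (ha : a ∈ Icc 0 π) (hb : b ∈ Icc 0 π) :
    sin a ≤ 2 * sin ((a + b) / 2) := by
  have hmid : 0 ≤ sin ((a + b) / 2) :=
    Real.sin_nonneg_of_nonneg_of_le_pi (by linarith [ha.1, hb.1]) (by linarith [ha.2, hb.2])
  calc sin a ≤ sin a + sin b := by linarith [Real.sin_nonneg_of_mem_Icc hb]
    _ = 2 * sin ((a + b) / 2) * cos ((a - b) / 2) := Real.sin_add_sin a b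
    _ ≤ 2 * sin ((a + b) / 2) := mul_le_of_le_one_right (by positivity) (Real.cos_le_one _)

lemma abs_sin_le_mul_sin_midpoint {a b t r : ℝ} (ha : 0 ≤ a) (hab : a < b) (hb : b ≤ π)
    (hr : 0 ≤ r) (ht : |t - (a + b) / 2| ≤ (b - a) / 2 + r) :
    |sin t| ≤ 4 * (1 + r / (b - a)) * sin ((a + b) / 2) := by
  have hd : 0 < b - a := by linarith
  have hmid : 0 ≤ sin ((a + b) / 2) :=
    Real.sin_nonneg_of_nonneg_of_le_pi (by linarith) (by linarith)
  have hd' : b - a ≤ 4 * sin ((a + b) / 2) :=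
    (sub_le_pi_mul_sin_midpoint ha hab.le hb).trans (by gcongr; exact Real.pi_le_four)
  calc |sin t| ≤ |sin t - sin ((a + b) / 2)| + sin ((a + b) / 2) := by
        linarith [abs_sub_abs_le_abs_sub (sin t) (sin ((a + b) / 2)), abs_of_nonneg hmid]
    _ ≤ ((b - a) / 2 + r) + sin ((a + b) / 2) := by
        gcongr
        exact (Real.abs_sin_sub_sin_le _ _).trans ht
    _ = (b - a) * (1 / 2 + r / (b - a)) + sin ((a + b) / 2) := by field_simp
    _ ≤ 4 * sin ((a + b) / 2) * (1 / 2 + r / (b - a)) + 2 * sin ((a + b) / 2) := by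
        gcongr
        linarith
    _ = 4 * (1 + r / (b - a)) * sin ((a + b) / 2) := by ring

lemma even_intervalIntegral_of_odd {v : ℝ → ℝ} (hv : Function.Odd v) :
    Function.Even fun x ↦ ∫ t in 0..x, v t := fun x ↦ by
  have := intervalIntegral.integral_comp_neg v (a := 0) (b := x)
  simp only [hv _, intervalIntegral.integral_neg, neg_zero] at this
  change ∫ t in 0..-x, v t = _
  rw [intervalIntegral.integral_symm, ← this, neg_neg]

lemma periodic_intervalIntegral_of_odd {v : ℝ → ℝ} {T : ℝ} (hv : Continuous v)
    (hodd : Function.Odd v) (hper : Function.Periodic v T) :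
    Function.Periodic (fun x ↦ ∫ t in 0..x, v t) T := fun x ↦ by
  have hint (a b : ℝ) : IntervalIntegrable v volume a b := hv.intervalIntegrable a b
  have hzero : ∫ t in -(T / 2)..T / 2, v t = 0 := by
    have heven := even_intervalIntegral_of_odd hodd (T / 2)
    dsimp only at heven
    rw [← intervalIntegral.integral_interval_sub_left (hint 0 (T / 2)) (hint 0 (-(T / 2))), heven,
      sub_self]
  have hshift := hper.intervalIntegral_add_eq x (-(T / 2))
  rw [neg_add_eq_sub, sub_half, hzero] at hshift
  dsimp only
  rw [← intervalIntegral.integral_add_adjacent_intervals (hint 0 x) (hint x (x + T)), hshift,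
    add_zero]

/-- The derivative of `sinePrimitive s L`: the sine wave of period `2L`, sharpened at its zeros by
`signedLogModulus s`. -/
noncomputable def sharpenedSine (s L x : ℝ) : ℝ := signedLogModulus s (sin (π / L * x))

/-- The solution `u` of the fractional equation when `2s = 1 - β`: an even `2L`-periodic function of
class `C^1` whose derivative has no Hölder modulus of continuity at `0`. -/
noncomputable def sinePrimitive (s L x : ℝ) : ℝ := ∫ t in 0..x, sharpenedSine s L t

lemma odd_sharpenedSine : Function.Odd (sharpenedSine s L) := fun x ↦ by
  rw [sharpenedSine, mul_neg, Real.sin_neg, signedLogModulus_neg, sharpenedSine]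

lemma periodic_sharpenedSine (hL : L ≠ 0) : Function.Periodic (sharpenedSine s L) (2 * L) :=
  fun x ↦ by
    rw [sharpenedSine, show π / L * (x + 2 * L) = π / L * x + 2 * π by field_simp,
      Real.sin_add_two_pi, sharpenedSine]

lemma continuous_sharpenedSine (hs : 0 < s) : Continuous (sharpenedSine s L) :=
  (continuousOn_signedLogModulus hs).comp_continuous (by fun_prop) fun x ↦ Real.sin_mem_Icc _

lemma abs_sharpenedSine_le_one (hs : 0 ≤ s) (x : ℝ) : |sharpenedSine s L x| ≤ 1 :=
  abs_signedLogModulus_le_one hs (Real.abs_sin_le_one _)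

lemma pi_div_mul_mem_Icc {x : ℝ} (hx : x ∈ Icc 0 L) : π / L * x ∈ Icc 0 π := by
  have hL : 0 ≤ L := hx.1.trans hx.2
  refine ⟨mul_nonneg (by positivity) hx.1, ?_⟩
  rw [div_mul_eq_mul_div]
  exact div_le_of_le_mul₀ hL (by positivity) (by gcongr; exact hx.2)

lemma sharpenedSine_nonneg (hs : 0 ≤ s) {x : ℝ} (hx : x ∈ Icc 0 L) : 0 ≤ sharpenedSine s L x :=
  signedLogModulus_nonneg hs ⟨Real.sin_nonneg_of_mem_Icc (pi_div_mul_mem_Icc hx), Real.sin_le_one _⟩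

lemma hasDerivAt_sinePrimitive (hs : 0 < s) (x : ℝ) :
    HasDerivAt (sinePrimitive s L) (sharpenedSine s L x) x :=
  (continuous_sharpenedSine hs).integral_hasStrictDerivAt 0 x |>.hasDerivAt

lemma even_sinePrimitive : Function.Even (sinePrimitive s L) :=
  even_intervalIntegral_of_odd odd_sharpenedSine

lemma periodic_sinePrimitive (hs : 0 < s) (hL : L ≠ 0) :
    Function.Periodic (sinePrimitive s L) (2 * L) :=
  periodic_intervalIntegral_of_odd (continuous_sharpenedSine hs) odd_sharpenedSine
    (periodic_sharpenedSine hL)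

lemma abs_sinePrimitive_sub_le_mul {C x y : ℝ} (hs : 0 < s)
    (hC : ∀ t ∈ uIcc x y, |sharpenedSine s L t| ≤ C) :
    |sinePrimitive s L x - sinePrimitive s L y| ≤ C * |x - y| :=
  (convex_uIcc x y).norm_image_sub_le_of_norm_hasDerivWithin_le
    (fun t _ ↦ (hasDerivAt_sinePrimitive hs t).hasDerivWithinAt) hC right_mem_uIcc left_mem_uIcc

lemma abs_sinePrimitive_sub_le (hs : 0 < s) (x y : ℝ) :
    |sinePrimitive s L x - sinePrimitive s L y| ≤ |x - y| := by
  simpa using abs_sinePrimitive_sub_le_mul hs fun t _ ↦ abs_sharpenedSine_le_one (L := L) hs.le t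

lemma sharpenedSine_le_two_mul_midpoint {a b : ℝ} (hs : 0 ≤ s) (hs' : s ≤ 1) (ha : a ∈ Icc 0 L)
    (hb : b ∈ Icc 0 L) : sharpenedSine s L a ≤ 2 * sharpenedSine s L ((a + b) / 2) := by
  have ha' := pi_div_mul_mem_Icc ha
  have hsin := sin_le_two_mul_sin_midpoint ha' (pi_div_mul_mem_Icc hb)
  have hmid : (a + b) / 2 ∈ Icc 0 L :=
    ⟨by linarith [ha.1, hb.1], by linarith [ha.2, hb.2]⟩
  rw [← mul_add, mul_div_assoc, ← abs_of_nonneg (Real.sin_nonneg_of_mem_Icc ha')] at hsin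
  calc sharpenedSine s L a ≤ 2 ^ s * sharpenedSine s L ((a + b) / 2) :=
        (le_abs_self _).trans <| abs_signedLogModulus_le_rpow_mul hs (Real.abs_sin_le_one _)
          ⟨Real.sin_nonneg_of_mem_Icc (pi_div_mul_mem_Icc hmid), Real.sin_le_one _⟩ one_le_two hsin
    _ ≤ 2 ^ (1 : ℝ) * sharpenedSine s L ((a + b) / 2) := by
        gcongr
        · exact sharpenedSine_nonneg hs hmid
        · exact one_le_two
    _ = 2 * sharpenedSine s L ((a + b) / 2) := by rw [Real.rpow_one]

lemma sharpenedSine_midpoint_mul_sub_le {x y : ℝ} (hs : 0 < s) (hs' : s ≤ 1) (hx : 0 ≤ x)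
    (hxy : x ≤ y) (hy : y ≤ L) :
    sharpenedSine s L ((x + y) / 2) * (y - x) ≤
      4 * (sinePrimitive s L y - sinePrimitive s L x) := by
  have hint (a b : ℝ) : IntervalIntegrable (sharpenedSine s L) volume a b :=
    (continuous_sharpenedSine hs).intervalIntegrable a b
  obtain ⟨a, ha⟩ : ∃ a, a = (x + y) / 2 - (y - x) / 4 := ⟨_, rfl⟩
  obtain ⟨b, hb⟩ : ∃ b, b = (x + y) / 2 + (y - x) / 4 := ⟨_, rfl⟩
  have hlow (t : ℝ) (ht : t ∈ Icc a b) :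
      sharpenedSine s L ((x + y) / 2) / 2 ≤ sharpenedSine s L t := by
    have := sharpenedSine_le_two_mul_midpoint hs.le hs' (L := L) (a := (x + y) / 2)
      (b := 2 * t - (x + y) / 2) ⟨by linarith, by linarith⟩ ⟨by linarith [ht.1], by linarith [ht.2]⟩
    rw [add_sub_cancel, mul_div_cancel_left₀ t two_ne_zero] at this
    linarith
  have hmono : ∫ t in a..b, sharpenedSine s L t ≤ ∫ t in x..y, sharpenedSine s L t :=
    intervalIntegral.integral_mono_interval (by linarith) (by linarith) (by linarith)
      ((ae_restrict_iff' measurableSet_Ioc).2 <| .of_forall fun t ht ↦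
        sharpenedSine_nonneg hs.le ⟨hx.trans ht.1.le, ht.2.trans hy⟩) (hint x y)
  have hconst := intervalIntegral.integral_mono_on (by linarith) intervalIntegrable_const (hint a b)
    hlow
  rw [intervalIntegral.integral_const, smul_eq_mul] at hconst
  rw [sinePrimitive, sinePrimitive,
    intervalIntegral.integral_interval_sub_left (hint 0 y) (hint 0 x)]
  calc _ = 4 * ((b - a) * (sharpenedSine s L ((x + y) / 2) / 2)) := by rw [ha, hb]; ring
    _ ≤ _ := by gcongr; exact hconst.trans hmono

lemma abs_sharpenedSine_le_midpoint {x y t r : ℝ} (hs : 0 ≤ s) (hs' : s ≤ 1) (hx : 0 ≤ x)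
    (hxy : x < y) (hy : y ≤ L) (hr : 0 ≤ r) (ht : |t - (x + y) / 2| ≤ (y - x) / 2 + r) :
    |sharpenedSine s L t| ≤ 4 * (1 + (r / (y - x)) ^ s) * sharpenedSine s L ((x + y) / 2) := by
  have hκ : 0 < π / L := div_pos Real.pi_pos (by linarith)
  have hmid : (x + y) / 2 ∈ Icc 0 L := ⟨by linarith, by linarith⟩
  have hratio : 0 ≤ r / (y - x) := div_nonneg hr (by linarith)
  have hsin : |sin (π / L * t)| ≤ 4 * (1 + r / (y - x)) * sin (π / L * ((x + y) / 2)) := by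
    have := abs_sin_le_mul_sin_midpoint (pi_div_mul_mem_Icc ⟨hx, hxy.le.trans hy⟩).1
      (mul_lt_mul_of_pos_left hxy hκ) (pi_div_mul_mem_Icc ⟨hx.trans hxy.le, hy⟩).2
      (mul_nonneg hκ.le hr) (t := π / L * t) (by
        rw [← mul_add, ← mul_sub, mul_div_assoc, mul_div_assoc, ← mul_sub, ← mul_add, abs_mul,
          abs_of_pos hκ]
        gcongr)
    rwa [← mul_add, ← mul_sub, mul_div_mul_left _ _ hκ.ne', mul_div_assoc] at this
  calc |sharpenedSine s L t|
      ≤ (4 * (1 + r / (y - x))) ^ s * sharpenedSine s L ((x + y) / 2) :=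
        abs_signedLogModulus_le_rpow_mul hs (Real.abs_sin_le_one _)
          ⟨Real.sin_nonneg_of_mem_Icc (pi_div_mul_mem_Icc hmid), Real.sin_le_one _⟩
          (by linarith) hsin
    _ ≤ 4 * (1 + (r / (y - x)) ^ s) * sharpenedSine s L ((x + y) / 2) := by
        gcongr
        · exact sharpenedSine_nonneg hs hmid
        · rw [Real.mul_rpow zero_le_four (by positivity)]
          gcongr
          · exact Real.rpow_le_self_of_one_le (by norm_num) hs'
          · simpa using Real.rpow_add_le_add_rpow zero_le_one hratio hs hs'

lemma abs_sinePrimitive_sub_le_midpoint {x y z : ℝ} (hs : 0 < s) (hs' : s ≤ 1) (hx : 0 ≤ x)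
    (hxy : x < y) (hy : y ≤ L) (hz : z ∈ Icc x y) (w : ℝ) :
    |sinePrimitive s L z - sinePrimitive s L w| ≤
      4 * sharpenedSine s L ((x + y) / 2) * (y - x) *
        (|z - w| / (y - x) + (|z - w| / (y - x)) ^ (1 + s)) := by
  have hd : 0 < y - x := by linarith
  have hv (t : ℝ) (ht : t ∈ uIcc z w) : |sharpenedSine s L t| ≤
      4 * (1 + (|z - w| / (y - x)) ^ s) * sharpenedSine s L ((x + y) / 2) := by
    refine abs_sharpenedSine_le_midpoint hs.le hs' hx hxy hy (abs_nonneg _) ?_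
    have htz : |t - z| ≤ |z - w| := by
      rw [abs_sub_comm z w]
      exact abs_sub_left_of_mem_uIcc ht
    have hzm : |z - (x + y) / 2| ≤ (y - x) / 2 :=
      abs_le.2 ⟨by linarith [hz.1], by linarith [hz.2]⟩
    linarith [abs_sub_le t z ((x + y) / 2)]
  refine (abs_sinePrimitive_sub_le_mul hs hv).trans_eq ?_
  rw [Real.rpow_add_of_nonneg (by positivity) zero_le_one hs.le, Real.rpow_one]
  field_simp

lemma balancedOscillation_sinePrimitive {x y : ℝ} (hs : 0 < s) (hs' : s ≤ 1) (hx : 0 ≤ x)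
    (hxy : x < y) (hy : y ≤ L) :
    BalancedOscillation 1 (1 + s) 16 (sinePrimitive s L) x y := by
  have hd : 0 < y - x := by linarith
  have hv₀ := sharpenedSine_nonneg (L := L) (x := (x + y) / 2) hs.le ⟨by linarith, by linarith⟩
  rw [BalancedOscillation, abs_sub_comm x y, abs_of_pos hd]
  simp only [Real.rpow_one]
  refine ⟨4 * sharpenedSine s L ((x + y) / 2) * (y - x), by positivity, ?_, ?_,
    abs_sinePrimitive_sub_le_midpoint hs hs' hx hxy hy ⟨le_rfl, hxy.le⟩,
    abs_sinePrimitive_sub_le_midpoint hs hs' hx hxy hy ⟨hxy.le, le_rfl⟩⟩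
  · gcongr
    linarith [(abs_le.1 (abs_sharpenedSine_le_one (L := L) hs.le ((x + y) / 2))).2]
  · rw [abs_sub_comm]
    linarith [sharpenedSine_midpoint_mul_sub_le hs hs' hx hxy.le hy,
      le_abs_self (sinePrimitive s L y - sinePrimitive s L x)]

theorem exists_memCalpha_hasFracLapAt_sinePrimitive {β : ℝ} (hs : 0 < s) (hβ : 0 < β)
    (hL : 0 < L) (h : 2 * s = 1 - β) :
    ∃ f : ℝ → ℝ, MemCalpha β univ f ∧
      ∀ x, HasFracLapAt s (sinePrimitive s L) x (f (sinePrimitive s L x)) :=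
  exists_memCalpha_hasFracLapAt hs hβ (by linarith) (by rw [h, one_mul])
    (by linarith : 1 ≤ 1 + s) (by linarith) (by linarith) hL even_sinePrimitive
    (periodic_sinePrimitive hs hL.ne') (A := 1)
    (by simpa only [one_mul, Real.rpow_one] using abs_sinePrimitive_sub_le hs)
    fun _ _ ↦ balancedOscillation_sinePrimitive hs (by linarith)

lemma memCalpha_one_sinePrimitive (hs : 0 < s) (hL : L ≠ 0) :
    MemCalpha 1 univ (sinePrimitive s L) := by
  have hcont : Continuous (sinePrimitive s L) :=
    continuous_iff_continuousAt.2 fun x ↦ (hasDerivAt_sinePrimitive hs x).continuousAt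
  obtain ⟨m, M, -, hrange⟩ := exists_range_eq_Icc (mul_ne_zero two_ne_zero hL)
    (periodic_sinePrimitive hs hL) hcont
  have hmem (x : ℝ) : sinePrimitive s L x ∈ Icc m M := hrange ▸ mem_range_self x
  exact memCalpha_one_univ_of_hasDerivAt (hasDerivAt_sinePrimitive hs)
    (continuous_sharpenedSine hs) (fun x ↦ abs_le_max_abs_abs (hmem x).1 (hmem x).2)
    (abs_sharpenedSine_le_one hs.le)

lemma isLittleO_rpow_sharpenedSine {θ : ℝ} (hs : 0 ≤ s) (hL : 0 < L) (hθ : 0 < θ) :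
    (fun x ↦ x ^ θ) =o[𝓝[>] 0] sharpenedSine s L := by
  have hIoc : ∀ᶠ x : ℝ in 𝓝[>] 0, x ∈ Ioc 0 (L / 2) := Ioc_mem_nhdsGT (by positivity)
  have hjordan : ∀ᶠ x : ℝ in 𝓝[>] 0, 2 / L * x ≤ sin (π / L * x) := hIoc.mono fun x hx ↦ by
    have hx' : π / L * x ≤ π / 2 :=
      calc π / L * x ≤ π / L * (L / 2) := by gcongr; exact hx.2
        _ = π / 2 := by field_simp
    calc 2 / L * x = 2 / π * (π / L * x) := by field_simp
      _ ≤ _ := Real.mul_le_sin (mul_nonneg (by positivity) hx.1.le) hx'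
  have hO : (fun x : ℝ ↦ x ^ θ) =O[𝓝[>] 0] fun x ↦ sin (π / L * x) ^ θ := by
    refine .of_bound ((L / 2) ^ θ) ((hIoc.and hjordan).mono fun x ⟨hx, hxsin⟩ ↦ ?_)
    have hx₀ : 0 ≤ 2 / L * x := mul_nonneg (by positivity) hx.1.le
    have hle : x ≤ L / 2 * sin (π / L * x) :=
      calc x = L / 2 * (2 / L * x) := by field_simp
        _ ≤ _ := by gcongr
    rw [Real.norm_of_nonneg (Real.rpow_nonneg hx.1.le θ),
      Real.norm_of_nonneg (Real.rpow_nonneg (hx₀.trans hxsin) θ),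
      ← Real.mul_rpow (by positivity) (hx₀.trans hxsin)]
    exact Real.rpow_le_rpow hx.1.le hle hθ.le
  have hsin : Tendsto (fun x ↦ sin (π / L * x)) (𝓝[>] 0) (𝓝[>] 0) := by
    refine tendsto_nhdsWithin_iff.2 ⟨?_, (hIoc.and hjordan).mono fun x ⟨hx, hxsin⟩ ↦
      (mul_pos (by positivity) hx.1).trans_le hxsin⟩
    exact (Continuous.tendsto' (by fun_prop) 0 0 (by simp)).mono_left nhdsWithin_le_nhds
  exact hO.trans_isLittleO ((isLittleO_rpow_signedLogModulus hs hθ).comp_tendsto hsin)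

lemma not_memCalpha_sinePrimitive {ε ρ : ℝ} (hs : 0 < s) (hL : 0 < L) (hε : 0 < ε) (hρ : 0 < ρ) :
    ¬ MemCalpha (1 + ε) (Icc (-ρ) ρ) (sinePrimitive s L) := fun hu ↦ by
  have hΩ : UniqueDiffOn ℝ (Icc (-ρ) ρ) := uniqueDiffOn_Icc (by linarith)
  have hderiv {x : ℝ} (hx : x ∈ Icc (-ρ) ρ) :
      derivWithin (sinePrimitive s L) (Icc (-ρ) ρ) x = sharpenedSine s L x :=
    (hasDerivAt_sinePrimitive hs x).hasDerivWithinAt.derivWithin (hΩ x hx)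
  have hzero : sharpenedSine s L 0 = 0 := by simp [sharpenedSine, signedLogModulus]
  refine not_memCalpha_of_isLittleO hρ hε.le ?_ (hu.derivWithin hΩ hε.le)
  refine (isLittleO_rpow_sharpenedSine hs.le hL (lt_min hε one_pos)).congr' .rfl ?_
  filter_upwards [Ioc_mem_nhdsGT hρ] with x hx
  rw [hderiv ⟨by linarith [hx.1], hx.2⟩, hderiv ⟨by linarith, hρ.le⟩, hzero, sub_zero]

end SinePrimitive

theorem stmt0 (s β L : ℝ) (hs0 : 0 < s) (hs1 : s < 1) (hβ0 : 0 < β) (hβ1 : β < 1)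
    (hL : 0 < L) (h : 2 * s ≤ 1 - β) :
    ∃ u f : ℝ → ℝ,
      Function.Periodic u (2 * L) ∧
      MemCalpha (2 * s / (1 - β)) Set.univ u ∧
      MemCalpha β Set.univ f ∧
      (∀ x : ℝ, HasFracLapAt s u x (f (u x))) ∧
      (∀ ε ρ : ℝ, 0 < ε → 0 < ρ →
        ¬ MemCalpha (2 * s / (1 - β) + ε) (Set.Icc (-ρ) ρ) u) := by
  have hβ : 0 < 1 - β := sub_pos.2 hβ1
  rcases h.lt_or_eq with hlt | heq
  · have hα : 0 < 2 * s / (1 - β) := by positivity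
    have hα' : 2 * s / (1 - β) < 1 := (div_lt_one hβ).2 hlt
    obtain ⟨f, hf, hfu⟩ := exists_memCalpha_hasFracLapAt_circleNormRpow hs0 hβ0 hβ1
      (div_mul_cancel₀ (2 * s) hβ.ne') hα'.le hL
    exact ⟨_, f, periodic_circleNormRpow, memCalpha_circleNormRpow hα hα' hL, hf, hfu,
      fun _ _ ↦ not_memCalpha_circleNormRpow hα hα' hL⟩
  · rw [heq, div_self hβ.ne']
    obtain ⟨f, hf, hfu⟩ := exists_memCalpha_hasFracLapAt_sinePrimitive hs0 hβ0 hL heq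
    exact ⟨_, f, periodic_sinePrimitive hs0 hL.ne', memCalpha_one_sinePrimitive hs0 hL.ne', hf,
      hfu, fun _ _ ↦ not_memCalpha_sinePrimitive hs0 hL⟩
end

section
/- Let 0<s<1, 0<β<1, and L>0 with 2s > 1-β. Then there exists a 2L-periodic function u ∈ C^{2s+β}(ℝ) and a function f ∈ C^β(ℝ) such that (-Δ)^s u(x) = f(u(x)) for every x ∈ ℝ, and such that for every ε>0 and every ρ>0, u restricted to [-ρ,ρ] does not belong to C^{2s+β+ε}([-ρ,ρ]). -/
open MeasureTheory Filter Set

/-!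
A sine series `∑ i, A i * sin (ω i * x)` is mapped by `(-Δ)^s` to the series with coefficients
`A i * ω i ^ (2 * s)`, up to a constant factor. Over odd frequencies, the series with coefficients
`(2 * k + 1) ^ (-(1 + p))` is the Laplace transform of a Poisson kernel which depends on `x` only
through `sin x`, so for `q < p` it is `q`-Hölder not only in `x` but in `sin x`.

Superpose, with small positive weights, the series with exponents `p = 2 * s + β + δ` where `δ → 0`,
and add the dominant term `2 * sin x`. The sum `u` is Lipschitz in `sin x` and so is its inverse:
increments of `u` control those of `sin x`. Hence `(-Δ)^s u`, which is the same superposition with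
`p = β + δ` and so is `β`-Hölder in `sin x`, is `β`-Hölder as a function of the value of `u`.

Since all coefficients are nonnegative, nothing cancels the singularity at `0` of the term with
index `δ`, which leaves `u` outside every class better than `2 * s + β + δ` near `0`.
-/

open scoped Topology NNReal

section Holder

variable {α α' β θ C K a b c ρ : ℝ} {f g u : ℝ → ℝ} {Ω : Set ℝ}

theorem holderOnWith_of_abs_sub_le (hC : 0 ≤ C) (hθ : 0 ≤ θ)
    (h : ∀ x ∈ Ω, ∀ y ∈ Ω, |f x - f y| ≤ C * |x - y| ^ θ) :
    HolderOnWith C.toNNReal θ.toNNReal f Ω := by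
  intro x hx y hy
  rw [edist_dist, edist_dist, Real.dist_eq, Real.dist_eq, Real.coe_toNNReal _ hθ,
    ENNReal.ofReal_rpow_of_nonneg (abs_nonneg _) hθ, ← ENNReal.ofReal, ← ENNReal.ofReal_mul hC]
  exact ENNReal.ofReal_le_ofReal (h x hx y hy)

theorem le_two_mul_rpow {d : ℝ} (hd0 : 0 ≤ d) (hd2 : d ≤ 2) (hθ0 : 0 ≤ θ) (hθ1 : θ ≤ 1) :
    d ≤ 2 * d ^ θ := by
  rcases le_or_gt d 1 with h | h
  · linarith [Real.self_le_rpow_of_le_one hd0 h hθ1]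
  · linarith [Real.one_le_rpow h.le hθ0]

theorem abs_sub_le_two_mul_rpow_of_lipschitzWith_one (hf : LipschitzWith 1 f)
    (hb : ∀ x, |f x| ≤ 1) (hθ0 : 0 ≤ θ) (hθ1 : θ ≤ 1) (x y : ℝ) :
    |f x - f y| ≤ 2 * |x - y| ^ θ := by
  have hbound : |f x - f y| ≤ 2 := by linarith [abs_sub (f x) (f y), hb x, hb y]
  have hlip : |f x - f y| ≤ |x - y| := by simpa [Real.dist_eq] using hf.dist_le_mul x y
  grw [le_two_mul_rpow (abs_nonneg _) hbound hθ0 hθ1, hlip]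

theorem MemCalpha.exists_lipschitzOnWith_iteratedDerivWithin (hΩ : Convex ℝ Ω)
    (hΩu : UniqueDiffOn ℝ Ω) {m : ℕ} (hm : m < ⌊α⌋₊) (h : MemCalpha α Ω f) :
    ∃ C : ℝ≥0, LipschitzOnWith C (iteratedDerivWithin m f Ω) Ω := by
  obtain ⟨C, hC⟩ := h.2.1 (m + 1) hm
  refine ⟨C.toNNReal, hΩ.lipschitzOnWith_of_nnnorm_derivWithin_le
    (h.1.differentiableOn_iteratedDerivWithin (mod_cast hm) hΩu) fun x hx => ?_⟩
  rw [← iteratedDerivWithin_succ, ← norm_toNNReal]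
  exact Real.toNNReal_le_toNNReal (hC x hx)

theorem MemCalpha.mono (hΩ : Convex ℝ Ω) (hΩu : UniqueDiffOn ℝ Ω) (hΩb : Bornology.IsBounded Ω)
    (hle : α' ≤ α) (h : MemCalpha α Ω f) : MemCalpha α' Ω f := by
  have hfl : ⌊α'⌋₊ ≤ ⌊α⌋₊ := Nat.floor_le_floor hle
  refine ⟨h.1.of_le (mod_cast hfl), fun k hk => h.2.1 k (hk.trans hfl), ?_⟩
  have of_exponent : ∀ {C r : ℝ≥0}, HolderOnWith C r (iteratedDerivWithin ⌊α'⌋₊ f Ω) Ω →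
      (α' - ⌊α'⌋₊).toNNReal ≤ r → ∃ C' : ℝ≥0,
        HolderOnWith C' (α' - ⌊α'⌋₊).toNNReal (iteratedDerivWithin ⌊α'⌋₊ f Ω) Ω := fun hH hr => by
    obtain ⟨D, hD⟩ := Metric.isBounded_iff_nndist.1 hΩb
    refine ⟨_, hH.of_le (D := D) (fun x hx y hy => ?_) hr⟩
    rw [edist_nndist]
    exact mod_cast hD hx hy
  rcases hfl.eq_or_lt with heq | hlt
  · obtain ⟨C, hC⟩ := h.2.2
    rw [← heq] at hC
    exact of_exponent hC (Real.toNNReal_le_toNNReal (by linarith))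
  · obtain ⟨C, hC⟩ := h.exists_lipschitzOnWith_iteratedDerivWithin hΩ hΩu hlt
    refine of_exponent hC.holderOnWith ?_
    rw [Real.toNNReal_le_one]
    linarith [Nat.lt_floor_add_one α']

theorem memCalpha_univ_of_lt_one (hβ0 : 0 < β) (hβ1 : β < 1) (hK : 0 ≤ K)
    (hbdd : ∀ x, |f x| ≤ C) (h : ∀ x y, |f x - f y| ≤ K * |x - y| ^ β) :
    MemCalpha β univ f := by
  have hfl : ⌊β⌋₊ = 0 := Nat.floor_eq_zero.2 hβ1
  have hH := holderOnWith_of_abs_sub_le hK hβ0.le fun x (_ : x ∈ univ) y _ => h x y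
  simp only [MemCalpha, hfl, Nat.le_zero, forall_eq, iteratedDerivWithin_zero, CharP.cast_eq_zero,
    sub_zero, contDiffOn_zero]
  exact ⟨hH.continuousOn (Real.toNNReal_pos.2 hβ0), ⟨C, fun x _ => hbdd x⟩, _, hH⟩

theorem exists_memCalpha_comp_eq_s1 (hβ0 : 0 < β) (hβ1 : β < 1) (hK : 0 ≤ K) (hc : c ≠ 0)
    (hu : Continuous u) (hper : u.Periodic c) (hug : ∀ x y, |g x - g y| ≤ K * |u x - u y| ^ β) :
    ∃ f : ℝ → ℝ, MemCalpha β univ f ∧ ∀ x, f (u x) = g x := by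
  obtain ⟨a, b, hrange⟩ : ∃ a b, range u = Icc a b :=
    ⟨_, _, eq_Icc_of_connected_compact (isConnected_range hu) (hper.compact_of_continuous hc hu)⟩
  have hmem : ∀ x, u x ∈ Icc a b := fun x => hrange ▸ mem_range_self x
  have hab : a ≤ b := (hmem 0).1.trans (hmem 0).2
  have hfactors : g.FactorsThrough u := fun x y hxy => by
    have := hug x y
    rw [hxy, sub_self, abs_zero, Real.zero_rpow hβ0.ne', mul_zero] at this
    exact sub_eq_zero.1 (abs_nonpos_iff.1 this)
  set f : ℝ → ℝ := fun t => Function.extend u g 0 (projIcc a b hab t)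
  have hfu : ∀ x, f (u x) = g x := fun x => by
    simp only [f, projIcc_of_mem hab (hmem x), hfactors.extend_apply]
  have hlift : ∀ t, ∃ x, u x = projIcc a b hab t ∧ f t = g x := fun t => by
    obtain ⟨x, hx⟩ : (projIcc a b hab t : ℝ) ∈ range u := by
      rw [hrange]; exact (projIcc a b hab t).2
    exact ⟨x, hx, by rw [← hfu x, hx, ← show f t = f (projIcc a b hab t) by simp [f]]⟩
  have hbdd : ∀ t, |f t| ≤ |g 0| + K * (b - a) ^ β := fun t => by
    obtain ⟨x, -, hft⟩ := hlift t
    have hdiff : |u x - u 0| ≤ b - a :=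
      abs_sub_le_of_le_of_le (hmem x).1 (hmem x).2 (hmem 0).1 (hmem 0).2
    calc |f t| ≤ |g 0| + |g x - g 0| := by
          rw [hft]; linarith [abs_sub_abs_le_abs_sub (g x) (g 0)]
      _ ≤ _ := by grw [hug x 0, hdiff]
  refine ⟨f, memCalpha_univ_of_lt_one hβ0 hβ1 hK hbdd fun t t' => ?_, hfu⟩
  obtain ⟨x, hx, hft⟩ := hlift t
  obtain ⟨y, hy, hft'⟩ := hlift t'
  have hproj : |u x - u y| ≤ |t - t'| := by
    simpa [hx, hy, Real.dist_eq, Subtype.dist_eq] using (LipschitzWith.projIcc hab).dist_le_mul t t'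
  rw [hft, hft']
  grw [hug x y, hproj]

theorem iteratedDeriv_two_zero_of_odd (hodd : f.Odd) : iteratedDeriv 2 f 0 = 0 := by
  have h := iteratedDeriv_comp_neg 2 f 0
  simp only [hodd _, iteratedDeriv_fun_neg, neg_zero, even_two, Even.neg_pow, one_pow,
    one_smul] at h
  linarith

theorem MemCalpha.exists_abs_iteratedDeriv_sub_le (hα : 0 ≤ α) (hab : a < b)
    (hu : ContDiff ℝ ⌊α⌋₊ u) (h : MemCalpha α (Icc a b) u) :
    ∃ C, 0 ≤ C ∧ ∀ x ∈ Icc a b, ∀ y ∈ Icc a b,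
      |iteratedDeriv ⌊α⌋₊ u x - iteratedDeriv ⌊α⌋₊ u y| ≤ C * |x - y| ^ (α - ⌊α⌋₊) := by
  obtain ⟨C, hC⟩ := h.2.2
  refine ⟨C, C.2, fun x hx y hy => ?_⟩
  have := hC.dist_le hx hy
  rwa [Real.dist_eq, Real.dist_eq, iteratedDerivWithin_eq_iteratedDeriv (uniqueDiffOn_Icc hab)
    hu.contDiffAt hx, iteratedDerivWithin_eq_iteratedDeriv (uniqueDiffOn_Icc hab)
    hu.contDiffAt hy, Real.coe_toNNReal _ (sub_nonneg.2 (Nat.floor_le hα))] at this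

theorem MemCalpha.exists_abs_deriv_sub_le_of_odd (hα : 1 ≤ α) (hα3 : α < 3) (hρ : 0 < ρ)
    (hodd : u.Odd) (hu : ContDiff ℝ ⌊α⌋₊ u) (h : MemCalpha α (Icc (-ρ) ρ) u) :
    ∃ C, ∀ x ∈ Ioc 0 ρ, |deriv u x - deriv u 0| ≤ C * x ^ (α - 1) := by
  obtain ⟨C, hC0, hC⟩ := h.exists_abs_iteratedDeriv_sub_le (by linarith) (by linarith) hu
  have h0 : (0 : ℝ) ∈ Icc (-ρ) ρ := by constructor <;> linarith
  refine ⟨C, fun x hx => ?_⟩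
  have hfloor : ⌊α⌋₊ = 1 ∨ ⌊α⌋₊ = 2 := by
    have : 1 ≤ ⌊α⌋₊ := Nat.le_floor (mod_cast hα)
    have : ⌊α⌋₊ < 3 := (Nat.floor_lt (by linarith)).2 (mod_cast hα3)
    omega
  rcases hfloor with hm | hm <;> rw [hm] at hC hu
  · simpa [abs_of_pos hx.1] using hC x ⟨by linarith [hx.1], hx.2⟩ 0 h0
  · have hdiff : Differentiable ℝ (deriv u) := by
      simpa using hu.differentiable_iteratedDeriv 1 (by norm_num)
    have hbound : ∀ y ∈ Icc 0 x, ‖deriv (deriv u) y‖ ≤ C * x ^ (α - 2) := fun y hy => by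
      have hpow : y ^ (α - 2) ≤ x ^ (α - 2) := by
        have : (2 : ℝ) ≤ α := by simpa [hm] using Nat.floor_le (by linarith : 0 ≤ α)
        exact Real.rpow_le_rpow hy.1 hy.2 (by linarith)
      have hy2 := hC y ⟨by linarith [hy.1], hy.2.trans hx.2⟩ 0 h0
      rw [iteratedDeriv_two_zero_of_odd hodd, sub_zero, sub_zero, abs_of_nonneg hy.1,
        iteratedDeriv_succ, iteratedDeriv_one] at hy2
      exact hy2.trans (mul_le_mul_of_nonneg_left (mod_cast hpow) hC0)
    calc |deriv u x - deriv u 0| ≤ C * x ^ (α - 2) * ‖x - 0‖ :=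
          (convex_Icc 0 x).norm_image_sub_le_of_norm_deriv_le (fun y _ => hdiff y) hbound
            (left_mem_Icc.2 hx.1.le) (right_mem_Icc.2 hx.1.le)
      _ = C * x ^ (α - 1) := by
          rw [sub_zero, Real.norm_of_nonneg hx.1.le, mul_assoc, ← Real.rpow_add_one hx.1.ne']
          ring_nf

end Holder

/-- The sine series `∑ i, A i * sin (ω i * x)`, with arbitrary frequencies `ω i`. The index type is
arbitrary so that a series of sine series is again a sine series. -/
noncomputable def sineSeries {ι : Type*} (A ω : ι → ℝ) (x : ℝ) : ℝ :=
  ∑' i, A i * Real.sin (ω i * x)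

section SineSeries

variable {ι : Type*} {A B ω : ι → ℝ} {x y : ℝ}

theorem abs_mul_le_of_abs_le_one {a b : ℝ} (hb : |b| ≤ 1) : |a * b| ≤ |a| := by
  rw [abs_mul]
  exact mul_le_of_le_one_right (abs_nonneg a) hb

theorem summable_mul_sin (hA : Summable A) : Summable fun i => A i * Real.sin (ω i * x) :=
  .of_norm_bounded hA.abs fun _ => abs_mul_le_of_abs_le_one (Real.abs_sin_le_one _)

theorem sineSeries_add (hA : Summable A) (hB : Summable B) :
    sineSeries (A + B) ω x = sineSeries A ω x + sineSeries B ω x := by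
  simp only [sineSeries, Pi.add_apply, add_mul]
  exact (summable_mul_sin hA).tsum_add (summable_mul_sin hB)

theorem sineSeries_const_mul (c : ℝ) :
    sineSeries (fun i => c * A i) ω x = c * sineSeries A ω x := by
  simp only [sineSeries, mul_assoc, tsum_mul_left]

theorem sineSeries_single [DecidableEq ι] (i : ι) (a : ℝ) :
    sineSeries (Pi.single i a) ω x = a * Real.sin (ω i * x) := by
  rw [sineSeries, tsum_eq_single i fun j hj => by rw [Pi.single_eq_of_ne hj, zero_mul],
    Pi.single_eq_same]

theorem sineSeries_comp_mul (κ : ℝ) :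
    sineSeries A (fun i => κ * ω i) x = sineSeries A ω (κ * x) := by
  simp only [sineSeries, mul_assoc, mul_comm κ]

theorem sineSeries_periodic {T : ℝ} (h : ∀ i, ∃ m : ℕ, ω i * T = m * (2 * Real.pi)) :
    (sineSeries A ω).Periodic T := fun x => by
  refine tsum_congr fun i => ?_
  obtain ⟨m, hm⟩ := h i
  rw [mul_add, hm, Real.sin_add_nat_mul_two_pi]

theorem sineSeries_odd : (sineSeries A ω).Odd := fun x => by
  simp only [sineSeries, mul_neg, Real.sin_neg, tsum_neg]

theorem abs_sineSeries_le (hA : Summable A) : |sineSeries A ω x| ≤ ∑' i, |A i| :=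
  (summable_mul_sin hA).hasSum.norm_le_of_bounded hA.abs.hasSum fun _ =>
    abs_mul_le_of_abs_le_one (Real.abs_sin_le_one _)

theorem summable_mul_rpow_of_le {r γ : ℝ} (hω : ∀ i, 0 ≤ ω i) (hr : 0 ≤ r) (hrγ : r ≤ γ)
    (hA : Summable A) (hAγ : Summable fun i => A i * ω i ^ γ) :
    Summable fun i => A i * ω i ^ r := by
  refine .of_norm_bounded (hA.abs.add hAγ.abs) fun i => ?_
  have hpow : ω i ^ r ≤ 1 + ω i ^ γ := by
    rcases le_total (ω i) 1 with h | h
    · linarith [Real.rpow_le_one (hω i) h hr, Real.rpow_nonneg (hω i) γ]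
    · linarith [Real.rpow_le_rpow_of_exponent_le h hrγ]
  rw [Real.norm_eq_abs, abs_mul, abs_mul, abs_of_nonneg (Real.rpow_nonneg (hω i) r),
    abs_of_nonneg (Real.rpow_nonneg (hω i) γ)]
  grw [hpow]
  exact le_of_eq (by ring)

theorem summable_mul_pow_of_le {γ : ℝ} {j : ℕ} (hω : ∀ i, 0 ≤ ω i) (hj : j ≤ γ)
    (hA : Summable A) (hAγ : Summable fun i => A i * ω i ^ γ) :
    Summable fun i => A i * ω i ^ j := by
  simpa only [Real.rpow_natCast] using summable_mul_rpow_of_le hω j.cast_nonneg hj hA hAγ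

theorem contDiff_const_mul_sin {N : WithTop ℕ∞} (a w : ℝ) :
    ContDiff ℝ N fun x => a * Real.sin (w * x) := by fun_prop

theorem iteratedDeriv_const_mul_sin (j : ℕ) (a w x : ℝ) :
    iteratedDeriv j (fun x => a * Real.sin (w * x)) x
      = a * w ^ j * iteratedDeriv j Real.sin (w * x) := by
  rw [iteratedDeriv_const_mul_field, iteratedDeriv_comp_const_mul Real.contDiff_sin, mul_assoc]

theorem norm_iteratedFDeriv_const_mul_sin_le (j : ℕ) (a w x : ℝ) :
    ‖iteratedFDeriv ℝ j (fun x => a * Real.sin (w * x)) x‖ ≤ |a * w ^ j| := by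
  rw [norm_iteratedFDeriv_eq_norm_iteratedDeriv, iteratedDeriv_const_mul_sin]
  exact abs_mul_le_of_abs_le_one (Real.abs_iteratedDeriv_sin_le_one _ _)

theorem contDiff_sineSeries {N : ℕ} (h : ∀ j ≤ N, Summable fun i => A i * ω i ^ j) :
    ContDiff ℝ N (sineSeries A ω) :=
  contDiff_tsum (N := N) (fun i => contDiff_const_mul_sin (A i) (ω i))
    (fun k hk => (h k (mod_cast hk)).abs)
    fun k i x _ => norm_iteratedFDeriv_const_mul_sin_le k (A i) (ω i) x

theorem hasSum_iteratedDeriv_sineSeries {N : ℕ} (h : ∀ j ≤ N, Summable fun i => A i * ω i ^ j) :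
    HasSum (fun i => A i * ω i ^ N * iteratedDeriv N Real.sin (ω i * x))
      (iteratedDeriv N (sineSeries A ω) x) := by
  have hbound := fun (k : ℕ) i x (_ : (k : ℕ∞) ≤ N) =>
    norm_iteratedFDeriv_const_mul_sin_le k (A i) (ω i) x
  have hsummable : Summable fun i =>
      iteratedFDeriv ℝ N (fun x => A i * Real.sin (ω i * x)) x :=
    .of_norm_bounded (h N le_rfl).abs fun i => hbound N i x le_rfl
  have heval : iteratedFDeriv ℝ N (sineSeries A ω) x
      = ∑' i, iteratedFDeriv ℝ N (fun x => A i * Real.sin (ω i * x)) x :=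
    iteratedFDeriv_tsum_apply (N := N) (fun i => contDiff_const_mul_sin (A i) (ω i))
      (fun k hk => (h k (mod_cast hk)).abs) hbound le_rfl x
  rw [iteratedDeriv, heval, ContinuousMultilinearMap.tsum_eval hsummable]
  exact ((ContinuousMultilinearMap.apply ℝ _ ℝ fun _ => 1).summable hsummable).hasSum.congr_fun
    fun i => (iteratedDeriv_const_mul_sin N (A i) (ω i) x).symm

theorem continuous_sineSeries (hA : Summable A) : Continuous (sineSeries A ω) :=
  contDiff_zero.1 <| contDiff_sineSeries (N := 0) (by simpa using hA)

theorem hasSum_deriv_sineSeries (hA : Summable A) (hA1 : Summable fun i => A i * ω i) :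
    HasSum (fun i => A i * ω i * Real.cos (ω i * x)) (deriv (sineSeries A ω) x) := by
  simpa using hasSum_iteratedDeriv_sineSeries (N := 1) (x := x) (A := A) (ω := ω)
    fun j hj => by interval_cases j <;> simpa

theorem lipschitzWith_one_iteratedDeriv_sin (n : ℕ) :
    LipschitzWith 1 (iteratedDeriv n Real.sin) :=
  lipschitzWith_of_nnnorm_deriv_le (Real.differentiable_iteratedDeriv_sin n) fun x => by
    rw [← iteratedDeriv_succ, ← NNReal.coe_le_coe]
    exact Real.abs_iteratedDeriv_sin_le_one _ _

theorem abs_mul_iteratedDeriv_sin_sub_le {m : ℕ} {a w γ : ℝ} (hw : 0 ≤ w) (hm : m ≤ γ)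
    (hm1 : γ ≤ m + 1) :
    |a * w ^ m * iteratedDeriv m Real.sin (w * x) - a * w ^ m * iteratedDeriv m Real.sin (w * y)|
      ≤ |a * w ^ γ| * 2 * |x - y| ^ (γ - m) := by
  have hsin := abs_sub_le_two_mul_rpow_of_lipschitzWith_one
    (lipschitzWith_one_iteratedDeriv_sin m) (Real.abs_iteratedDeriv_sin_le_one m)
    (sub_nonneg.2 hm) (by linarith) (w * x) (w * y)
  rw [← mul_sub w, abs_mul w, abs_of_nonneg hw, Real.mul_rpow hw (abs_nonneg _)] at hsin
  have hpow : w ^ γ = w ^ m * w ^ (γ - m) := by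
    rw [← Real.rpow_natCast, ← Real.rpow_add_of_nonneg hw m.cast_nonneg (sub_nonneg.2 hm),
      add_sub_cancel]
  rw [← mul_sub, abs_mul, hpow, ← mul_assoc a, abs_mul (a * w ^ m),
    abs_of_nonneg (Real.rpow_nonneg hw (γ - m))]
  grw [hsin]
  exact le_of_eq (by ring)

theorem memCalpha_sineSeries {γ : ℝ} (hω : ∀ i, 0 ≤ ω i) (hγ : 0 ≤ γ)
    (hA : Summable A) (hAγ : Summable fun i => A i * ω i ^ γ) :
    MemCalpha γ univ (sineSeries A ω) := by
  have hsum : ∀ j ≤ ⌊γ⌋₊, Summable fun i => A i * ω i ^ j := fun j hj =>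
    summable_mul_pow_of_le hω ((Nat.le_floor_iff hγ).1 hj) hA hAγ
  have hderiv : ∀ k ≤ ⌊γ⌋₊, ∀ x, HasSum
      (fun i => A i * ω i ^ k * iteratedDeriv k Real.sin (ω i * x))
      (iteratedDeriv k (sineSeries A ω) x) := fun k hk x =>
    hasSum_iteratedDeriv_sineSeries fun j hj => hsum j (hj.trans hk)
  simp only [MemCalpha, iteratedDerivWithin_univ]
  refine ⟨(contDiff_sineSeries hsum).contDiffOn, fun k hk => ⟨∑' i, |A i * ω i ^ k|, fun x _ => ?_⟩,
    (∑' i, |A i * ω i ^ γ| * 2).toNNReal, holderOnWith_of_abs_sub_le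
      (tsum_nonneg fun i => by positivity) (sub_nonneg.2 (Nat.floor_le hγ)) fun x _ y _ => ?_⟩
  · exact (hderiv k hk x).norm_le_of_bounded (hsum k hk).abs.hasSum fun i =>
      abs_mul_le_of_abs_le_one (Real.abs_iteratedDeriv_sin_le_one k (ω i * x))
  · exact ((hderiv _ le_rfl x).sub (hderiv _ le_rfl y)).norm_le_of_bounded
      ((hAγ.abs.mul_right 2).hasSum.mul_right _) fun i =>
        abs_mul_iteratedDeriv_sin_sub_le (hω i) (Nat.floor_le hγ) (Nat.lt_floor_add_one γ).le

end SineSeries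

section Irregularity

variable {ι : Type*} {A ω : ι → ℝ} {c κ p α ρ x : ℝ} {e : ℕ → ι}

theorem sum_le_deriv_sineSeries_sub (hA0 : ∀ i, 0 ≤ A i) (hω0 : ∀ i, 0 ≤ ω i) (hA : Summable A)
    (hA1 : Summable fun i => A i * ω i) {F : Finset ι} (hF : ∀ i ∈ F, Real.cos (ω i * x) ≤ 0) :
    ∑ i ∈ F, A i * ω i ≤ deriv (sineSeries A ω) 0 - deriv (sineSeries A ω) x := by
  have hsum := (hasSum_deriv_sineSeries (x := 0) hA hA1).sub
    (hasSum_deriv_sineSeries (x := x) hA hA1)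
  simp only [mul_zero, Real.cos_zero, ← mul_sub] at hsum
  have hnonneg : ∀ i, 0 ≤ A i * ω i := fun i => mul_nonneg (hA0 i) (hω0 i)
  refine (Finset.sum_le_sum fun i hi => ?_).trans (sum_le_hasSum F (fun i _ =>
    mul_nonneg (hnonneg i) (sub_nonneg.2 (Real.cos_le_one _))) hsum)
  exact le_mul_of_one_le_right (hnonneg i) (by linarith [hF i hi])

theorem cos_nonpos_of_mem_Ico {N k : ℕ} (hk : k ∈ Finset.Ico N (2 * N)) :
    Real.cos ((2 * k + 1) / N) ≤ 0 := by
  obtain ⟨hNk, hkN⟩ := Finset.mem_Ico.1 hk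
  have hN : (0 : ℝ) < N := by norm_cast; omega
  have hlow : 2 ≤ (2 * k + 1 : ℝ) / N := by
    rw [le_div_iff₀ hN]; norm_cast; omega
  have hhigh : (2 * k + 1 : ℝ) / N ≤ 4 := by
    rw [div_le_iff₀ hN]; norm_cast; omega
  exact Real.cos_nonpos_of_pi_div_two_le_of_le (by linarith [Real.pi_le_four])
    (by linarith [Real.pi_gt_three])

theorem mul_rpow_le_deriv_sineSeries_sub (hA0 : ∀ i, 0 ≤ A i) (hω0 : ∀ i, 0 ≤ ω i)
    (hA : Summable A) (hA1 : Summable fun i => A i * ω i) (he : e.Injective) (hκ : 0 < κ)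
    (hc : 0 ≤ c) (hp : 0 ≤ p) (hωe : ∀ k, ω (e k) = κ * (2 * k + 1))
    (hAe : ∀ k : ℕ, c * (2 * k + 1 : ℝ) ^ (-(1 + p)) ≤ A (e k)) {N : ℕ} (hN : 0 < N) :
    c * κ * 4 ^ (-p) * (N : ℝ) ^ (1 - p)
      ≤ deriv (sineSeries A ω) 0 - deriv (sineSeries A ω) (1 / (κ * N)) := by
  -- For `N ≤ k < 2 * N` the harmonics `ω (e k)` all have nonpositive cosine at `1 / (κ * N)`.
  have hN' : (0 : ℝ) < N := mod_cast hN
  have hterm : ∀ k ∈ Finset.Ico N (2 * N), c * κ * (4 * N : ℝ) ^ (-p) ≤ A (e k) * ω (e k) := by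
    intro k hk
    have hk4 : (2 * k + 1 : ℝ) ≤ 4 * N := by
      have := (Finset.mem_Ico.1 hk).2
      norm_cast; omega
    have hpos : (0 : ℝ) < 2 * k + 1 := by positivity
    calc c * κ * (4 * N : ℝ) ^ (-p) ≤ c * κ * (2 * k + 1 : ℝ) ^ (-p) := by
          exact mul_le_mul_of_nonneg_left
            (Real.rpow_le_rpow_of_nonpos hpos hk4 (neg_nonpos.2 hp)) (by positivity)
      _ = c * (2 * k + 1 : ℝ) ^ (-(1 + p)) * (κ * (2 * k + 1)) := by
          rw [show -p = -(1 + p) + 1 by ring, Real.rpow_add_one hpos.ne']; ring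
      _ ≤ A (e k) * ω (e k) := by
          rw [hωe]; gcongr; exact hAe k
  calc c * κ * 4 ^ (-p) * (N : ℝ) ^ (1 - p)
      = ∑ _k ∈ Finset.Ico N (2 * N), c * κ * (4 * N : ℝ) ^ (-p) := by
        rw [Finset.sum_const, Nat.card_Ico, nsmul_eq_mul, Real.mul_rpow (by norm_num) hN'.le,
          show 1 - p = -p + 1 by ring, Real.rpow_add_one hN'.ne', show 2 * N - N = N by omega]
        ring
    _ ≤ ∑ k ∈ Finset.Ico N (2 * N), A (e k) * ω (e k) := Finset.sum_le_sum hterm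
    _ = ∑ i ∈ (Finset.Ico N (2 * N)).map ⟨e, he⟩, A i * ω i := by
        rw [Finset.sum_map]; rfl
    _ ≤ _ := sum_le_deriv_sineSeries_sub hA0 hω0 hA hA1 fun i hi => by
        obtain ⟨k, hk, rfl⟩ := Finset.mem_map.1 hi
        convert cos_nonpos_of_mem_Ico hk using 2
        simp only [Function.Embedding.coeFn_mk, hωe]
        field_simp

theorem not_memCalpha_sineSeries (hA0 : ∀ i, 0 ≤ A i) (hω0 : ∀ i, 0 ≤ ω i) (hα : 1 ≤ α)
    (hα3 : α < 3) (hsum : ∀ j ≤ ⌊α⌋₊, Summable fun i => A i * ω i ^ j) (he : e.Injective)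
    (hκ : 0 < κ) (hc : 0 < c) (hp : 0 ≤ p) (hpα : p < α) (hρ : 0 < ρ)
    (hωe : ∀ k, ω (e k) = κ * (2 * k + 1))
    (hAe : ∀ k : ℕ, c * (2 * k + 1 : ℝ) ^ (-(1 + p)) ≤ A (e k)) :
    ¬ MemCalpha α (Icc (-ρ) ρ) (sineSeries A ω) := fun hmem => by
  obtain ⟨C, hC⟩ := hmem.exists_abs_deriv_sub_le_of_odd hα hα3 hρ sineSeries_odd
    (contDiff_sineSeries hsum)
  have hA : Summable A := by simpa using hsum 0 (Nat.zero_le _)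
  have hA1 : Summable fun i => A i * ω i := by
    simpa using hsum 1 (Nat.le_floor (mod_cast hα))
  have hbound : ∀ᶠ N : ℕ in atTop,
      (N : ℝ) ^ (α - p) ≤ C * κ ^ (1 - α) / (c * κ * 4 ^ (-p)) := by
    have hsmall : ∀ᶠ N : ℕ in atTop, 1 / (κ * N) ≤ ρ := by
      filter_upwards [eventually_ge_atTop ⌈1 / (κ * ρ)⌉₊, eventually_gt_atTop 0] with N hN hN0
      have hceil := Nat.ceil_le.1 hN
      rw [div_le_iff₀ (by positivity)] at hceil ⊢
      linarith
    filter_upwards [hsmall, eventually_gt_atTop 0] with N hNρ hN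
    have hN' : (0 : ℝ) < N := mod_cast hN
    have hlow := mul_rpow_le_deriv_sineSeries_sub hA0 hω0 hA hA1 he hκ hc.le hp hωe hAe hN
    have hup := hC (1 / (κ * N)) ⟨by positivity, hNρ⟩
    rw [abs_sub_comm] at hup
    have hx : (1 / (κ * N)) ^ (α - 1) = κ ^ (1 - α) * (N : ℝ) ^ (1 - α) := by
      rw [one_div, Real.inv_rpow (by positivity), ← Real.rpow_neg (by positivity), neg_sub,
        Real.mul_rpow hκ.le hN'.le]
    rw [le_div_iff₀ (by positivity)]
    calc (N : ℝ) ^ (α - p) * (c * κ * 4 ^ (-p))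
        = c * κ * 4 ^ (-p) * (N : ℝ) ^ (1 - p) * (N : ℝ) ^ (α - 1) := by
          rw [mul_assoc _ (_ ^ _), ← Real.rpow_add hN']; ring_nf
      _ ≤ C * (κ ^ (1 - α) * (N : ℝ) ^ (1 - α)) * (N : ℝ) ^ (α - 1) := by
          grw [hlow, le_abs_self (_ - _), hup, hx]
      _ = C * κ ^ (1 - α) := by
          rw [← mul_assoc, mul_assoc, ← Real.rpow_add hN']; simp
  have htop : Tendsto (fun N : ℕ => (N : ℝ) ^ (α - p)) atTop atTop :=
    (tendsto_rpow_atTop (sub_pos.2 hpα)).comp tendsto_natCast_atTop_atTop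
  obtain ⟨N, hN, hN'⟩ := (hbound.and (htop.eventually_gt_atTop _)).exists
  exact hN'.not_ge hN

end Irregularity

section FractionalLaplacian

variable {s p ε w x T : ℝ} {u : ℝ → ℝ}

theorem integrableOn_inv_abs_rpow (hp : 1 < p) (hε : 0 < ε) :
    IntegrableOn (fun t : ℝ => (|t| ^ p)⁻¹) {t | ε < |t|} := by
  have hm : MeasurableSet {t : ℝ | ε < |t|} := measurableSet_lt measurable_const (by fun_prop)
  have hIoi : Integrable ((Ioi ε).indicator fun t : ℝ => t ^ (-p)) :=
    (integrable_indicator_iff measurableSet_Ioi).2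
      (integrableOn_Ioi_rpow_of_lt (neg_lt_neg hp) hε)
  have hrad := (integrable_fun_norm_addHaar (E := ℝ) volume
    (f := (Ioi ε).indicator fun t => t ^ (-p))).2 (by simpa using hIoi.integrableOn)
  refine (integrable_indicator_iff hm).1 (hrad.congr (.of_forall fun t => ?_))
  simp only [indicator, mem_Ioi, mem_ofPred_eq, Real.norm_eq_abs, Real.rpow_neg (abs_nonneg t)]

theorem integrable_one_sub_cos_div (hs0 : 0 < s) (hs1 : s < 1) :
    Integrable fun t : ℝ => (1 - Real.cos (w * t)) / |t| ^ (1 + 2 * s) := by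
  have hnonneg : ∀ t : ℝ, 0 ≤ (1 - Real.cos (w * t)) / |t| ^ (1 + 2 * s) := fun t =>
    div_nonneg (sub_nonneg.2 (Real.cos_le_one _)) (by positivity)
  have hmeas : Measurable fun t : ℝ => (1 - Real.cos (w * t)) / |t| ^ (1 + 2 * s) := by fun_prop
  have hnear : IntegrableOn (fun t : ℝ => (1 - Real.cos (w * t)) / |t| ^ (1 + 2 * s))
      (Icc (-1) 1) := by
    have hpow : IntervalIntegrable (fun t : ℝ => |t| ^ (1 - 2 * s)) volume (-1) 1 :=
      intervalIntegrable_of_even (by simp) fun t ht =>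
        (intervalIntegral.intervalIntegrable_rpow' (r := 1 - 2 * s) (by linarith)).congr
          fun y hy => by
            rw [uIoc_of_le ht.le] at hy
            simp only [abs_of_pos hy.1]
    rw [intervalIntegrable_iff_integrableOn_Icc_of_le (by norm_num)] at hpow
    refine (hpow.const_mul (w ^ 2 / 2)).mono' hmeas.aestronglyMeasurable (.of_forall fun t => ?_)
    rw [Real.norm_of_nonneg (hnonneg t)]
    rcases eq_or_ne t 0 with rfl | ht
    · simp only [mul_zero, Real.cos_zero, sub_self, zero_div]; positivity
    · have ht0 : 0 < |t| := abs_pos.2 ht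
      rw [div_le_iff₀ (by positivity), mul_assoc, ← Real.rpow_add ht0,
        show 1 - 2 * s + (1 + 2 * s) = (2 : ℕ) by push_cast; ring, Real.rpow_natCast, sq_abs]
      linarith [Real.one_sub_sq_div_two_le_cos (x := w * t)]
  have hfar : IntegrableOn (fun t : ℝ => (1 - Real.cos (w * t)) / |t| ^ (1 + 2 * s))
      {t | 1 < |t|} := by
    refine ((integrableOn_inv_abs_rpow (p := 1 + 2 * s) (by linarith) one_pos).const_mul 2).mono'
      hmeas.aestronglyMeasurable (.of_forall fun t => ?_)
    rw [Real.norm_of_nonneg (hnonneg t), div_eq_mul_inv]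
    gcongr
    linarith [Real.neg_one_le_cos (w * t)]
  rw [← integrableOn_univ]
  refine (hnear.union hfar).mono_set fun t _ => ?_
  rw [mem_union, mem_Icc, ← abs_le]
  exact le_or_gt |t| 1

theorem integral_one_sub_cos_div (hw : 0 < w) :
    ∫ t : ℝ, (1 - Real.cos (w * t)) / |t| ^ (1 + 2 * s)
      = w ^ (2 * s) * ∫ t : ℝ, (1 - Real.cos t) / |t| ^ (1 + 2 * s) := by
  have hscale : ∀ t : ℝ, (1 - Real.cos (w * t)) / |t| ^ (1 + 2 * s)
      = w ^ (1 + 2 * s) * ((1 - Real.cos (w * t)) / |w * t| ^ (1 + 2 * s)) := fun t => by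
    rw [abs_mul, abs_of_pos hw, Real.mul_rpow hw.le (abs_nonneg t), mul_div_assoc',
      mul_div_mul_left _ _ (by positivity)]
  simp only [hscale, integral_const_mul]
  rw [Measure.integral_comp_mul_left (fun t : ℝ => (1 - Real.cos t) / |t| ^ (1 + 2 * s)) w,
    smul_eq_mul, abs_of_pos (by positivity), Real.rpow_add hw, Real.rpow_one]
  field_simp

theorem setIntegral_sub_div_comp {φ : ℝ → ℝ} (hφ : MeasurePreserving φ)
    (hφe : MeasurableEmbedding φ) (hφx : ∀ t, |φ t - x| = |t|) :
    ∫ y in {y | ε < |y - x|}, (u x - u y) / |x - y| ^ (1 + 2 * s)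
      = ∫ t in {t | ε < |t|}, (u x - u (φ t)) / |t| ^ (1 + 2 * s) := by
  rw [← hφ.setIntegral_preimage_emb hφe]
  simp only [preimage_ofPred_eq, abs_sub_comm x, hφx]

theorem integrableOn_div_abs_rpow {v : ℝ → ℝ} (hv : Measurable v) (hT : ∀ t, |v t| ≤ T)
    (hp : 1 < p) (hε : 0 < ε) : IntegrableOn (fun t => v t / |t| ^ p) {t | ε < |t|} := by
  refine ((integrableOn_inv_abs_rpow hp hε).const_mul T).mono'
    (by fun_prop : Measurable _).aestronglyMeasurable (.of_forall fun t => ?_)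
  have hpos : (0 : ℝ) ≤ |t| ^ p := by positivity
  rw [div_eq_mul_inv, norm_mul, norm_inv, Real.norm_of_nonneg hpos]
  gcongr
  exact hT t

theorem aecover_lt_abs : AECover (volume : Measure ℝ) (𝓝[>] 0) fun ε : ℝ => {t | ε < |t|} where
  ae_eventually_mem := by
    filter_upwards [Measure.ae_ne volume 0] with t ht
    exact nhdsWithin_le_nhds (eventually_lt_nhds (abs_pos.2 ht))
  measurableSet _ := measurableSet_lt measurable_const (by fun_prop)

theorem HasFracLapAt.of_integrable (hu : Measurable u) (hT : ∀ y, |u y| ≤ T) (hs : 0 < s)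
    (hint : Integrable fun t => (2 * u x - u (x + t) - u (x - t)) / |t| ^ (1 + 2 * s)) :
    HasFracLapAt s u x (fracLapCoef s *
      (2⁻¹ * ∫ t, (2 * u x - u (x + t) - u (x - t)) / |t| ^ (1 + 2 * s))) := by
  have hdiff : ∀ {φ : ℝ → ℝ}, Measurable φ → ∀ ε > 0,
      IntegrableOn (fun t => (u x - u (φ t)) / |t| ^ (1 + 2 * s)) {t | ε < |t|} :=
    fun {φ} hφ ε hε => integrableOn_div_abs_rpow (T := 2 * T) (by fun_prop)
      (fun t => (abs_sub _ _).trans (by linarith [hT x, hT (φ t)])) (by linarith) hε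
  have hadd : Measurable fun t => x + t := by fun_prop
  have hsub : Measurable fun t => x - t := by fun_prop
  refine ⟨fun ε hε => ?_, .const_mul _ ?_⟩
  · simpa [preimage, Function.comp_def, abs_sub_comm x] using
      ((Measure.measurePreserving_sub_left volume x).integrableOn_comp_preimage
        (measurableEmbedding_subLeft x)).2 (hdiff hsub ε hε)
  refine ((aecover_lt_abs.integral_tendsto_of_countably_generated hint).const_mul 2⁻¹).congr' ?_
  filter_upwards [self_mem_nhdsWithin] with ε hε
  have hright := setIntegral_sub_div_comp (u := u) (s := s) (ε := ε)
    (measurePreserving_add_left volume x) (measurableEmbedding_addLeft x)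
    fun t => by rw [add_sub_cancel_left]
  have hleft := setIntegral_sub_div_comp (u := u) (s := s) (ε := ε)
    (Measure.measurePreserving_sub_left volume x) (measurableEmbedding_subLeft x)
    fun t => by rw [sub_sub_cancel_left, abs_neg]
  have hsplit : ∀ t, (2 * u x - u (x + t) - u (x - t)) / |t| ^ (1 + 2 * s)
      = (u x - u (x + t)) / |t| ^ (1 + 2 * s) + (u x - u (x - t)) / |t| ^ (1 + 2 * s) :=
    fun t => by ring
  simp only [hsplit]
  rw [integral_add (hdiff hadd ε hε) (hdiff hsub ε hε), ← hright, ← hleft]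
  ring

theorem integrable_of_hasSum_of_summable_integral_norm {α ι : Type*} [MeasurableSpace α]
    [Countable ι] {μ : Measure α} {F : ι → α → ℝ} {f : α → ℝ} (hF : ∀ i, Integrable (F i) μ)
    (hF_sum : Summable fun i => ∫ a, ‖F i a‖ ∂μ) (hf : AEStronglyMeasurable f μ)
    (hFf : ∀ a, HasSum (F · a) (f a)) : Integrable f μ := by
  refine ⟨hf, ?_⟩
  calc ∫⁻ a, ‖f a‖ₑ ∂μ ≤ ∫⁻ a, ∑' i, ‖F i a‖ₑ ∂μ :=
        lintegral_mono fun a => (hFf a).tsum_eq ▸ enorm_tsum_le_tsum_enorm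
    _ = ∑' i, ENNReal.ofReal (∫ a, ‖F i a‖ ∂μ) := by
        rw [lintegral_tsum fun i => (hF i).1.enorm]
        simp only [ofReal_integral_norm_eq_lintegral_enorm (hF _)]
    _ < ⊤ := hF_sum.tsum_ofReal_lt_top

variable {ι : Type*} {A ω : ι → ℝ}

theorem hasSum_second_difference_sineSeries (hA : Summable A) (t : ℝ) :
    HasSum (fun i => 2 * (A i * Real.sin (ω i * x)) * (1 - Real.cos (ω i * t)))
      (2 * sineSeries A ω x - sineSeries A ω (x + t) - sineSeries A ω (x - t)) := by
  have hsum : ∀ y, HasSum (fun i => A i * Real.sin (ω i * y)) (sineSeries A ω y) := fun y =>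
    (summable_mul_sin hA).hasSum
  refine ((((hsum x).mul_left 2).sub (hsum (x + t))).sub (hsum (x - t))).congr_fun fun i => ?_
  rw [mul_add (ω i), mul_sub (ω i), Real.sin_add, Real.sin_sub]
  ring

theorem hasFracLapAt_sineSeries [Countable ι] (hs0 : 0 < s) (hs1 : s < 1) (hω : ∀ i, 0 < ω i)
    (hA : Summable A) (hAs : Summable fun i => A i * ω i ^ (2 * s)) :
    HasFracLapAt s (sineSeries A ω) x
      (fracLapCoef s * (∫ t : ℝ, (1 - Real.cos t) / |t| ^ (1 + 2 * s))
        * sineSeries (fun i => A i * ω i ^ (2 * s)) ω x) := by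
  set J := ∫ t : ℝ, (1 - Real.cos t) / |t| ^ (1 + 2 * s)
  set F : ι → ℝ → ℝ := fun i t =>
    2 * (A i * Real.sin (ω i * x)) * ((1 - Real.cos (ω i * t)) / |t| ^ (1 + 2 * s))
  have hF : ∀ i, Integrable (F i) := fun i => (integrable_one_sub_cos_div hs0 hs1).const_mul _
  have hF_integral : ∀ i, ∫ t, F i t = 2 * J * (A i * ω i ^ (2 * s) * Real.sin (ω i * x)) :=
    fun i => by
      rw [integral_const_mul, integral_one_sub_cos_div (hω i)]; ring
  have hF_sum : Summable fun i => ∫ t, ‖F i t‖ := by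
    refine ((summable_mul_sin (ω := ω) (x := x) hAs).abs.mul_left (2 * J)).congr fun i => ?_
    have hpow := Real.rpow_nonneg (hω i).le (2 * s)
    have hnorm : ∀ t, ‖F i t‖
        = 2 * |A i * Real.sin (ω i * x)| * ((1 - Real.cos (ω i * t)) / |t| ^ (1 + 2 * s)) :=
      fun t => by
        rw [norm_mul, norm_mul, Real.norm_of_nonneg zero_le_two, Real.norm_of_nonneg
          (div_nonneg (sub_nonneg.2 (Real.cos_le_one _)) (by positivity)), Real.norm_eq_abs]
    simp only [hnorm, integral_const_mul, integral_one_sub_cos_div (hω i)]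
    rw [mul_right_comm (A i), abs_mul (A i * _), abs_of_nonneg hpow]
    ring
  have hD : ∀ t, HasSum (F · t) ((2 * sineSeries A ω x - sineSeries A ω (x + t)
      - sineSeries A ω (x - t)) / |t| ^ (1 + 2 * s)) := fun t => by
    simpa only [F, mul_div_assoc] using
      (hasSum_second_difference_sineSeries hA t).div_const (|t| ^ (1 + 2 * s))
  have hmeas := (continuous_sineSeries (ω := ω) hA).measurable
  have hlap := HasFracLapAt.of_integrable (x := x) hmeas (fun y => abs_sineSeries_le hA) hs0
    (integrable_of_hasSum_of_summable_integral_norm hF hF_sum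
      (by fun_prop : Measurable _).aestronglyMeasurable hD)
  have hint := hasSum_integral_of_summable_integral_norm hF hF_sum
  simp only [fun t => (hD t).tsum_eq, hF_integral] at hint
  rw [hint.unique (((summable_mul_sin hAs).hasSum).mul_left (2 * J))] at hlap
  convert hlap using 1
  rw [sineSeries]
  ring

end FractionalLaplacian

section OddHarmonics

variable {ι : Type*} {a b h p q t x y : ℝ}

theorem summable_odd_rpow (hp : 0 < p) : Summable fun k : ℕ => (2 * k + 1 : ℝ) ^ (-(1 + p)) := by
  have hinj : Function.Injective fun k : ℕ => 2 * k + 1 := fun a b h => by simpa using h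
  simpa [Function.comp_def] using
    (Real.summable_nat_rpow.2 (by linarith : -(1 + p) < -1)).comp_injective hinj

theorem hasSum_exp_neg_odd_mul {w : ℂ} (hw : 0 < w.re) :
    HasSum (fun k : ℕ => Complex.exp (-((2 * k + 1) * w))) (2 * Complex.sinh w)⁻¹ := by
  have hnorm : ‖Complex.exp (-(2 * w))‖ < 1 := by
    rw [Complex.norm_exp, Real.exp_lt_one_iff]
    simpa using hw
  have hsinh : (2 * Complex.sinh w)⁻¹
      = Complex.exp (-w) * (1 - Complex.exp (-(2 * w)))⁻¹ := by
    have hfactor : Complex.exp w * (1 - Complex.exp (-(2 * w))) = 2 * Complex.sinh w := by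
      rw [mul_sub, mul_one, ← Complex.exp_add, Complex.two_sinh]
      ring_nf
    rw [← hfactor, mul_inv, Complex.exp_neg w]
  rw [hsinh]
  refine ((hasSum_geometric_of_norm_lt_one hnorm).mul_left _).congr_fun fun k => ?_
  rw [← Complex.exp_nat_mul, ← Complex.exp_add]
  ring_nf

theorem hasSum_exp_mul_sin_odd (ht : 0 < t) :
    HasSum (fun k : ℕ => Real.sin ((2 * k + 1) * x) * Real.exp (-(2 * k + 1) * t))
      (Real.cosh t / 2 * (Real.sin x / (Real.sinh t ^ 2 + Real.sin x ^ 2))) := by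
  set w : ℂ := t - x * Complex.I with hw
  have hsinh : Complex.sinh w
      = ⟨Real.sinh t * Real.cos x, -(Real.cosh t * Real.sin x)⟩ := by
    rw [Complex.mk_eq_add_mul_I, hw, Complex.sinh_sub, Complex.sinh_mul_I, Complex.cosh_mul_I]
    push_cast
    ring
  have hnormSq : Complex.normSq (Complex.sinh w) = Real.sinh t ^ 2 + Real.sin x ^ 2 := by
    rw [hsinh, Complex.normSq_mk]
    linear_combination Real.sin x ^ 2 * Real.cosh_sq t + Real.sinh t ^ 2 * Real.sin_sq_add_cos_sq x
  convert Complex.hasSum_im (hasSum_exp_neg_odd_mul (w := w) (by simpa [hw] using ht)) using 1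
  · funext k
    have hexp : Complex.exp (-((2 * k + 1) * w))
        = (Real.exp (-(2 * k + 1) * t) : ℝ) * Complex.exp (((2 * k + 1) * x : ℝ) * Complex.I) := by
      rw [Complex.ofReal_exp, ← Complex.exp_add, hw]
      push_cast
      ring_nf
    rw [hexp, Complex.im_ofReal_mul, Complex.exp_ofReal_mul_I_im, mul_comm]
  · have him : ((2 * Complex.sinh w)⁻¹).im = 2⁻¹ * (Complex.sinh w)⁻¹.im := by
      rw [mul_inv, ← Complex.im_ofReal_mul]; norm_num
    rw [him, Complex.inv_im, hnormSq, hsinh]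
    ring

theorem abs_div_sq_add_sq_sub_le (hh : 0 < h) (hq0 : 0 ≤ q) (hq1 : q ≤ 1) :
    |a / (h ^ 2 + a ^ 2) - b / (h ^ 2 + b ^ 2)| ≤ h ^ (-(1 + q)) * |a - b| ^ q := by
  set X := |a / (h ^ 2 + a ^ 2) - b / (h ^ 2 + b ^ 2)|
  have hbound : ∀ c, |c / (h ^ 2 + c ^ 2)| ≤ h⁻¹ / 2 := fun c => by
    have hden : 0 < h ^ 2 + c ^ 2 := by positivity
    rw [abs_div, abs_of_pos hden, inv_eq_one_div, div_div, div_le_div_iff₀ hden (by positivity)]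
    nlinarith [sq_nonneg (h - |c|), sq_abs c]
  have hX : X ≤ h⁻¹ := (abs_sub _ _).trans (by linarith [hbound a, hbound b])
  have hlip : X ≤ (h ^ 2)⁻¹ * |a - b| := by
    have hfactor : a / (h ^ 2 + a ^ 2) - b / (h ^ 2 + b ^ 2)
        = (h ^ 2 - a * b) / ((h ^ 2 + a ^ 2) * (h ^ 2 + b ^ 2)) * (a - b) := by
      field_simp; ring
    have hden : 0 < (h ^ 2 + a ^ 2) * (h ^ 2 + b ^ 2) := by positivity
    have hnum : |h ^ 2 - a * b| * h ^ 2 ≤ (h ^ 2 + a ^ 2) * (h ^ 2 + b ^ 2) := by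
      have hab : |h ^ 2 - a * b| ≤ h ^ 2 + (a ^ 2 + b ^ 2) := by
        rw [abs_le]
        constructor <;> nlinarith [sq_nonneg (a + b), sq_nonneg (a - b), sq_nonneg h]
      grw [hab]
      nlinarith [mul_nonneg (sq_nonneg a) (sq_nonneg b)]
    simp only [X, hfactor]
    rw [abs_mul, abs_div, abs_of_pos hden]
    gcongr
    rwa [inv_eq_one_div, div_le_div_iff₀ hden (by positivity), one_mul]
  have hX0 : 0 ≤ X := abs_nonneg _
  calc X = X ^ (1 - q) * X ^ q := by
        rw [← Real.rpow_add_of_nonneg hX0 (sub_nonneg.2 hq1) hq0, sub_add_cancel, Real.rpow_one]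
    _ ≤ h⁻¹ ^ (1 - q) * ((h ^ 2)⁻¹ * |a - b|) ^ q := by
        have := sub_nonneg.2 hq1
        gcongr
    _ = h ^ (-(1 + q)) * |a - b| ^ q := by
        rw [Real.mul_rpow (by positivity) (abs_nonneg _), ← mul_assoc]
        congr 1
        rw [← Real.rpow_natCast, ← Real.rpow_neg hh.le, ← Real.rpow_mul hh.le, ← Real.rpow_neg_one,
          ← Real.rpow_mul hh.le, ← Real.rpow_add hh]
        congr 1
        push_cast
        ring

theorem hasSum_integral_rpow_mul [Countable ι] {c ω : ι → ℝ} {G : ℝ → ℝ} (hω : ∀ i, 0 < ω i)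
    (hp : 0 < p) (hc : Summable fun i => c i * ω i ^ (-p))
    (hG : ∀ t > 0, HasSum (fun i => c i * Real.exp (-ω i * t)) (G t)) :
    HasSum (fun i => Real.Gamma p * (c i * ω i ^ (-p))) (∫ t in Ioi 0, t ^ (p - 1) * G t) := by
  have hnorm : Summable fun i => ‖(c i : ℂ)‖ / ω i ^ (p : ℂ).re :=
    hc.abs.congr fun i => by
      rw [Complex.ofReal_re, Complex.norm_real, abs_mul, Real.rpow_neg (hω i).le, div_eq_mul_inv,
        abs_of_pos (inv_pos.2 (Real.rpow_pos_of_pos (hω i) p)), Real.norm_eq_abs]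
  have hmellin := hasSum_mellin (F := fun t => (G t : ℂ)) (fun i => .inr (hω i))
    (by simpa using hp) (fun t ht => mod_cast Complex.hasSum_ofReal.2 (hG t ht)) hnorm
  have hcoef : ∀ i, Complex.Gamma p * c i / ω i ^ (p : ℂ)
      = ((Real.Gamma p * (c i * ω i ^ (-p)) : ℝ) : ℂ) := fun i => by
    rw [Complex.Gamma_ofReal, ← Complex.ofReal_cpow (hω i).le, Real.rpow_neg (hω i).le]
    push_cast
    ring
  have hint : mellin (fun t => (G t : ℂ)) p = ((∫ t in Ioi 0, t ^ (p - 1) * G t : ℝ) : ℂ) := by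
    rw [mellin, ← integral_complex_ofReal]
    refine setIntegral_congr_fun measurableSet_Ioi fun t ht => ?_
    simp only [smul_eq_mul, Complex.ofReal_mul, Complex.ofReal_cpow (mem_Ioi.1 ht).le,
      Complex.ofReal_sub, Complex.ofReal_one]
  simpa only [hcoef, hint, Complex.hasSum_ofReal] using hmellin

theorem mul_cosh_le_one_add_mul_sinh (ht : 0 ≤ t) :
    t * Real.cosh t ≤ (1 + t) * Real.sinh t := by
  have hcosh : Real.cosh t = Real.sinh t + Real.exp (-t) := by
    rw [← Real.cosh_sub_sinh]; ring
  have hsinh := Real.self_le_sinh_iff.2 ht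
  nlinarith [Real.exp_le_one_iff.2 (neg_nonpos.2 ht)]

theorem mul_exp_half_le_two_mul_sinh (ht : 0 ≤ t) :
    t * Real.exp (t / 2) ≤ 2 * Real.sinh t := by
  have hsinh : t / 2 ≤ Real.sinh (t / 2) := Real.self_le_sinh_iff.2 (by positivity)
  have hcosh : Real.exp (t / 2) ≤ 2 * Real.cosh (t / 2) := by
    rw [Real.cosh_eq]; linarith [Real.exp_pos (-(t / 2))]
  calc t * Real.exp (t / 2) = 2 * (t / 2 * Real.exp (t / 2)) := by ring
    _ ≤ 2 * (Real.sinh (t / 2) * (2 * Real.cosh (t / 2))) := by gcongr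
    _ = 2 * Real.sinh (2 * (t / 2)) := by rw [Real.sinh_two_mul]; ring
    _ = 2 * Real.sinh t := by ring_nf

theorem integrableOn_rpow_mul_cosh_mul_sinh_rpow (hq : 0 < q) (hqp : q < p) :
    IntegrableOn (fun t => t ^ p * (Real.cosh t / 2 * Real.sinh t ^ (-(1 + q)))) (Ioi 0) := by
  have hgamma : ∀ r : ℝ, -1 < r →
      IntegrableOn (fun t => t ^ r * Real.exp (-(q / 2) * t)) (Ioi 0) := fun r hr => by
    simpa using integrableOn_rpow_mul_exp_neg_mul_rpow hr one_pos (half_pos hq)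
  have hmaj := ((hgamma (p - q - 1) (by linarith)).add
    (hgamma (p - q) (by linarith))).const_mul ((1 / 2) ^ (-q) / 2)
  refine Integrable.mono' hmaj (by fun_prop : Measurable _).aestronglyMeasurable
    ((ae_restrict_iff' measurableSet_Ioi).2 (.of_forall fun t ht => ?_))
  have ht : 0 < t := ht
  have hsinh : 0 < Real.sinh t := Real.sinh_pos_iff.2 ht
  have hcosh : Real.cosh t ≤ (1 + t) / t * Real.sinh t := by
    rw [div_mul_eq_mul_div, le_div_iff₀ ht, mul_comm]
    exact mul_cosh_le_one_add_mul_sinh ht.le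
  have hrpow : Real.sinh t ^ (-q) ≤ (1 / 2) ^ (-q) * t ^ (-q) * Real.exp (-(q / 2) * t) := by
    calc Real.sinh t ^ (-q) ≤ (1 / 2 * t * Real.exp (t / 2)) ^ (-q) :=
          Real.rpow_le_rpow_of_nonpos (by positivity)
            (by linarith [mul_exp_half_le_two_mul_sinh ht.le]) (neg_nonpos.2 hq.le)
      _ = _ := by
          rw [Real.mul_rpow (by positivity) (by positivity), Real.mul_rpow (by norm_num) ht.le,
            ← Real.exp_mul]
          ring_nf
  rw [Real.norm_of_nonneg (by positivity)]
  calc t ^ p * (Real.cosh t / 2 * Real.sinh t ^ (-(1 + q)))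
      ≤ t ^ p * ((1 + t) / t * Real.sinh t / 2 * Real.sinh t ^ (-(1 + q))) := by gcongr
    _ = t ^ p * ((1 + t) / t / 2) * Real.sinh t ^ (-q) := by
        rw [show -q = -(1 + q) + 1 by ring, Real.rpow_add_one hsinh.ne']; ring
    _ ≤ t ^ p * ((1 + t) / t / 2) * ((1 / 2) ^ (-q) * t ^ (-q) * Real.exp (-(q / 2) * t)) := by
        gcongr
    _ = _ := by
        simp only [Pi.add_apply]
        rw [show p - q = p - q - 1 + 1 by ring, Real.rpow_add_one ht.ne', add_sub_cancel_right,
          sub_eq_add_neg _ (1 : ℝ), Real.rpow_add ht, sub_eq_add_neg, Real.rpow_add ht,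
          Real.rpow_neg_one]
        field_simp

/-- The sine series `∑ k, (2 * k + 1) ^ (-(1 + p)) * sin ((2 * k + 1) * x)` over odd frequencies,
the building block of the solution. -/
noncomputable def oddSineSeries (p : ℝ) : ℝ → ℝ :=
  sineSeries (fun k : ℕ => (2 * k + 1 : ℝ) ^ (-(1 + p))) fun k => 2 * k + 1

theorem Gamma_mul_oddSineSeries_sub (hp : 0 < p) :
    Real.Gamma (1 + p) * (oddSineSeries p x - oddSineSeries p y)
      = ∫ t in Ioi 0, t ^ p * (Real.cosh t / 2 * (Real.sin x / (Real.sinh t ^ 2 + Real.sin x ^ 2)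
          - Real.sin y / (Real.sinh t ^ 2 + Real.sin y ^ 2))) := by
  have hsummable := fun z => summable_mul_sin (ω := fun k : ℕ => (2 * k + 1 : ℝ)) (x := z)
    (summable_odd_rpow hp)
  have hdiff := (hsummable x).hasSum.sub (hsummable y).hasSum
  have hcoef : ∀ k : ℕ,
      (2 * k + 1 : ℝ) ^ (-(1 + p)) * Real.sin ((2 * k + 1) * x)
        - (2 * k + 1 : ℝ) ^ (-(1 + p)) * Real.sin ((2 * k + 1) * y)
      = (Real.sin ((2 * k + 1) * x) - Real.sin ((2 * k + 1) * y))
        * (2 * k + 1 : ℝ) ^ (-(1 + p)) := fun k => by ring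
  simp only [hcoef] at hdiff
  have hlaplace := hasSum_integral_rpow_mul (by intro k; positivity) (by positivity) hdiff.summable
    fun t ht => ((hasSum_exp_mul_sin_odd ht (x := x)).sub
      (hasSum_exp_mul_sin_odd ht (x := y))).congr_fun fun k => by ring
  simpa only [oddSineSeries, sineSeries, add_sub_cancel_left, ← mul_sub] using
    (hdiff.mul_left _).unique hlaplace

theorem exists_abs_oddSineSeries_sub_le (hq0 : 0 < q) (hq1 : q ≤ 1) (hqp : q < p) :
    ∃ K, 0 ≤ K ∧ ∀ x y,
      |oddSineSeries p x - oddSineSeries p y| ≤ K * |Real.sin x - Real.sin y| ^ q := by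
  have hp : 0 < p := hq0.trans hqp
  have hΓ : 0 < Real.Gamma (1 + p) := Real.Gamma_pos_of_pos (by positivity)
  have hW := integrableOn_rpow_mul_cosh_mul_sinh_rpow hq0 hqp
  set W : ℝ → ℝ := fun t => t ^ p * (Real.cosh t / 2 * Real.sinh t ^ (-(1 + q)))
  have hW0 : ∀ t ∈ Ioi (0 : ℝ), 0 ≤ W t := fun t ht => by
    have := Real.sinh_pos_iff.2 ht
    have := mem_Ioi.1 ht
    positivity
  refine ⟨(∫ t in Ioi 0, W t) / Real.Gamma (1 + p),
    div_nonneg (setIntegral_nonneg measurableSet_Ioi hW0) hΓ.le, fun x y => ?_⟩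
  rw [div_mul_eq_mul_div, le_div_iff₀' hΓ, ← abs_of_pos hΓ, ← abs_mul,
    Gamma_mul_oddSineSeries_sub hp, ← integral_mul_const]
  refine norm_integral_le_of_norm_le (G := ℝ) (hW.mul_const _)
    ((ae_restrict_iff' measurableSet_Ioi).2 (.of_forall fun t ht => ?_))
  have ht : 0 < t := ht
  have hcosh := Real.cosh_pos t
  rw [Real.norm_eq_abs, abs_mul, abs_mul, abs_of_pos (Real.rpow_pos_of_pos ht p),
    abs_of_pos (half_pos hcosh)]
  grw [abs_div_sq_add_sq_sub_le (Real.sinh_pos_iff.2 ht) hq0.le hq1]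
  exact le_of_eq (by ring)

end OddHarmonics

section Profile

variable {c : ℕ → ℝ} {p q x y : ℝ}

theorem exists_pos_tsum_mul_le_one {B : ℕ → ℝ} (hB : ∀ n, 0 ≤ B n) :
    ∃ c : ℕ → ℝ, (∀ n, 0 < c n) ∧ (Summable fun n => c n * B n) ∧ ∑' n, c n * B n ≤ 1 := by
  obtain ⟨ε, hε, S, hS, hS1⟩ := posSumOfEncodable one_pos ℕ
  have hden : ∀ n, 0 < 1 + B n := fun n => by linarith [hB n]
  have hle : ∀ n, ε n / (1 + B n) * B n ≤ ε n := fun n => by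
    rw [div_mul_eq_mul_div, div_le_iff₀ (hden n)]
    nlinarith [hε n]
  have hsum : Summable fun n => ε n / (1 + B n) * B n :=
    hS.summable.of_nonneg_of_le
      (fun n => mul_nonneg (div_pos (hε n) (hden n)).le (hB n)) hle
  exact ⟨fun n => ε n / (1 + B n), fun n => div_pos (hε n) (hden n), hsum,
    (hsum.tsum_le_tsum hle hS.summable).trans (hS.tsum_eq.trans_le hS1)⟩

theorem abs_sub_le_of_hasSum_mul {F : ℕ → ℝ → ℝ} {S : ℝ → ℝ} {K : ℕ → ℝ} {d : ℝ}
    (hc : ∀ n, 0 ≤ c n) (hd : 0 ≤ d) (hS : ∀ z, HasSum (fun n => c n * F n z) (S z))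
    (hF : ∀ n, |F n x - F n y| ≤ K n * d) (hK : Summable fun n => c n * K n)
    (hK1 : ∑' n, c n * K n ≤ 1) : |S x - S y| ≤ d := by
  have hterm : ∀ n, ‖c n * F n x - c n * F n y‖ ≤ c n * K n * d := fun n => by
    rw [← mul_sub, Real.norm_eq_abs, abs_mul, abs_of_nonneg (hc n), mul_assoc]
    exact mul_le_mul_of_nonneg_left (hF n) (hc n)
  calc |S x - S y| = ‖∑' n, (c n * F n x - c n * F n y)‖ := by
        rw [((hS x).sub (hS y)).tsum_eq, Real.norm_eq_abs]
    _ ≤ (∑' n, c n * K n) * d := tsum_of_norm_bounded (hK.hasSum.mul_right d) hterm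
    _ ≤ d := mul_le_of_le_one_left hd hK1

/-- The odd frequencies `2 * k + 1` indexed by pairs `(n, k)`: the copy `n` of each frequency
carries the `n`-th term of the superposition `oddSineWeight`. -/
def oddFreq (i : ℕ × ℕ) : ℝ := 2 * i.2 + 1

/-- The coefficients, against the frequencies `oddFreq`, of the superposition with weights `c n` of
the odd sine series of exponents `p + 1 / (n + 1)`. -/
noncomputable def oddSineWeight (c : ℕ → ℝ) (p : ℝ) (i : ℕ × ℕ) : ℝ :=
  c i.1 * oddFreq i ^ (-(1 + (p + 1 / (i.1 + 1))))

/-- The coefficients `oddSineWeight c p` with a dominant term added at the lowest frequency; the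
solution is their sine series for `p = 2 * s + β`, rescaled to period `2 * L`. -/
noncomputable def profileWeight (c : ℕ → ℝ) (p : ℝ) : ℕ × ℕ → ℝ :=
  oddSineWeight c p + Pi.single (0, 0) 2

theorem one_le_oddFreq (i : ℕ × ℕ) : 1 ≤ oddFreq i := by
  simp [oddFreq]

theorem oddFreq_pos (i : ℕ × ℕ) : 0 < oddFreq i := one_pos.trans_le (one_le_oddFreq i)

theorem oddSineWeight_nonneg (hc : ∀ n, 0 ≤ c n) (i : ℕ × ℕ) : 0 ≤ oddSineWeight c p i :=
  mul_nonneg (hc _) (Real.rpow_nonneg (oddFreq_pos i).le _)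

theorem oddSineWeight_le_profileWeight (i : ℕ × ℕ) : oddSineWeight c p i ≤ profileWeight c p i :=
  le_add_of_nonneg_right ((Pi.single_nonneg (α := fun _ => ℝ)).2 zero_le_two i)

theorem profileWeight_mul_rpow {κ : ℝ} (hκ : 0 ≤ κ) (r : ℝ) (i : ℕ × ℕ) :
    profileWeight c p i * (κ * oddFreq i) ^ r = κ ^ r * profileWeight c (p - r) i := by
  have hsingle : (Pi.single (0, 0) 2 : ℕ × ℕ → ℝ) i * oddFreq i ^ r
      = (Pi.single (0, 0) 2 : ℕ × ℕ → ℝ) i := by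
    rcases eq_or_ne i (0, 0) with rfl | hi
    · simp [oddFreq]
    · simp [hi]
  rw [Real.mul_rpow hκ (oddFreq_pos i).le, mul_left_comm, profileWeight, profileWeight,
    Pi.add_apply, Pi.add_apply, add_mul, hsingle, oddSineWeight, oddSineWeight, mul_assoc (c i.1),
    ← Real.rpow_add (oddFreq_pos i)]
  ring_nf

theorem summable_oddSineWeight (hc : ∀ n, 0 ≤ c n)
    (hcs : Summable fun n : ℕ => c n * ∑' k : ℕ, (2 * k + 1 : ℝ) ^ (-(1 + 1 / (n + 1 : ℝ))))
    (hp : 0 ≤ p) : Summable (oddSineWeight c p) := by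
  have hbase : Summable (oddSineWeight c 0) := by
    rw [summable_prod_of_nonneg (oddSineWeight_nonneg hc)]
    simp only [oddSineWeight, oddFreq, zero_add, tsum_mul_left]
    exact ⟨fun n => (summable_odd_rpow Nat.one_div_pos_of_nat).mul_left (c n), hcs⟩
  refine hbase.of_nonneg_of_le (oddSineWeight_nonneg hc) fun i => ?_
  exact mul_le_mul_of_nonneg_left
    (Real.rpow_le_rpow_of_exponent_le (one_le_oddFreq i) (by linarith)) (hc _)

theorem hasSum_sineSeries_oddSineWeight (hcp : Summable (oddSineWeight c p)) (x : ℝ) :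
    HasSum (fun n : ℕ => c n * oddSineSeries (p + 1 / (n + 1)) x)
      (sineSeries (oddSineWeight c p) oddFreq x) := by
  have hsum := summable_mul_sin (ω := oddFreq) (x := x) hcp
  refine (hsum.hasSum.prod_fiberwise fun n => (hsum.prod_factor n).hasSum).congr_fun fun n => ?_
  exact (sineSeries_const_mul (c n)).symm

theorem exists_oddSineWeight (hq0 : 0 < q) (hq1 : q ≤ 1) (hp : 1 ≤ p) :
    ∃ c : ℕ → ℝ, (∀ n, 0 < c n) ∧ (∀ r, 0 ≤ r → Summable (oddSineWeight c r)) ∧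
      (∀ x y, |sineSeries (oddSineWeight c p) oddFreq x - sineSeries (oddSineWeight c p) oddFreq y|
        ≤ |Real.sin x - Real.sin y|) ∧
      ∀ x y, |sineSeries (oddSineWeight c q) oddFreq x - sineSeries (oddSineWeight c q) oddFreq y|
        ≤ |Real.sin x - Real.sin y| ^ q := by
  have hδ : ∀ n : ℕ, 0 < 1 / (n + 1 : ℝ) := fun n => Nat.one_div_pos_of_nat
  choose K hK0 hK using fun n : ℕ => exists_abs_oddSineSeries_sub_le
    (p := p + 1 / (n + 1)) one_pos le_rfl (by linarith [hδ n])
  choose K' hK'0 hK' using fun n : ℕ => exists_abs_oddSineSeries_sub_le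
    (p := q + 1 / (n + 1)) hq0 hq1 (by linarith [hδ n])
  set Z : ℕ → ℝ := fun n => ∑' k : ℕ, (2 * k + 1 : ℝ) ^ (-(1 + 1 / (n + 1 : ℝ)))
  have hZ0 : ∀ n, 0 ≤ Z n := fun n => tsum_nonneg fun k => by positivity
  obtain ⟨c, hc, hcs, hcs1⟩ := exists_pos_tsum_mul_le_one (B := fun n => K n + K' n + Z n)
    fun n => add_nonneg (add_nonneg (hK0 n) (hK'0 n)) (hZ0 n)
  have hdom : ∀ R : ℕ → ℝ, (∀ n, 0 ≤ R n) → (∀ n, R n ≤ K n + K' n + Z n) →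
      (Summable fun n => c n * R n) ∧ ∑' n, c n * R n ≤ 1 := fun R hR0 hR => by
    have hle := fun n => mul_le_mul_of_nonneg_left (hR n) (hc n).le
    have hsum := hcs.of_nonneg_of_le (fun n => mul_nonneg (hc n).le (hR0 n)) hle
    exact ⟨hsum, (hsum.tsum_le_tsum hle hcs).trans hcs1⟩
  have hsummable : ∀ r, 0 ≤ r → Summable (oddSineWeight c r) := fun r hr =>
    summable_oddSineWeight (fun n => (hc n).le)
      (hdom Z hZ0 fun n => by linarith [hK0 n, hK'0 n]).1 hr
  obtain ⟨hcK, hcK1⟩ := hdom K hK0 fun n => by linarith [hK'0 n, hZ0 n]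
  obtain ⟨hcK', hcK'1⟩ := hdom K' hK'0 fun n => by linarith [hK0 n, hZ0 n]
  refine ⟨c, hc, hsummable, fun x y => ?_, fun x y => ?_⟩
  · exact abs_sub_le_of_hasSum_mul (fun n => (hc n).le) (abs_nonneg _)
      (hasSum_sineSeries_oddSineWeight (hsummable p (by linarith)))
      (fun n => by simpa only [Real.rpow_one] using hK n x y) hcK hcK1
  · exact abs_sub_le_of_hasSum_mul (fun n => (hc n).le) (by positivity)
      (hasSum_sineSeries_oddSineWeight (hsummable q hq0.le)) (fun n => hK' n x y) hcK' hcK'1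

theorem sineSeries_profileWeight (hcp : Summable (oddSineWeight c p)) :
    sineSeries (profileWeight c p) oddFreq x
      = sineSeries (oddSineWeight c p) oddFreq x + 2 * Real.sin x := by
  rw [profileWeight, sineSeries_add hcp (hasSum_pi_single _ _).summable, sineSeries_single]
  simp [oddFreq]

theorem exists_profileWeight (hq0 : 0 < q) (hq1 : q ≤ 1) (hp : 1 ≤ p) :
    ∃ c : ℕ → ℝ, (∀ n, 0 < c n) ∧ (∀ r, 0 ≤ r → Summable (profileWeight c r)) ∧
      ∀ x y, |sineSeries (profileWeight c q) oddFreq x - sineSeries (profileWeight c q) oddFreq y|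
        ≤ 5 * |sineSeries (profileWeight c p) oddFreq x
          - sineSeries (profileWeight c p) oddFreq y| ^ q := by
  obtain ⟨c, hc, hsum, hcp, hcq⟩ := exists_oddSineWeight hq0 hq1 hp
  refine ⟨c, hc, fun r hr => (hsum r hr).add (hasSum_pi_single _ _).summable, fun x y => ?_⟩
  simp only [sineSeries_profileWeight (hsum p (zero_le_one.trans hp)),
    sineSeries_profileWeight (hsum q hq0.le), add_sub_add_comm, ← mul_sub]
  set d := Real.sin x - Real.sin y
  set P := sineSeries (oddSineWeight c p) oddFreq x - sineSeries (oddSineWeight c p) oddFreq y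
  set Q := sineSeries (oddSineWeight c q) oddFreq x - sineSeries (oddSineWeight c q) oddFreq y
  have hd2 : |d| ≤ 2 := by
    linarith [abs_sub (Real.sin x) (Real.sin y), Real.abs_sin_le_one x, Real.abs_sin_le_one y]
  have h2d : |2 * d| = 2 * |d| := by rw [abs_mul, abs_two]
  have hlower : |d| ≤ |P + 2 * d| := by
    have := abs_sub (P + 2 * d) P
    rw [add_sub_cancel_left, h2d] at this
    linarith [hcp x y]
  calc |Q + 2 * d| ≤ |Q| + 2 * |d| := h2d ▸ abs_add_le Q (2 * d)
    _ ≤ |d| ^ q + 2 * (2 * |d| ^ q) := by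
        grw [hcq x y, ← le_two_mul_rpow (abs_nonneg d) hd2 hq0.le hq1]
    _ = 5 * |d| ^ q := by ring
    _ ≤ 5 * |P + 2 * d| ^ q := by gcongr

theorem hasFracLapAt_sineSeries_profileWeight {s κ : ℝ} (hs0 : 0 < s) (hs1 : s < 1) (hκ : 0 < κ)
    (hcp : Summable (profileWeight c p)) (hcps : Summable (profileWeight c (p - 2 * s))) :
    HasFracLapAt s (sineSeries (profileWeight c p) fun i => κ * oddFreq i) x
      (fracLapCoef s * (∫ t : ℝ, (1 - Real.cos t) / |t| ^ (1 + 2 * s)) * κ ^ (2 * s)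
        * sineSeries (profileWeight c (p - 2 * s)) oddFreq (κ * x)) := by
  have hfracLap := hasFracLapAt_sineSeries (x := x) hs0 hs1 (fun i => mul_pos hκ (oddFreq_pos i))
    hcp (by simpa only [profileWeight_mul_rpow hκ.le] using hcps.mul_left (κ ^ (2 * s)))
  simpa only [profileWeight_mul_rpow hκ.le, sineSeries_const_mul, sineSeries_comp_mul, mul_assoc]
    using hfracLap

theorem not_memCalpha_sineSeries_profileWeight {κ ε ρ : ℝ} (hc : ∀ n, 0 < c n)
    (hcp : Summable (profileWeight c p)) (hc0 : Summable (profileWeight c 0)) (hκ : 0 < κ)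
    (hp1 : 1 ≤ p) (hp3 : p < 3) (hε : 0 < ε) (hρ : 0 < ρ) :
    ¬ MemCalpha (p + ε) (Icc (-ρ) ρ) (sineSeries (profileWeight c p) fun i => κ * oddFreq i) := by
  intro hmem
  obtain ⟨α, hpα, hα⟩ := exists_between (lt_min (lt_add_of_pos_right p hε) (Nat.lt_floor_add_one p))
  obtain ⟨hαε, hαfloor⟩ := lt_min_iff.1 hα
  have hfloor : ⌊α⌋₊ ≤ ⌊p⌋₊ := Nat.le_of_lt_succ ((Nat.floor_lt (by linarith)).2 (mod_cast hαfloor))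
  have hfloor3 : (⌊p⌋₊ : ℝ) + 1 ≤ 3 := mod_cast (Nat.floor_lt (by linarith)).2 (mod_cast hp3)
  obtain ⟨n, hn⟩ := exists_nat_one_div_lt (sub_pos.2 hpα)
  have hω : ∀ i, 0 ≤ κ * oddFreq i := fun i => (mul_pos hκ (oddFreq_pos i)).le
  have hsum : ∀ j ≤ ⌊α⌋₊, Summable fun i => profileWeight c p i * (κ * oddFreq i) ^ j :=
    fun j hj => summable_mul_pow_of_le hω
      ((Nat.le_floor_iff (by linarith)).1 (hj.trans hfloor)) hcp
      (by simpa only [profileWeight_mul_rpow hκ.le, sub_self] using hc0.mul_left (κ ^ p))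
  refine not_memCalpha_sineSeries (e := fun k => (n, k)) (c := c n) (p := p + 1 / (n + 1))
    (fun i => (oddSineWeight_nonneg (fun n => (hc n).le) i).trans
      (oddSineWeight_le_profileWeight i)) hω (by linarith) (by linarith) hsum
    (Prod.mk_right_injective n) hκ (hc n) (by positivity) (by linarith) hρ
    (fun k => rfl) (fun k => oddSineWeight_le_profileWeight (n, k)) ?_
  exact hmem.mono (convex_Icc _ _) (uniqueDiffOn_Icc (by linarith)) (Metric.isBounded_Icc _ _)
    hαε.le

end Profile

theorem stmt1 (s β L : ℝ) (hs0 : 0 < s) (hs1 : s < 1) (hβ0 : 0 < β) (hβ1 : β < 1)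
    (hL : 0 < L) (h : 1 - β < 2 * s) :
    ∃ u f : ℝ → ℝ,
      Function.Periodic u (2 * L) ∧
      MemCalpha (2 * s + β) Set.univ u ∧
      MemCalpha β Set.univ f ∧
      (∀ x : ℝ, HasFracLapAt s u x (f (u x))) ∧
      (∀ ε ρ : ℝ, 0 < ε → 0 < ρ →
        ¬ MemCalpha (2 * s + β + ε) (Set.Icc (-ρ) ρ) u) := by
  have hκ : 0 < Real.pi / L := div_pos Real.pi_pos hL
  obtain ⟨c, hc, hsum, hmod⟩ := exists_profileWeight hβ0 hβ1.le (p := 2 * s + β) (by linarith)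
  set u := sineSeries (profileWeight c (2 * s + β)) fun i => Real.pi / L * oddFreq i
  have hu : MemCalpha (2 * s + β) univ u :=
    memCalpha_sineSeries (fun i => (mul_pos hκ (oddFreq_pos i)).le) (by linarith)
      (hsum _ (by linarith))
      (by simpa only [profileWeight_mul_rpow hκ.le, sub_self] using (hsum 0 le_rfl).mul_left _)
  have hper : Function.Periodic u (2 * L) := sineSeries_periodic fun i =>
    ⟨2 * i.2 + 1, by push_cast [oddFreq]; field_simp⟩
  set C := fracLapCoef s * (∫ t : ℝ, (1 - Real.cos t) / |t| ^ (1 + 2 * s)) * (Real.pi / L) ^ (2 * s)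
  set g := fun x => C * sineSeries (profileWeight c β) oddFreq (Real.pi / L * x)
  have hg : ∀ x, HasFracLapAt s u x (g x) := fun x => by
    simpa only [add_sub_cancel_left] using hasFracLapAt_sineSeries_profileWeight hs0 hs1 hκ
      (hsum (2 * s + β) (by linarith)) (by simpa only [add_sub_cancel_left] using hsum β hβ0.le)
  have hgu : ∀ x y, |g x - g y| ≤ |C| * 5 * |u x - u y| ^ β := fun x y => by
    simp only [g, u, sineSeries_comp_mul, ← mul_sub, abs_mul, mul_assoc]
    exact mul_le_mul_of_nonneg_left (hmod _ _) (abs_nonneg C)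
  obtain ⟨f, hf, hfu⟩ := exists_memCalpha_comp_eq_s1 hβ0 hβ1 (by positivity) (by positivity)
    (continuous_sineSeries (hsum _ (by linarith))) hper hgu
  exact ⟨u, f, hper, hu, hf, fun x => (hfu x).symm ▸ hg x, fun ε ρ hε hρ =>
    not_memCalpha_sineSeries_profileWeight hc (hsum _ (by linarith)) (hsum 0 le_rfl) hκ
      (by linarith) (by linarith) hε hρ⟩
end

section
/- Let 0<s<1 and 0<β<1 with 2s < 1-β, set r := 2s/(1-β), and define u:ℝ→ℝ by u(x) = -1 for x<-1, u(x) = -|x|^r for -1≤x<0, u(x) = x^r for 0≤x≤1, and u(x) = 1 for x>1. Then there exists f ∈ C^β(ℝ) such that (-Δ)^s u(x) = f(u(x)) for all x ∈ [-1/2, 1/2]. Moreover, u ∈ C^{2s/(1-β)}(ℝ), and for every ε>0, ρ>0, u does not belong to C^{2s/(1-β)+ε}([-ρ,ρ]). -/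
open MeasureTheory Filter Set

/-!
Write `v x = sgn(x) |x|^r`. Homogeneity of `v` and of the kernel shows that the singular integral of
`v`, once folded onto the half-line so that the growth of `v` at infinity cancels, is a constant
times `sgn(x) |x|^(r - 2s)`, and `r - 2s = r β` makes this a constant times `sgn(v) |v|^β`, a
`β`-Hölder function of `v`. Truncating `v` outside `[-1, 1]` only changes the numerator for
`|y| > 1`, so for `|x| ≤ 1/2` it adds a term that is Lipschitz in `x`; since
`x = sgn(u) |u|^(1/r)` with `1/r > 1`, this term is a Lipschitz function of `u`. The resulting
function of `u` on `u([-1/2, 1/2])` extends to `ℝ` by its boundary values.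

The regularity is sharp because membership in `C^α` near `0` forces `u x = O(|x|^(min α 1))`, while
`x^r` is of larger order as `x → 0⁺` when `r < α`.
-/

lemma holderOnWith_of_dist_le {X Y : Type*} [PseudoMetricSpace X] [PseudoMetricSpace Y]
    {C r : NNReal} {f : X → Y} {t : Set X}
    (h : ∀ x ∈ t, ∀ y ∈ t, dist (f x) (f y) ≤ C * dist x y ^ (r : ℝ)) : HolderOnWith C r f t := by
  intro x hx y hy
  rw [edist_nndist, edist_nndist, ← ENNReal.coe_rpow_of_nonneg _ r.coe_nonneg, ← ENNReal.coe_mul,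
    ENNReal.coe_le_coe]
  exact_mod_cast h x hx y hy

lemma holderOnWith_rpow_Ici {a : ℝ} (ha0 : 0 ≤ a) (ha1 : a ≤ 1) :
    HolderOnWith 1 a.toNNReal (fun x : ℝ => x ^ a) (Ici 0) := by
  refine holderOnWith_of_dist_le fun x hx y hy => ?_
  rw [NNReal.coe_one, one_mul, Real.coe_toNNReal a ha0]
  wlog hxy : y ≤ x generalizing x y
  · simpa only [dist_comm] using this y hy x hx (le_of_not_ge hxy)
  have hsub : x ^ a ≤ (x - y) ^ a + y ^ a := by
    simpa using Real.rpow_add_le_add_rpow (sub_nonneg.2 hxy) hy ha0 ha1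
  rw [Real.dist_eq, Real.dist_eq, abs_of_nonneg (sub_nonneg.2 hxy),
    abs_of_nonneg (sub_nonneg.2 (Real.rpow_le_rpow hy hxy ha0))]
  linarith

/-- The signed power `sgn(x) |x|^a`, the odd extension of `x ↦ x ^ a` from the half-line, which
describes the solution `u` near `0`. It is encoded by positive and negative parts so that its
Hölder and Lipschitz bounds come from those of `x ^ a` on `[0, ∞)`; for `a = 0` it is the zero
function rather than the sign. -/
noncomputable def signedPow (a x : ℝ) : ℝ := x⁺ ^ a - x⁻ ^ a

section SignedPow

variable {a b x c : ℝ}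

lemma signedPow_neg : signedPow a (-x) = -signedPow a x := by
  simp [signedPow]

lemma signedPow_zero_right : signedPow a 0 = 0 := by
  simp [signedPow]

lemma signedPow_of_nonneg (ha : a ≠ 0) (hx : 0 ≤ x) : signedPow a x = x ^ a := by
  simp [signedPow, posPart_of_nonneg hx, negPart_of_nonneg hx, Real.zero_rpow ha]

lemma signedPow_of_nonpos (ha : a ≠ 0) (hx : x ≤ 0) : signedPow a x = -|x| ^ a := by
  rw [← neg_neg x, signedPow_neg, signedPow_of_nonneg ha (neg_nonneg.2 hx), abs_neg,
    abs_of_nonneg (neg_nonneg.2 hx)]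

lemma signedPow_one_left : signedPow 1 x = x := by
  simp [signedPow]

lemma abs_signedPow (ha : a ≠ 0) : |signedPow a x| = |x| ^ a := by
  rcases le_total 0 x with hx | hx
  · rw [signedPow_of_nonneg ha hx, abs_of_nonneg hx, abs_of_nonneg (Real.rpow_nonneg hx a)]
  · rw [signedPow_of_nonpos ha hx, abs_neg, abs_of_nonneg (Real.rpow_nonneg (abs_nonneg x) a)]

lemma signedPow_mul (ha : a ≠ 0) (hc : 0 ≤ c) : signedPow a (c * x) = c ^ a * signedPow a x := by
  rcases le_total 0 x with hx | hx
  · rw [signedPow_of_nonneg ha hx, signedPow_of_nonneg ha (mul_nonneg hc hx), Real.mul_rpow hc hx]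
  · rw [signedPow_of_nonpos ha hx, signedPow_of_nonpos ha (mul_nonpos_of_nonneg_of_nonpos hc hx),
      abs_mul, abs_of_nonneg hc, Real.mul_rpow hc (abs_nonneg x), mul_neg]

lemma signedPow_signedPow (ha : a ≠ 0) (hb : b ≠ 0) :
    signedPow a (signedPow b x) = signedPow (b * a) x := by
  have hba : b * a ≠ 0 := mul_ne_zero hb ha
  wlog hx : 0 ≤ x generalizing x
  · simpa only [signedPow_neg, neg_inj] using this (x := -x) (by linarith)
  rw [signedPow_of_nonneg hb hx, signedPow_of_nonneg ha (Real.rpow_nonneg hx b),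
    signedPow_of_nonneg hba hx, Real.rpow_mul hx]

lemma signedPow_inv_signedPow (ha : a ≠ 0) : signedPow a⁻¹ (signedPow a x) = x := by
  rw [signedPow_signedPow (inv_ne_zero ha) ha, mul_inv_cancel₀ ha, signedPow_one_left]

lemma mapsTo_signedPow_Icc (ha : 0 < a) :
    MapsTo (signedPow a) (Icc (-c) c) (Icc (-c ^ a) (c ^ a)) := fun x hx => by
  rw [mem_Icc, ← abs_le, abs_signedPow ha.ne']
  exact Real.rpow_le_rpow (abs_nonneg x) (abs_le.2 hx) ha.le

lemma memHolder_signedPow (ha0 : 0 ≤ a) (ha1 : a ≤ 1) :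
    MemHolder a.toNNReal (signedPow a) := by
  have hpos : MemHolder a.toNNReal fun x : ℝ => x⁺ ^ a := by
    simpa [Function.comp_def] using ((holderOnWith_rpow_Ici ha0 ha1).comp_holderWith
      (holderWith_one.2 lipschitzWith_posPart) posPart_nonneg).memHolder
  have hneg : MemHolder a.toNNReal fun x : ℝ => x⁻ ^ a := by
    simpa [Function.comp_def] using ((holderOnWith_rpow_Ici ha0 ha1).comp_holderWith
      (holderWith_one.2 lipschitzWith_negPart) negPart_nonneg).memHolder
  convert hpos.add (hneg.smul (c := (-1 : ℝ))) using 1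
  ext x
  simp [signedPow, sub_eq_add_neg]

lemma locallyLipschitz_signedPow (ha : 1 ≤ a) : LocallyLipschitz (signedPow a) := by
  have hrpow : LocallyLipschitz fun x : ℝ => x ^ a :=
    (Real.contDiff_rpow_const_of_le (n := 1) (by exact_mod_cast ha)).locallyLipschitz
  exact (hrpow.comp lipschitzWith_posPart.locallyLipschitz).sub
    (hrpow.comp lipschitzWith_negPart.locallyLipschitz)

end SignedPow

section HolderSpace

variable {α a b x : ℝ} {Ω : Set ℝ} {f : ℝ → ℝ}

lemma memCalpha_iff_of_lt_one (hα0 : 0 < α) (hα1 : α < 1) :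
    MemCalpha α Ω f ↔
      (∃ B, ∀ x ∈ Ω, |f x| ≤ B) ∧ ∃ C : NNReal, HolderOnWith C α.toNNReal f Ω := by
  have hcont : (∃ C : NNReal, HolderOnWith C α.toNNReal f Ω) → ContinuousOn f Ω :=
    fun ⟨_, hC⟩ => hC.continuousOn (Real.toNNReal_pos.2 hα0)
  simp only [MemCalpha, Nat.floor_eq_zero.2 hα1, Nat.cast_zero, contDiffOn_zero, nonpos_iff_eq_zero,
    forall_eq, iteratedDerivWithin_zero, sub_zero]
  exact ⟨And.right, fun h => ⟨hcont h.2, h⟩⟩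

lemma memCalpha_IccExtend (hα0 : 0 < α) (hα1 : α < 1) (hab : a ≤ b) {g : Icc a b → ℝ}
    (hg : MemHolder α.toNNReal g) : MemCalpha α univ (IccExtend hab g) := by
  obtain ⟨C, hC⟩ := hg
  have hcont : Continuous g := hC.continuous (Real.toNNReal_pos.2 hα0)
  obtain ⟨B, hB⟩ := isBounded_iff_forall_norm_le.1 (isCompact_range hcont).isBounded
  refine (memCalpha_iff_of_lt_one hα0 hα1).2 ⟨⟨B, fun x _ => hB _ ⟨_, rfl⟩⟩, C, ?_⟩
  simpa [IccExtend] using (hC.comp (holderWith_one.2 (LipschitzWith.projIcc hab))).holderOnWith univ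

lemma isBigO_sub_of_memCalpha (hα : 0 < α) (hf : MemCalpha α Ω f) (hΩ : Ω ∈ nhds x) :
    (fun y => f y - f x) =O[nhds x] fun y => |y - x| ^ min α 1 := by
  rcases lt_or_ge α 1 with hα1 | hα1
  · obtain ⟨-, C, hC⟩ := (memCalpha_iff_of_lt_one hα hα1).1 hf
    rw [min_eq_left hα1.le]
    refine Asymptotics.IsBigO.of_bound C (mem_of_superset hΩ fun y hy => ?_)
    rw [mem_ofPred_eq, Real.norm_of_nonneg (Real.rpow_nonneg (abs_nonneg _) _)]
    simpa only [Real.dist_eq, Real.norm_eq_abs, Real.coe_toNNReal α hα.le]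
      using hC.dist_le hy (mem_of_mem_nhds hΩ)
  · have hd : DifferentiableAt ℝ f x :=
      (hf.1.differentiableOn (by exact_mod_cast (Nat.floor_pos.2 hα1).ne')).differentiableAt hΩ
    simpa only [min_eq_right hα1, Real.rpow_one, Real.norm_eq_abs] using hd.isBigO_sub.norm_right

end HolderSpace

lemma isLittleO_rpow_rpow_nhdsGT_zero_s2 {a b : ℝ} (hab : a < b) :
    (fun x : ℝ => x ^ b) =o[nhdsWithin 0 (Ioi 0)] fun x => x ^ a := by
  have hlim : Tendsto (fun x : ℝ => x ^ (b - a)) (nhdsWithin 0 (Ioi 0)) (nhds 0) := by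
    simpa [(sub_pos.2 hab).ne'] using
      (Real.continuousAt_rpow_const 0 (b - a) (Or.inr (sub_pos.2 hab).le)).tendsto.mono_left
        nhdsWithin_le_nhds
  refine (Asymptotics.isLittleO_iff_tendsto' ?_).2 (hlim.congr' ?_)
  · filter_upwards [self_mem_nhdsWithin] with x hx h
    exact absurd h (Real.rpow_pos_of_pos hx a).ne'
  · filter_upwards [self_mem_nhdsWithin] with x hx using Real.rpow_sub hx b a

lemma not_memCalpha_of_eqOn_signedPow {r α δ : ℝ} {Ω : Set ℝ} {u : ℝ → ℝ} (hr0 : 0 < r)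
    (hr1 : r < 1) (hα : r < α) (hδ : 0 < δ) (hΩ : Ω ∈ nhds 0)
    (hu : EqOn u (signedPow r) (Icc (-δ) δ)) : ¬ MemCalpha α Ω u := fun h => by
  have hO : (fun x : ℝ => x ^ r) =O[nhdsWithin 0 (Ioi 0)] fun x => x ^ min α 1 := by
    refine ((isBigO_sub_of_memCalpha (hr0.trans hα) h hΩ).mono nhdsWithin_le_nhds).congr' ?_ ?_
    · filter_upwards [Ioc_mem_nhdsGT hδ] with x hx
      rw [hu ⟨by linarith [hx.1], hx.2⟩, hu ⟨by linarith, hδ.le⟩, signedPow_zero_right, sub_zero,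
        signedPow_of_nonneg hr0.ne' hx.1.le]
    · filter_upwards [self_mem_nhdsWithin] with x hx
      rw [sub_zero, abs_of_pos hx]
  refine hO.not_isLittleO ?_ (isLittleO_rpow_rpow_nhdsGT_zero_s2 (lt_min hα hr1))
  refine Eventually.frequently ?_
  filter_upwards [self_mem_nhdsWithin] with x hx using (Real.rpow_pos_of_pos hx r).ne'

section Integrability

variable {α p s : ℝ} {u g : ℝ → ℝ}

lemma integrableOn_ball_div_abs_rpow {C : ℝ} (hg : AEStronglyMeasurable g)
    (hC : ∀ z, |g z| ≤ C * |z| ^ α) (hpα : p < 1 + α) :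
    IntegrableOn (fun z => g z / |z| ^ p) (Metric.ball 0 1) := by
  refine integrableOn_ball_of_norm_le_rpow (C := C) (α := p - α) (by simp) (by simp; linarith) ?_
    (hg.div₀ (Measurable.aestronglyMeasurable (by fun_prop)))
  filter_upwards [ae_restrict_of_ae (Measure.ae_ne volume 0)] with z hz
  have hzpos : 0 < |z| := abs_pos.2 hz
  rw [Real.norm_eq_abs, Real.norm_eq_abs, abs_div, abs_of_pos (Real.rpow_pos_of_pos hzpos p),
    neg_sub, Real.rpow_sub hzpos, ← mul_div_assoc]
  gcongr
  exact hC z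

lemma integrableOn_compl_ball_div_abs_rpow {B : ℝ} (hg : AEStronglyMeasurable g)
    (hB : ∀ z, |g z| ≤ B) (hp : 1 < p) :
    IntegrableOn (fun z => g z / |z| ^ p) (Metric.ball 0 1)ᶜ := by
  have hdom : Integrable fun z : ℝ => B * (2 ^ p * (1 + ‖z‖) ^ (-p)) :=
    ((integrable_one_add_norm (by simpa using hp)).const_mul _).const_mul _
  refine hdom.integrableOn.mono'
    (hg.div₀ (Measurable.aestronglyMeasurable (by fun_prop))).restrict ?_
  filter_upwards [ae_restrict_mem Metric.isOpen_ball.measurableSet.compl] with z hz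
  have hz1 : 1 ≤ |z| := by simpa using hz
  have hpow : (|z| ^ p)⁻¹ ≤ 2 ^ p * (1 + |z|) ^ (-p) := by
    rw [← Real.rpow_neg (abs_nonneg z), ← inv_inv ((2 : ℝ) ^ p), ← Real.rpow_neg zero_le_two,
      ← div_eq_inv_mul, ← Real.div_rpow (by positivity) zero_le_two]
    exact Real.rpow_le_rpow_of_nonpos (by positivity) (by linarith) (by linarith)
  rw [Real.norm_eq_abs, Real.norm_eq_abs, abs_div, div_eq_mul_inv,
    abs_of_nonneg (Real.rpow_nonneg (abs_nonneg z) p)]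
  exact mul_le_mul (hB z) hpow (by positivity) ((abs_nonneg _).trans (hB z))

lemma integrable_sub_div_abs_rpow (hα0 : 0 < α) (hα1 : α < 1) (hu : MemCalpha α univ u)
    (hp : 1 < p) (hpα : p < 1 + α) (x : ℝ) :
    Integrable fun y => (u x - u y) / |x - y| ^ p := by
  obtain ⟨⟨B, hB⟩, C, hC⟩ := (memCalpha_iff_of_lt_one hα0 hα1).1 hu
  have hcont : Continuous u := continuousOn_univ.1 hu.1.continuousOn
  have hmeas : AEStronglyMeasurable fun z => u x - u (x - z) :=
    Continuous.aestronglyMeasurable (by fun_prop)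
  have hholder : ∀ z, |u x - u (x - z)| ≤ C * |z| ^ α := fun z => by
    simpa [Real.dist_eq, hα0.le] using hC.dist_le (mem_univ x) (mem_univ (x - z))
  have hbound : ∀ z, |u x - u (x - z)| ≤ B + B := fun z =>
    (abs_sub _ _).trans (add_le_add (hB x trivial) (hB _ trivial))
  have hint := integrableOn_univ.1 (union_compl_self (Metric.ball (0 : ℝ) 1) ▸
    (integrableOn_ball_div_abs_rpow hmeas hholder hpα).union
      (integrableOn_compl_ball_div_abs_rpow hmeas hbound hp))
  simpa only [sub_sub_cancel] using hint.comp_sub_left x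

lemma hasFracLapAt_of_integrable_s2 {x : ℝ}
    (h : Integrable fun y => (u x - u y) / |x - y| ^ (1 + 2 * s)) :
    HasFracLapAt s u x (fracLapCoef s * ∫ y, (u x - u y) / |x - y| ^ (1 + 2 * s)) := by
  refine ⟨fun ε _ => h.integrableOn,
    (AECover.integral_tendsto_of_countably_generated ⟨?_, fun ε => ?_⟩ h).const_mul _⟩
  · filter_upwards [Measure.ae_ne volume x] with y hy
    exact nhdsWithin_le_nhds (Iio_mem_nhds (abs_pos.2 (sub_ne_zero.2 hy)))
  · exact measurableSet_lt measurable_const (by fun_prop)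

end Integrability

section FoldedKernel

variable {p r x y c : ℝ} {v : ℝ → ℝ}

lemma integral_eq_integral_Ioi_add_neg {E : Type*} [NormedAddCommGroup E] [NormedSpace ℝ E]
    {F : ℝ → E} (hF : Integrable F) : ∫ y, F y = ∫ y in Ioi 0, (F y + F (-y)) := by
  rw [integral_add hF.integrableOn hF.comp_neg.integrableOn, integral_comp_neg_Ioi, neg_zero,
    add_comm, intervalIntegral.integral_Iic_add_Ioi hF.integrableOn hF.integrableOn]

/-- The integrand of the singular integral of an odd function `v`, folded onto the half-line by
adding its values at `y` and `-y`. -/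
noncomputable def foldedKernel (p : ℝ) (v : ℝ → ℝ) (x y : ℝ) : ℝ :=
  (v x - v y) / |x - y| ^ p + (v x + v y) / |x + y| ^ p

lemma integral_sub_div_abs_rpow_eq_foldedKernel (hv : ∀ y, v (-y) = -v y)
    (hint : Integrable fun y => (v x - v y) / |x - y| ^ p) :
    ∫ y, (v x - v y) / |x - y| ^ p = ∫ y in Ioi 0, foldedKernel p v x y := by
  simpa only [foldedKernel, hv, sub_neg_eq_add] using integral_eq_integral_Ioi_add_neg hint

lemma foldedKernel_neg_left (hv : ∀ y, v (-y) = -v y) :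
    foldedKernel p v (-x) y = -foldedKernel p v x y := by
  have habs₁ : |-x - y| = |x + y| := by rw [← abs_neg, neg_sub, sub_neg_eq_add, add_comm]
  have habs₂ : |-x + y| = |x - y| := by rw [← abs_neg, neg_add, neg_neg, sub_eq_add_neg]
  simp only [foldedKernel, hv, habs₁, habs₂]
  ring

lemma foldedKernel_signedPow_mul (hr : r ≠ 0) (hc : 0 < c) :
    foldedKernel p (signedPow r) (c * x) (c * y) =
      c ^ (r - p) * foldedKernel p (signedPow r) x y := by
  simp only [foldedKernel, signedPow_mul hr hc.le, ← mul_sub, ← mul_add, abs_mul, abs_of_pos hc,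
    Real.mul_rpow hc.le (abs_nonneg _), mul_div_mul_comm, Real.rpow_sub hc]

lemma integral_foldedKernel_signedPow (hr : r ≠ 0) (hrp : r + 1 - p ≠ 0) (x : ℝ) :
    ∫ y in Ioi 0, foldedKernel p (signedPow r) x y =
      (∫ t in Ioi 0, foldedKernel p (signedPow r) 1 t) * signedPow (r + 1 - p) x := by
  have hpos : ∀ x > 0, ∫ y in Ioi 0, foldedKernel p (signedPow r) x y =
      (∫ t in Ioi 0, foldedKernel p (signedPow r) 1 t) * signedPow (r + 1 - p) x := fun x hx => by
    have hscale := integral_comp_mul_left_Ioi (foldedKernel p (signedPow r) x) 0 hx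
    have hhom : ∀ t, foldedKernel p (signedPow r) x (x * t) =
        x ^ (r - p) * foldedKernel p (signedPow r) 1 t := fun t => by
      simpa only [mul_one] using foldedKernel_signedPow_mul (x := 1) hr hx
    simp only [hhom, integral_const_mul, mul_zero, smul_eq_mul] at hscale
    rw [signedPow_of_nonneg hrp hx.le, add_sub_right_comm, Real.rpow_add_one hx.ne', mul_comm,
      mul_right_comm, hscale, mul_comm, mul_inv_cancel_left₀ hx.ne']
  rcases lt_trichotomy x 0 with hx | rfl | hx
  · have hneg := hpos (-x) (neg_pos.2 hx)
    simpa only [foldedKernel_neg_left fun _ => signedPow_neg, integral_neg, signedPow_neg, mul_neg,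
      neg_inj] using hneg
  · simp [foldedKernel, signedPow_zero_right, neg_div]
  · exact hpos x hx

end FoldedKernel

section FarField

variable {p ρ x x' y a b m : ℝ} {w : ℝ → ℝ}

lemma abs_rpow_neg_sub_rpow_neg_le_s2 (hp : 0 ≤ p) (hm : 0 < m) (ha : m ≤ a) (hb : m ≤ b) :
    |a ^ (-p) - b ^ (-p)| ≤ p * m ^ (-p - 1) * |a - b| := by
  refine (convex_Ici m).norm_image_sub_le_of_norm_hasDerivWithin_le
    (f' := fun z => -p * z ^ (-p - 1))
    (fun z hz => (Real.hasDerivAt_rpow_const (Or.inl (hm.trans_le hz).ne')).hasDerivWithinAt)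
    (fun z hz => ?_) hb ha
  have hz0 : 0 < z := hm.trans_le hz
  rw [norm_mul, norm_neg, Real.norm_of_nonneg hp,
    Real.norm_of_nonneg (Real.rpow_nonneg hz0.le _)]
  exact mul_le_mul_of_nonneg_left (Real.rpow_le_rpow_of_nonpos hm hz (by linarith)) hp

/-- The difference of the kernels centred at `x` and `-x`, which pairs with the values of an odd
function on the positive half-line. -/
noncomputable def farKernel (p x y : ℝ) : ℝ := |x - y| ^ (-p) - |x + y| ^ (-p)

lemma abs_farKernel_sub_le (hp : 0 ≤ p) (hρ : ρ < 1) (hx : |x| ≤ ρ) (hx' : |x'| ≤ ρ)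
    (hy : 1 < y) :
    |farKernel p x y - farKernel p x' y| ≤
      2 * p * (1 - ρ) ^ (-p - 1) * |x - x'| * y ^ (-p - 1) := by
  have hlow : ∀ z, |z| ≤ ρ → (1 - ρ) * y ≤ |z - y| ∧ (1 - ρ) * y ≤ |z + y| := fun z hz => by
    have hρy : ρ ≤ ρ * y := le_mul_of_one_le_right ((abs_nonneg z).trans hz) hy.le
    obtain ⟨hz₁, hz₂⟩ := abs_le.1 hz
    exact ⟨le_abs.2 (Or.inr (by linarith)), le_abs.2 (Or.inl (by linarith))⟩
  have hm : 0 < (1 - ρ) * y := mul_pos (sub_pos.2 hρ) (one_pos.trans hy)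
  have hsub := abs_rpow_neg_sub_rpow_neg_le_s2 hp hm (hlow x hx).1 (hlow x' hx').1
  have hadd := abs_rpow_neg_sub_rpow_neg_le_s2 hp hm (hlow x hx).2 (hlow x' hx').2
  have hsub' : |(|x - y| - |x' - y|)| ≤ |x - x'| := by
    simpa using abs_abs_sub_abs_le_abs_sub (x - y) (x' - y)
  have hadd' : |(|x + y| - |x' + y|)| ≤ |x - x'| := by
    simpa using abs_abs_sub_abs_le_abs_sub (x + y) (x' + y)
  calc |farKernel p x y - farKernel p x' y|
      = |(|x - y| ^ (-p) - |x' - y| ^ (-p)) - (|x + y| ^ (-p) - |x' + y| ^ (-p))| := by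
        simp only [farKernel, sub_sub_sub_comm]
    _ ≤ p * ((1 - ρ) * y) ^ (-p - 1) * |x - x'| + p * ((1 - ρ) * y) ^ (-p - 1) * |x - x'| :=
        (abs_sub _ _).trans (add_le_add (hsub.trans (by gcongr)) (hadd.trans (by gcongr)))
    _ = 2 * p * (1 - ρ) ^ (-p - 1) * |x - x'| * y ^ (-p - 1) := by
        rw [Real.mul_rpow (sub_pos.2 hρ).le (one_pos.trans hy).le]
        ring

/-- The potential of a density `w` on `(1, ∞)`, reflected oddly to `(-∞, -1)`. -/
noncomputable def farField (p : ℝ) (w : ℝ → ℝ) (x : ℝ) : ℝ := ∫ y in Ioi 1, w y * farKernel p x y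

lemma integrableOn_mul_farKernel (hp : 0 ≤ p) (hx : |x| < 1)
    (hw : IntegrableOn (fun y => w y * y ^ (-p - 1)) (Ioi 1)) :
    IntegrableOn (fun y => w y * farKernel p x y) (Ioi 1) := by
  have hmeas : Measurable fun y => farKernel p x y / y ^ (-p - 1) := by
    unfold farKernel; fun_prop
  have hbdd : ∀ᵐ y ∂volume.restrict (Ioi 1),
      ‖farKernel p x y / y ^ (-p - 1)‖ ≤ 2 * p * (1 - |x|) ^ (-p - 1) * |x| := by
    filter_upwards [ae_restrict_mem measurableSet_Ioi] with y (hy : 1 < y)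
    have hypow : 0 < y ^ (-p - 1) := Real.rpow_pos_of_pos (one_pos.trans hy) _
    rw [norm_div, Real.norm_of_nonneg hypow.le, div_le_iff₀ hypow]
    simpa [farKernel] using abs_farKernel_sub_le (x' := 0) hp hx le_rfl (by simp) hy
  refine (hw.mul_bdd hmeas.aestronglyMeasurable hbdd).congr ?_
  filter_upwards [ae_restrict_mem measurableSet_Ioi] with y (hy : 1 < y)
  rw [mul_assoc, mul_div_cancel₀ _ (Real.rpow_pos_of_pos (one_pos.trans hy) _).ne']

lemma exists_lipschitzOnWith_farField (hp : 0 ≤ p) (hρ : ρ < 1)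
    (hw : IntegrableOn (fun y => w y * y ^ (-p - 1)) (Ioi 1)) :
    ∃ K, LipschitzOnWith K (farField p w) (Icc (-ρ) ρ) := by
  set c := 2 * p * (1 - ρ) ^ (-p - 1)
  refine ⟨_, LipschitzOnWith.of_dist_le_mul (K := (c * ∫ y in Ioi 1, |w y * y ^ (-p - 1)|).toNNReal)
    fun x hx x' hx' => ?_⟩
  have hx : |x| ≤ ρ := abs_le.2 hx
  have hx' : |x'| ≤ ρ := abs_le.2 hx'
  have hbound : ∀ᵐ y ∂volume.restrict (Ioi 1), ‖w y * farKernel p x y - w y * farKernel p x' y‖ ≤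
      c * |x - x'| * |w y * y ^ (-p - 1)| := by
    filter_upwards [ae_restrict_mem measurableSet_Ioi] with y (hy : 1 < y)
    have hker := abs_farKernel_sub_le hp hρ hx hx' hy
    rw [← mul_sub, Real.norm_eq_abs, abs_mul, abs_mul,
      abs_of_nonneg (Real.rpow_nonneg (one_pos.trans hy).le _), mul_left_comm]
    gcongr
  rw [Real.dist_eq, Real.dist_eq, farField, farField,
    ← integral_sub (integrableOn_mul_farKernel hp (hx.trans_lt hρ) hw)
      (integrableOn_mul_farKernel hp (hx'.trans_lt hρ) hw)]
  calc |∫ y in Ioi 1, (w y * farKernel p x y - w y * farKernel p x' y)|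
      ≤ ∫ y in Ioi 1, c * |x - x'| * |w y * y ^ (-p - 1)| :=
        norm_integral_le_of_norm_le (hw.norm.const_mul _) hbound
    _ = c * (∫ y in Ioi 1, |w y * y ^ (-p - 1)|) * |x - x'| := by
        rw [integral_const_mul, mul_right_comm]
    _ ≤ _ := by gcongr; exact Real.le_coe_toNNReal _

end FarField

section TruncPow

variable {p r x y : ℝ}

/-- The signed power on `[-1, 1]`, extended by its boundary values; this is the solution `u`. -/
noncomputable def truncPow (r : ℝ) : ℝ → ℝ :=
  IccExtend (neg_le_self zero_le_one) fun x : Icc (-1 : ℝ) 1 => signedPow r x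

lemma truncPow_of_mem_Icc (hx : x ∈ Icc (-1) 1) : truncPow r x = signedPow r x :=
  IccExtend_of_mem _ _ hx

lemma truncPow_of_one_le (hr : r ≠ 0) (hx : 1 ≤ x) : truncPow r x = 1 := by
  rw [truncPow, IccExtend_of_right_le _ _ hx, signedPow_of_nonneg hr zero_le_one, Real.one_rpow]

lemma truncPow_of_le_neg_one (hr : r ≠ 0) (hx : x ≤ -1) : truncPow r x = -1 := by
  rw [truncPow, IccExtend_of_le_left _ _ hx, signedPow_neg, signedPow_of_nonneg hr zero_le_one,
    Real.one_rpow]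

lemma truncPow_neg (hr : r ≠ 0) (x : ℝ) : truncPow r (-x) = -truncPow r x := by
  rcases le_total x (-1) with hx | hx
  · rw [truncPow_of_le_neg_one hr hx, truncPow_of_one_le hr (by linarith), neg_neg]
  rcases le_total 1 x with hx' | hx'
  · rw [truncPow_of_one_le hr hx', truncPow_of_le_neg_one hr (by linarith)]
  · rw [truncPow_of_mem_Icc ⟨hx, hx'⟩, truncPow_of_mem_Icc ⟨by linarith, by linarith⟩,
      signedPow_neg]

lemma eq_truncPow {u : ℝ → ℝ} (hr : r ≠ 0) (hbelow : ∀ x < -1, u x = -1)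
    (hneg : ∀ x, -1 ≤ x → x < 0 → u x = -|x| ^ r) (hpos : ∀ x, 0 ≤ x → x ≤ 1 → u x = x ^ r)
    (habove : ∀ x, 1 < x → u x = 1) : u = truncPow r := by
  funext x
  rcases lt_or_ge x (-1) with hx | hx
  · rw [hbelow x hx, truncPow_of_le_neg_one hr hx.le]
  rcases lt_or_ge 1 x with hx' | hx'
  · rw [habove x hx', truncPow_of_one_le hr hx'.le]
  rw [truncPow_of_mem_Icc ⟨hx, hx'⟩]
  rcases lt_or_ge x 0 with hx0 | hx0
  · rw [hneg x hx hx0, signedPow_of_nonpos hr hx0.le]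
  · rw [hpos x hx0 hx', signedPow_of_nonneg hr hx0]

lemma memCalpha_truncPow (hr0 : 0 < r) (hr1 : r < 1) : MemCalpha r univ (truncPow r) := by
  obtain ⟨C, hC⟩ := memHolder_signedPow hr0.le hr1.le
  exact memCalpha_IccExtend hr0 hr1 _ ⟨C, (hC.holderOnWith _).holderWith⟩

lemma foldedKernel_truncPow (hr : r ≠ 0) (hx : |x| < 1) (hy : 0 < y) :
    foldedKernel p (truncPow r) x y = foldedKernel p (signedPow r) x y +
      (Ioi 1).indicator (fun y => (y ^ r - 1) * farKernel p x y) y := by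
  have hxmem : x ∈ Icc (-1) 1 := abs_le.1 hx.le
  rcases le_or_gt y 1 with hy1 | hy1
  · simp [foldedKernel, truncPow_of_mem_Icc hxmem, truncPow_of_mem_Icc ⟨by linarith, hy1⟩,
      indicator_of_notMem, hy1]
  · rw [indicator_of_mem (mem_Ioi.2 hy1), foldedKernel, foldedKernel, truncPow_of_mem_Icc hxmem,
      truncPow_of_one_le hr hy1.le, signedPow_of_nonneg hr hy.le, farKernel,
      Real.rpow_neg (abs_nonneg _), Real.rpow_neg (abs_nonneg _)]
    ring

lemma integrableOn_rpow_sub_one_mul_rpow (hp : 0 < p) (hrp : r < p) :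
    IntegrableOn (fun y : ℝ => (y ^ r - 1) * y ^ (-p - 1)) (Ioi 1) := by
  refine ((integrableOn_Ioi_rpow_of_lt (a := r + (-p - 1)) (by linarith) one_pos).sub
    (integrableOn_Ioi_rpow_of_lt (a := -p - 1) (by linarith) one_pos)).congr_fun ?_
    measurableSet_Ioi
  intro y hy
  simp only [Pi.sub_apply, Real.rpow_add (one_pos.trans hy)]
  ring

lemma integral_truncPow_sub_div_abs_rpow (hr0 : 0 < r) (hr1 : r < 1) (hp : 1 < p)
    (hpr : p < 1 + r) (hx : |x| < 1) :
    ∫ y, (truncPow r x - truncPow r y) / |x - y| ^ p =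
      (∫ t in Ioi 0, foldedKernel p (signedPow r) 1 t) * signedPow (r + 1 - p) x +
        farField p (fun y => y ^ r - 1) x := by
  have hint := integrable_sub_div_abs_rpow hr0 hr1 (memCalpha_truncPow hr0 hr1) hp hpr x
  have hfold : IntegrableOn (foldedKernel p (truncPow r) x) (Ioi 0) := by
    have hsum := (hint.add hint.comp_neg).integrableOn (s := Ioi 0)
    simp only [truncPow_neg hr0.ne', sub_neg_eq_add] at hsum
    exact hsum
  have hfar : IntegrableOn ((Ioi 1).indicator fun y => (y ^ r - 1) * farKernel p x y) (Ioi 0) :=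
    ((integrable_indicator_iff measurableSet_Ioi).2 (integrableOn_mul_farKernel (by linarith) hx
      (integrableOn_rpow_sub_one_mul_rpow (by linarith) (by linarith)))).integrableOn
  have hsplit : ∫ y in Ioi 0, foldedKernel p (signedPow r) x y =
      (∫ y in Ioi 0, foldedKernel p (truncPow r) x y) - farField p (fun y => y ^ r - 1) x := by
    have hfarField : farField p (fun y => y ^ r - 1) x =
        ∫ y in Ioi 0, (Ioi 1).indicator (fun y => (y ^ r - 1) * farKernel p x y) y := by
      rw [setIntegral_indicator measurableSet_Ioi, Ioi_inter_Ioi, sup_of_le_right zero_le_one,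
        farField]
    rw [hfarField, ← integral_sub hfold hfar]
    exact setIntegral_congr_fun measurableSet_Ioi fun y hy =>
      eq_sub_of_add_eq (foldedKernel_truncPow hr0.ne' hx hy).symm
  rw [integral_sub_div_abs_rpow_eq_foldedKernel (truncPow_neg hr0.ne') hint,
    ← integral_foldedKernel_signedPow hr0.ne' (by linarith), hsplit, sub_add_cancel]

end TruncPow

lemma memHolder_comp_signedPow {a ρ : ℝ} {β K : NNReal} {h : ℝ → ℝ} (ha : 1 ≤ a) (hβ : β ≤ 1)
    (hh : LipschitzOnWith K h (Icc (-ρ ^ a) (ρ ^ a))) :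
    MemHolder β fun t : Icc (-ρ) ρ => h (signedPow a t) := by
  obtain ⟨L, hL⟩ := ((locallyLipschitz_signedPow ha).locallyLipschitzOn
    (s := Icc (-ρ) ρ)).exists_lipschitzOnWith_of_compact isCompact_Icc
  have hcomp := hh.comp hL (mapsTo_signedPow_Icc (one_pos.trans_le ha))
  obtain ⟨C, hC⟩ := HolderOnWith.exists_holderOnWith_of_le ⟨_, holderOnWith_one.2 hcomp⟩ hβ
    isCompact_Icc.isBounded
  exact ⟨C, hC.holderWith⟩

lemma exists_memCalpha_hasFracLapAt_truncPow {s r ρ : ℝ} (hs : 0 < s) (hsr : 2 * s < r)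
    (hr : r < 1) (hρ0 : 0 ≤ ρ) (hρ1 : ρ < 1) :
    ∃ f, MemCalpha (1 - 2 * s / r) univ f ∧
      ∀ x ∈ Icc (-ρ) ρ, HasFracLapAt s (truncPow r) x (f (truncPow r x)) := by
  have hr0 : 0 < r := by linarith
  set β := 1 - 2 * s / r with hβ
  have hβ0 : 0 < β := sub_pos.2 ((div_lt_one hr0).2 hsr)
  have hβ1 : β < 1 := sub_lt_self 1 (by positivity)
  have hexp : r + 1 - (1 + 2 * s) = r * β := by rw [hβ]; field_simp; ring
  set A := ∫ t in Ioi 0, foldedKernel (1 + 2 * s) (signedPow r) 1 t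
  set R := farField (1 + 2 * s) fun y => y ^ r - 1
  obtain ⟨K, hK⟩ : ∃ K, LipschitzOnWith K R (Icc (-ρ) ρ) :=
    exists_lipschitzOnWith_farField (by linarith) hρ1
      (integrableOn_rpow_sub_one_mul_rpow (by linarith) (by linarith))
  have hpow : MemHolder β.toNNReal fun t : Icc (-ρ ^ r) (ρ ^ r) => signedPow β t := by
    obtain ⟨C, hC⟩ := memHolder_signedPow hβ0.le hβ1.le
    exact ⟨C, (hC.holderOnWith _).holderWith⟩
  have hR : MemHolder β.toNNReal fun t : Icc (-ρ ^ r) (ρ ^ r) => R (signedPow r⁻¹ t) := by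
    refine memHolder_comp_signedPow (K := K) ((one_le_inv₀ hr0).2 hr.le)
      (Real.toNNReal_le_one.2 hβ1.le) ?_
    rwa [Real.rpow_rpow_inv hρ0 hr0.ne']
  refine ⟨IccExtend (neg_le_self (Real.rpow_nonneg hρ0 r)) fun t => fracLapCoef s *
    (A * signedPow β t + R (signedPow r⁻¹ t)),
    memCalpha_IccExtend hβ0 hβ1 _ (((hpow.smul (c := A)).add hR).smul (c := fracLapCoef s)),
    fun x hx => ?_⟩
  have hx1 : |x| < 1 := (abs_le.2 hx).trans_lt hρ1
  rw [truncPow_of_mem_Icc (abs_le.1 hx1.le), IccExtend_of_mem _ _ (mapsTo_signedPow_Icc hr0 hx),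
    signedPow_signedPow hβ0.ne' hr0.ne', signedPow_inv_signedPow hr0.ne', ← hexp,
    ← integral_truncPow_sub_div_abs_rpow hr0 hr (by linarith) (by linarith) hx1]
  exact hasFracLapAt_of_integrable_s2 (integrable_sub_div_abs_rpow hr0 hr (memCalpha_truncPow hr0 hr)
    (by linarith) (by linarith) x)

theorem stmt2 (s β r : ℝ) (hs0 : 0 < s) (hs1 : s < 1) (hβ0 : 0 < β) (hβ1 : β < 1)
    (h2s : 2 * s < 1 - β) (hr : r = 2 * s / (1 - β))
    (u : ℝ → ℝ)
    (hu1 : ∀ x : ℝ, x < -1 → u x = -1)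
    (hu2 : ∀ x : ℝ, -1 ≤ x → x < 0 → u x = -(|x| ^ r))
    (hu3 : ∀ x : ℝ, 0 ≤ x → x ≤ 1 → u x = x ^ r)
    (hu4 : ∀ x : ℝ, 1 < x → u x = 1) :
    (∃ f : ℝ → ℝ, MemCalpha β Set.univ f ∧
      ∀ x ∈ Set.Icc (-(1 / 2) : ℝ) (1 / 2), HasFracLapAt s u x (f (u x))) ∧
    MemCalpha (2 * s / (1 - β)) Set.univ u ∧
    (∀ ε ρ : ℝ, 0 < ε → 0 < ρ →
      ¬ MemCalpha (2 * s / (1 - β) + ε) (Set.Icc (-ρ) ρ) u) := by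
  have h1β : 0 < 1 - β := sub_pos.2 hβ1
  have hr0 : 0 < r := by rw [hr]; positivity
  have hr1 : r < 1 := by rwa [hr, div_lt_one h1β]
  have hsβ : 2 * s = r * (1 - β) := by rw [hr, div_mul_cancel₀ _ h1β.ne']
  have hsr : 2 * s < r := hsβ ▸ mul_lt_of_lt_one_right hr0 (sub_lt_self 1 hβ0)
  have hβr : β = 1 - 2 * s / r := by rw [hsβ, mul_div_cancel_left₀ _ hr0.ne', sub_sub_cancel]
  obtain rfl : u = truncPow r := eq_truncPow hr0.ne' hu1 hu2 hu3 hu4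
  rw [← hr]
  refine ⟨?_, memCalpha_truncPow hr0 hr1, fun ε ρ hε hρ => ?_⟩
  · rw [hβr]
    exact exists_memCalpha_hasFracLapAt_truncPow hs0 hsr hr1 (by norm_num) (by norm_num)
  · exact not_memCalpha_of_eqOn_signedPow hr0 hr1 (lt_add_of_pos_right r hε) one_pos
      (Icc_mem_nhds (neg_lt_zero.2 hρ) hρ) fun x => truncPow_of_mem_Icc
end
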